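/- arXiv:1104.3745 — 5 statements merged into one kernel-verified Lean document; each statement's English description precedes it below -/
import Mathlib

section
/- Let n ≥ 2 and let Ω = ℝⁿ \ {0} be the punctured Euclidean space, with quasihyperbolic metric k_Ω. Then for all x, y ∈ Ω, k_Ω(x,y) = √(α² + log²(|x|/|y|)), where α ∈ [0, π] is the angle between the line segments [x,0] and [0,y] at the origin (i.e., the angle between the vectors x and y). -/
open Set Metric MeasureTheory

noncomputable section

variable {E : Type*} [NormedAddCommGroup E] [NormedSpace ℝ E]

/-- The quasihyperbolic length of a path `γ` (parametrized on `[0,1]`) in the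
domain `Ω`: the integral of `‖γ'(t)‖ / d(γ(t), ∂Ω)`. -/
def qhLength (Ω : Set E) (γ : ℝ → E) : ℝ :=
  ∫ t in (0:ℝ)..1, ‖deriv γ t‖ / infDist (γ t) (frontier Ω)

/-- A rectifiable curve in `Ω` joining `x` and `y`, formalized as a map on `[0,1]`
which is Lipschitz on `[0,1]` (every rectifiable curve admits such a
parametrization), takes values in `Ω`, and joins `x` to `y`. -/
def IsRectPath (Ω : Set E) (x y : E) (γ : ℝ → E) : Prop :=
  (∃ K : NNReal, LipschitzOnWith K γ (Icc 0 1)) ∧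
    MapsTo γ (Icc 0 1) Ω ∧ γ 0 = x ∧ γ 1 = y

/-- The quasihyperbolic metric on `Ω`. -/
def qhDist (Ω : Set E) (x y : E) : ℝ :=
  sInf (qhLength Ω '' {γ | IsRectPath Ω x y γ})

/-- The quasihyperbolic ball. -/
def qhBall (Ω : Set E) (x : E) (r : ℝ) : Set E :=
  {y ∈ Ω | qhDist Ω x y < r}

/-- The distance ratio metric (`j`-metric) on `Ω`. -/
def jDist (Ω : Set E) (x y : E) : ℝ :=
  Real.log (1 + dist x y / min (infDist x (frontier Ω)) (infDist y (frontier Ω)))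

/-- The `j`-metric ball. -/
def jBall (Ω : Set E) (x : E) (r : ℝ) : Set E :=
  {y ∈ Ω | jDist Ω x y < r}

/-- `G` is strictly starlike with respect to `x`: it is starlike with respect to `x`
and every half-line emanating from `x` meets `∂G` at exactly one point. -/
def StrictlyStarlike (G : Set E) (x : E) : Prop :=
  StarConvex ℝ x G ∧
    ∀ v : E, v ≠ 0 → ∃! p : E, p ∈ frontier G ∧ ∃ t : ℝ, 0 < t ∧ p = x + t • v

/-- `G` is strictly convex: it is strictly starlike with respect to each of its points. -/
def StrictlyConvexSet (G : Set E) : Prop :=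
  ∀ x ∈ G, StrictlyStarlike G x

/-- A half-line: `{t • v + z : t > 0}` or `{t • v + z : t ≥ 0}` with `v ≠ 0`. -/
def IsHalfline (L : Set E) : Prop :=
  ∃ z v : E, v ≠ 0 ∧
    (L = {p | ∃ t : ℝ, 0 < t ∧ p = t • v + z} ∨
      L = {p | ∃ t : ℝ, 0 ≤ t ∧ p = t • v + z})

/-- `G` is close-to-convex: its complement can be covered with pairwise
non-intersecting half-lines. -/
def CloseToConvex (G : Set E) : Prop :=
  ∃ 𝒮 : Set (Set E), (∀ L ∈ 𝒮, IsHalfline L) ∧ 𝒮.PairwiseDisjoint id ∧ Gᶜ = ⋃₀ 𝒮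

end

section QHAux

variable {V : Type*} [NormedAddCommGroup V] [InnerProductSpace ℝ V]

open InnerProductGeometry Filter Topology

/-- The explicit distance. -/
noncomputable def qhD (u v : V) : ℝ := Real.sqrt (angle u v ^ 2 + Real.log (‖u‖ / ‖v‖) ^ 2)

lemma qhD_nonneg (u v : V) : 0 ≤ qhD u v := Real.sqrt_nonneg _

lemma qhD_sq (u v : V) : qhD u v ^ 2 = angle u v ^ 2 + Real.log (‖u‖ / ‖v‖) ^ 2 :=
  Real.sq_sqrt (by positivity)

lemma qhD_comm (u v : V) : qhD u v = qhD v u := by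
  unfold qhD
  rw [angle_comm, ← inv_div ‖v‖ ‖u‖, Real.log_inv, neg_sq]

lemma qhD_triangle (u v w : V) (hu : u ≠ 0) (hv : v ≠ 0) (hw : w ≠ 0) :
    qhD u w ≤ qhD u v + qhD v w := by
  have hu' := norm_ne_zero_iff.2 hu
  have hv' := norm_ne_zero_iff.2 hv
  have hw' := norm_ne_zero_iff.2 hw
  have h1 := angle_le_angle_add_angle u v w
  have h2 : Real.log (‖u‖ / ‖w‖) = Real.log (‖u‖ / ‖v‖) + Real.log (‖v‖ / ‖w‖) := by
    rw [Real.log_div hu' hw', Real.log_div hu' hv', Real.log_div hv' hw']; ring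
  have e1 := qhD_sq u v
  have e2 := qhD_sq v w
  have n1 := qhD_nonneg u v
  have n2 := qhD_nonneg v w
  have n3 := angle_nonneg u v
  have n4 := angle_nonneg v w
  have n5 := angle_nonneg u w
  apply Real.sqrt_le_iff.2 ⟨by positivity, ?_⟩
  rw [h2]
  set a := angle u v
  set b := angle v w
  set s := Real.log (‖u‖ / ‖v‖)
  set r := Real.log (‖v‖ / ‖w‖)
  have h3 : a * b + s * r ≤ qhD u v * qhD v w := by
    apply le_of_sq_le_sq ?_ (by positivity)
    rw [mul_pow, e1, e2]
    nlinarith [sq_nonneg (a * r - b * s)]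
  have h4 : angle u w ^ 2 ≤ (a + b) ^ 2 := by gcongr
  nlinarith

lemma qhD_abs_sub (x u v : V) (hx : x ≠ 0) (hu : u ≠ 0) (hv : v ≠ 0) :
    |qhD x u - qhD x v| ≤ qhD u v := by
  rw [abs_le]
  have h1 := qhD_triangle x u v hx hu hv
  have h2 := qhD_triangle x v u hx hv hu
  rw [qhD_comm v u] at h2
  constructor <;> linarith

lemma sq_le_cosh (s : ℝ) : s ^ 2 ≤ 2 * Real.cosh s - 2 := by
  have h : Real.cosh s = 2 * Real.sinh (s / 2) ^ 2 + 1 := by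
    have := Real.cosh_two_mul (s / 2)
    rw [Real.cosh_sq] at this
    rw [show 2 * (s / 2) = s by ring] at this
    linarith
  have h2 : (s / 2) ^ 2 ≤ Real.sinh (s / 2) ^ 2 := by
    rw [sq_le_sq, Real.abs_sinh]
    exact Real.self_le_sinh_iff.2 (abs_nonneg _)
  nlinarith

lemma qh_key (u v : V) (hu : u ≠ 0) (hv : v ≠ 0) :
    ‖u - v‖ ^ 2 / (‖u‖ * ‖v‖) =
      (2 * Real.cosh (Real.log (‖u‖ / ‖v‖)) - 2) + 2 * (1 - Real.cos (angle u v)) := by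
  have hu' := norm_pos_iff.2 hu
  have hv' := norm_pos_iff.2 hv
  rw [Real.cosh_log (by positivity), cos_angle, norm_sub_sq_real]
  field_simp
  ring

lemma qh_bound1 (u v : V) (hu : u ≠ 0) (hv : v ≠ 0) :
    qhD u v ^ 2 ≤ Real.pi ^ 2 / 4 * (‖u - v‖ ^ 2 / (‖u‖ * ‖v‖)) := by
  rw [qh_key u v hu hv, qhD_sq]
  have h1 := sq_le_cosh (Real.log (‖u‖ / ‖v‖))
  have h2 := Real.cos_le_one_sub_mul_cos_sq (x := angle u v)
    (by rw [abs_of_nonneg (angle_nonneg _ _)]; exact angle_le_pi _ _)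
  have hp := Real.pi_gt_three
  have h3 : angle u v ^ 2 ≤ Real.pi ^ 2 / 4 * (2 * (1 - Real.cos (angle u v))) := by
    have : angle u v ^ 2 = Real.pi ^ 2 / 4 * (2 * (2 / Real.pi ^ 2 * angle u v ^ 2)) := by
      field_simp; norm_num
    rw [this]
    gcongr
    linarith
  have h4 : 1 ≤ Real.pi ^ 2 / 4 := by nlinarith
  nlinarith [sq_nonneg (Real.log (‖u‖ / ‖v‖))]

lemma qh_bound2 (u v : V) (hu : u ≠ 0) (hv : v ≠ 0) (h : qhD u v ≤ 1) :
    qhD u v ^ 2 * (1 - qhD u v ^ 2) ≤ ‖u - v‖ ^ 2 / (‖u‖ * ‖v‖) := by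
  have hn := qhD_nonneg u v
  have e := qhD_sq u v
  have h0 := angle_nonneg u v
  have hle : qhD u v ^ 2 ≤ 1 := by nlinarith
  have ha : |angle u v| ≤ 1 := by
    rw [← sq_le_one_iff_abs_le_one]
    nlinarith [sq_nonneg (Real.log (‖u‖ / ‖v‖))]
  have h2 := (abs_le.1 (Real.cos_bound ha)).2
  have h1 := sq_le_cosh (Real.log (‖u‖ / ‖v‖))
  rw [qh_key u v hu hv, e]
  rw [abs_of_nonneg h0] at h2
  have : angle u v ^ 4 = (angle u v ^ 2) ^ 2 := by ring
  rw [this] at h2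
  generalize Real.log (‖u‖ / ‖v‖) = s at *
  nlinarith [sq_nonneg s, sq_nonneg (angle u v ^ 2), mul_nonneg (sq_nonneg s) (sq_nonneg (angle u v)),
    sq_nonneg (s^2)]

lemma qh_deriv_bound (x : V) (hx : x ≠ 0) (γ : ℝ → V) (t : ℝ) (h0 : ∀ᶠ s in 𝓝 t, γ s ≠ 0)
    (hγ : DifferentiableAt ℝ γ t) (hF : DifferentiableAt ℝ (fun s => qhD x (γ s)) t) :
    deriv (fun s => qhD x (γ s)) t ≤ ‖deriv γ t‖ / ‖γ t‖ := by
  have ht : γ t ≠ 0 := h0.self_of_nhds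
  have ht' := norm_pos_iff.2 ht
  have hc : Tendsto γ (𝓝[≠] t) (𝓝 (γ t)) := hγ.continuousAt.tendsto.mono_left nhdsWithin_le_nhds
  have h0' : ∀ᶠ s in 𝓝[≠] t, γ s ≠ 0 := h0.filter_mono nhdsWithin_le_nhds
  have hb : Tendsto (fun s => Real.pi ^ 2 / 4 * (‖γ t - γ s‖ ^ 2 / (‖γ t‖ * ‖γ s‖))) (𝓝[≠] t)
      (𝓝 0) := by
    have : Tendsto (fun s => Real.pi ^ 2 / 4 * (‖γ t - γ s‖ ^ 2 / (‖γ t‖ * ‖γ s‖))) (𝓝[≠] t)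
      (𝓝 (Real.pi ^ 2 / 4 * (‖γ t - γ t‖ ^ 2 / (‖γ t‖ * ‖γ t‖)))) :=
      ((((tendsto_const_nhds.sub hc).norm.pow 2).div (tendsto_const_nhds.mul hc.norm)
        (by positivity)).const_mul _)
    simpa using this
  have hD : Tendsto (fun s => qhD (γ t) (γ s) ^ 2) (𝓝[≠] t) (𝓝 0) := by
    refine tendsto_of_tendsto_of_tendsto_of_le_of_le' tendsto_const_nhds hb ?_ ?_
    · exact Eventually.of_forall fun s => sq_nonneg _
    · filter_upwards [h0'] with s hs using qh_bound1 _ _ ht hs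
  have hs1 := hasDerivAt_iff_tendsto_slope.1 hF.hasDerivAt
  have hs2 := hasDerivAt_iff_tendsto_slope.1 hγ.hasDerivAt
  have hL : Tendsto (fun s => slope (fun s => qhD x (γ s)) t s ^ 2 * (1 - qhD (γ t) (γ s) ^ 2))
      (𝓝[≠] t) (𝓝 (deriv (fun s => qhD x (γ s)) t ^ 2 * (1 - 0))) :=
    (hs1.pow 2).mul (tendsto_const_nhds.sub hD)
  have hR : Tendsto (fun s => ‖slope γ t s‖ ^ 2 / (‖γ t‖ * ‖γ s‖))
      (𝓝[≠] t) (𝓝 (‖deriv γ t‖ ^ 2 / (‖γ t‖ * ‖γ t‖))) :=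
    (hs2.norm.pow 2).div (tendsto_const_nhds.mul hc.norm) (by positivity)
  have key := le_of_tendsto_of_tendsto hL hR (by
    filter_upwards [h0', hD.eventually_lt_const zero_lt_one, self_mem_nhdsWithin] with s hs hs1 hst
    have hst' : s - t ≠ 0 := sub_ne_zero.2 hst
    have hp : 0 < (s - t) ^ 2 := by positivity
    have hle : qhD (γ t) (γ s) ≤ 1 := by
      have := qhD_nonneg (γ t) (γ s)
      nlinarith
    have b2 := qh_bound2 _ _ ht hs hle
    have b3 := qhD_abs_sub x (γ s) (γ t) hx hs ht
    rw [qhD_comm (γ s)] at b3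
    have b4 : (qhD x (γ s) - qhD x (γ t)) ^ 2 ≤ qhD (γ t) (γ s) ^ 2 := by
      rw [← sq_abs]; gcongr
    have b5 : (qhD x (γ s) - qhD x (γ t)) ^ 2 * (1 - qhD (γ t) (γ s) ^ 2) ≤
        ‖γ s - γ t‖ ^ 2 / (‖γ t‖ * ‖γ s‖) := by
      rw [norm_sub_rev (γ s)]
      refine le_trans ?_ b2
      gcongr
    rw [slope_def_field, slope_def_module, norm_smul, mul_pow, norm_inv, inv_pow, Real.norm_eq_abs,
      sq_abs, div_pow]
    calc _ = ((s - t) ^ 2)⁻¹ * ((qhD x (γ s) - qhD x (γ t)) ^ 2 * (1 - qhD (γ t) (γ s) ^ 2)) := by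
          ring
      _ ≤ ((s - t) ^ 2)⁻¹ * (‖γ s - γ t‖ ^ 2 / (‖γ t‖ * ‖γ s‖)) := by gcongr
      _ = _ := by ring)
  apply le_of_sq_le_sq ?_ (by positivity)
  rw [div_pow]
  simpa [sq] using key

lemma qh_lower (x y : V) (hx : x ≠ 0) (γ : ℝ → V) [FiniteDimensional ℝ V]
    (K : NNReal) (hK : LipschitzOnWith K γ (Icc 0 1)) (h0 : ∀ t ∈ Icc (0:ℝ) 1, γ t ≠ 0)
    (hγ0 : γ 0 = x) (hγ1 : γ 1 = y) :
    qhD x y ≤ ∫ t in (0:ℝ)..1, ‖deriv γ t‖ / ‖γ t‖ := by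
  obtain ⟨m, hm, hmle⟩ : ∃ m > 0, ∀ t ∈ Icc (0:ℝ) 1, m ≤ ‖γ t‖ := by
    obtain ⟨t0, ht0, hmin⟩ := isCompact_Icc.exists_isMinOn (nonempty_Icc.2 zero_le_one)
      hK.continuousOn.norm
    exact ⟨‖γ t0‖, norm_pos_iff.2 (h0 t0 ht0), fun t ht => hmin ht⟩
  set F : ℝ → ℝ := fun s => qhD x (γ s) with hFdef
  have hp := Real.pi_pos
  have hFL : LipschitzOnWith (Real.toNNReal (Real.pi / 2 * (K / m))) F (Icc 0 1) := by
    apply LipschitzOnWith.of_dist_le_mul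
    intro s hs t ht
    rw [Real.coe_toNNReal _ (by positivity), Real.dist_eq]
    refine (qhD_abs_sub x _ _ hx (h0 s hs) (h0 t ht)).trans ?_
    apply le_of_sq_le_sq ?_ (by positivity)
    refine (qh_bound1 _ _ (h0 s hs) (h0 t ht)).trans ?_
    have h1 := hK.dist_le_mul s hs t ht
    rw [dist_eq_norm] at h1
    calc _ ≤ Real.pi ^ 2 / 4 * ((K * dist s t) ^ 2 / (m * m)) := by
          gcongr
          · exact hmle s hs
          · exact hmle t ht
      _ = _ := by field_simp; ring
  have hFAC : AbsolutelyContinuousOnInterval F 0 1 :=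
    LipschitzOnWith.absolutelyContinuousOnInterval (by rwa [uIcc_of_le zero_le_one])
  have hF := hFAC.integral_deriv_eq_sub
  have hF0 : F 0 = 0 := by
    simp [hFdef, hγ0, qhD, angle_self hx, div_self (norm_ne_zero_iff.2 hx)]
  have hF1 : F 1 = qhD x y := by simp [hFdef, hγ1]
  rw [hF0, hF1, sub_zero] at hF
  rw [← hF]
  have hint : IntervalIntegrable (fun t => ‖deriv γ t‖ / ‖γ t‖) volume 0 1 := by
    rw [intervalIntegrable_iff_integrableOn_Ioo_of_le zero_le_one]
    refine Integrable.of_bound (C := K / m) ?_ ?_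
    · have h1 : AEStronglyMeasurable γ (volume.restrict (Ioo 0 1)) :=
        (hK.continuousOn.mono Ioo_subset_Icc_self).aestronglyMeasurable measurableSet_Ioo
      have h2 : AEStronglyMeasurable (deriv γ) (volume.restrict (Ioo 0 1)) :=
        (stronglyMeasurable_deriv γ).aestronglyMeasurable
      exact (h2.norm.aemeasurable.div h1.norm.aemeasurable).aestronglyMeasurable
    · filter_upwards [ae_restrict_mem measurableSet_Ioo] with t ht
      have := norm_deriv_le_of_lipschitzOn (Icc_mem_nhds ht.1 ht.2) hK
      rw [norm_div, norm_norm, norm_norm]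
      gcongr
      exact hmle t (Ioo_subset_Icc_self ht)
  have hne : ∀ᵐ t : ℝ, t ≠ 0 ∧ t ≠ 1 := by
    have a1 : ∀ᵐ t : ℝ, t ≠ 0 := Measure.ae_ne volume 0
    have a2 : ∀ᵐ t : ℝ, t ≠ 1 := Measure.ae_ne volume 1
    filter_upwards [a1, a2] with t h1 h2 using ⟨h1, h2⟩
  apply intervalIntegral.integral_mono_ae_restrict zero_le_one hFAC.intervalIntegrable_deriv hint
  filter_upwards [ae_restrict_mem measurableSet_Icc,
    ae_restrict_of_ae hne, ae_restrict_of_ae hFL.ae_differentiableWithinAt_of_mem_real,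
    ae_restrict_of_ae hK.ae_differentiableWithinAt_of_mem_real] with t ht hn hd1 hd2
  have hnh : Icc (0:ℝ) 1 ∈ 𝓝 t :=
    Icc_mem_nhds (lt_of_le_of_ne ht.1 hn.1.symm) (lt_of_le_of_ne ht.2 hn.2)
  exact qh_deriv_bound x hx γ t (mem_of_superset hnh h0) ((hd2 ht).differentiableAt hnh)
    ((hd1 ht).differentiableAt hnh)

lemma qh_frame (x y : V) (hx : x ≠ 0) (hy : y ≠ 0) [FiniteDimensional ℝ V]
    (hd : 2 ≤ Module.finrank ℝ V) :
    ∃ e w : V, ‖e‖ = 1 ∧ ‖w‖ = 1 ∧ inner ℝ e w = 0 ∧ x = ‖x‖ • e ∧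
      y = ‖y‖ • (Real.cos (angle x y) • e + Real.sin (angle x y) • w) := by
  have hx' := norm_pos_iff.2 hx
  have hy' := norm_pos_iff.2 hy
  set e := ‖x‖⁻¹ • x with he
  set f := ‖y‖⁻¹ • y with hf
  have hxe : x = ‖x‖ • e := by rw [he, smul_smul, mul_inv_cancel₀ hx'.ne', one_smul]
  have hyf : y = ‖y‖ • f := by rw [hf, smul_smul, mul_inv_cancel₀ hy'.ne', one_smul]
  have ne : ‖e‖ = 1 := by rw [he, norm_smul, norm_inv, norm_norm, inv_mul_cancel₀ hx'.ne']
  have nf : ‖f‖ = 1 := by rw [hf, norm_smul, norm_inv, norm_norm, inv_mul_cancel₀ hy'.ne']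
  have hef : inner ℝ e f = Real.cos (angle x y) := by
    rw [cos_angle, he, hf, inner_smul_left, inner_smul_right]
    simp; field_simp
  clear_value e f
  have hee : inner ℝ e e = (1:ℝ) := by rw [real_inner_self_eq_norm_sq, ne]; norm_num
  set g := f - Real.cos (angle x y) • e with hg
  have heg : inner ℝ e g = (0:ℝ) := by
    rw [hg, inner_sub_right, inner_smul_right, hef, hee]; ring
  have ng : ‖g‖ = Real.sin (angle x y) := by
    have h0 : 0 ≤ Real.sin (angle x y) := Real.sin_nonneg_of_nonneg_of_le_pi (angle_nonneg _ _) (angle_le_pi _ _)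
    rw [← sq_eq_sq₀ (norm_nonneg _) h0, hg, norm_sub_sq_real, inner_smul_right, real_inner_comm, hef,
      norm_smul, ne, nf, Real.sin_sq, mul_one, Real.norm_eq_abs, sq_abs]
    ring
  by_cases hs : Real.sin (angle x y) = 0
  · have hg0 : g = 0 := by rw [← norm_eq_zero, ng, hs]
    obtain ⟨w, hw, hw1⟩ : ∃ w ∈ (ℝ ∙ e)ᗮ, ‖w‖ = 1 := by
      have h1 : Module.finrank ℝ (ℝ ∙ e) ≤ 1 := by
        simpa using finrank_span_le_card ({e} : Set V) (R := ℝ)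
      have h2 := (ℝ ∙ e).finrank_add_finrank_orthogonal
      have h3 : (ℝ ∙ e)ᗮ ≠ ⊥ := by
        intro h; rw [h, finrank_bot] at h2; omega
      obtain ⟨w, hw, hw0⟩ := Submodule.exists_mem_ne_zero_of_ne_bot h3
      refine ⟨‖w‖⁻¹ • w, Submodule.smul_mem _ _ hw, ?_⟩
      rw [norm_smul, norm_inv, norm_norm, inv_mul_cancel₀ (norm_ne_zero_iff.2 hw0)]
    refine ⟨e, w, ne, hw1, Submodule.mem_orthogonal_singleton_iff_inner_right.1 hw, hxe, ?_⟩
    rw [hs, zero_smul, add_zero, ← sub_eq_zero.1 hg0]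
    exact hyf
  · refine ⟨e, (Real.sin (angle x y))⁻¹ • g, ne, ?_, ?_, hxe, ?_⟩
    · rw [norm_smul, ng, norm_inv, Real.norm_eq_abs, ← ng, abs_norm, inv_mul_cancel₀ (by rwa [ng])]
    · rw [inner_smul_right, heg, mul_zero]
    · rw [smul_smul (Real.sin _), mul_inv_cancel₀ hs, one_smul, hg, add_sub_cancel]
      exact hyf

lemma norm_comb (e w : V) (he : ‖e‖ = 1) (hw : ‖w‖ = 1) (hew : inner ℝ e w = (0:ℝ)) (a b : ℝ) :
    ‖a • e + b • w‖ = Real.sqrt (a ^ 2 + b ^ 2) := by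
  rw [← Real.sqrt_sq (norm_nonneg (a • e + b • w)), norm_add_sq_real, inner_smul_left,
    inner_smul_right, hew, norm_smul, norm_smul, he, hw]
  simp

lemma qh_upper (x y : V) (hx : x ≠ 0) (hy : y ≠ 0) [FiniteDimensional ℝ V]
    (hd : 2 ≤ Module.finrank ℝ V) :
    ∃ γ : ℝ → V, (∃ K : NNReal, LipschitzOnWith K γ (Icc 0 1)) ∧ (∀ t, γ t ≠ 0) ∧ γ 0 = x ∧ γ 1 = y
      ∧ ∀ t, ‖deriv γ t‖ / ‖γ t‖ = qhD x y := by
  obtain ⟨e, w, he, hw, hew, hxe, hyw⟩ := qh_frame x y hx hy hd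
  have hx' := norm_pos_iff.2 hx
  have hy' := norm_pos_iff.2 hy
  set α := angle x y with hα
  set b := Real.log (‖y‖ / ‖x‖) with hb
  set r : ℝ → ℝ := fun t => ‖x‖ * Real.exp (b * t) with hr
  set γ : ℝ → V := fun t => (r t * Real.cos (α * t)) • e + (r t * Real.sin (α * t)) • w with hγ
  have hrpos : ∀ t, 0 < r t := fun t => by positivity
  have hr' : ∀ t, HasDerivAt r (b * r t) t := fun t => by
    have := (((hasDerivAt_id t).const_mul b).exp).const_mul ‖x‖
    refine HasDerivAt.congr_deriv (f := r) this ?_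
    simp only [hr, id]; ring
  have hlin : ∀ t, HasDerivAt (fun t => α * t) α t := fun t => by
    simpa using (hasDerivAt_id t).const_mul α
  have hγ' : ∀ t, HasDerivAt γ ((b * r t * Real.cos (α * t) - α * r t * Real.sin (α * t)) • e +
      (b * r t * Real.sin (α * t) + α * r t * Real.cos (α * t)) • w) t := fun t => by
    have h1 := ((hr' t).mul (hlin t).cos).smul_const e
    have h2 := ((hr' t).mul (hlin t).sin).smul_const w
    refine HasDerivAt.congr_deriv (f := γ) (h1.add h2) ?_
    rw [show b * r t * Real.cos (α * t) + r t * (-Real.sin (α * t) * α) = b * r t * Real.cos (α * t) - α * r t * Real.sin (α * t) by ring, show r t * (Real.cos (α * t) * α) = α * r t * Real.cos (α * t) by ring]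
  have hnorm : ∀ t, ‖γ t‖ = r t := fun t => by
    rw [hγ]
    simp only
    rw [norm_comb e w he hw hew, show (r t * Real.cos (α * t)) ^ 2 + (r t * Real.sin (α * t)) ^ 2
      = r t ^ 2 by linear_combination (r t) ^ 2 * Real.sin_sq_add_cos_sq (α * t),
      Real.sqrt_sq (hrpos t).le]
  refine ⟨γ, ?_, ?_, ?_, ?_, ?_⟩
  · have hcd : ContDiff ℝ 1 γ := by
      simp only [hγ, hr]
      fun_prop
    exact (hcd.contDiffOn).exists_lipschitzOnWith one_ne_zero (convex_Icc _ _) isCompact_Icc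
  · intro t h
    have := hnorm t
    rw [h, norm_zero] at this
    exact (hrpos t).ne this
  · simp [hγ, hr]; exact hxe.symm
  · have : r 1 = ‖y‖ := by
      simp only [hr, hb, mul_one]
      rw [Real.exp_log (by positivity)]; field_simp
    simp only [hγ, this, mul_one]
    rw [mul_smul, mul_smul, ← smul_add]; exact hyw.symm
  · intro t
    rw [(hγ' t).deriv, norm_comb e w he hw hew, hnorm, qhD_comm]
    rw [show (b * r t * Real.cos (α * t) - α * r t * Real.sin (α * t)) ^ 2 +
      (b * r t * Real.sin (α * t) + α * r t * Real.cos (α * t)) ^ 2 = (α ^ 2 + b ^ 2) * r t ^ 2 by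
      linear_combination (α ^ 2 + b ^ 2) * r t ^ 2 * Real.sin_sq_add_cos_sq (α * t),
      Real.sqrt_mul (by positivity), Real.sqrt_sq (hrpos t).le, mul_div_cancel_right₀ _ (hrpos t).ne',
      qhD, angle_comm y x]

end QHAux

/-- Martin–Osgood formula for the quasihyperbolic metric of the
punctured space `ℝⁿ \ {0}`. -/
theorem qh_punctured_space_formula (n : ℕ) (hn : 2 ≤ n)
    (x y : EuclideanSpace ℝ (Fin n)) (hx : x ≠ 0) (hy : y ≠ 0) :
    qhDist ({0}ᶜ : Set (EuclideanSpace ℝ (Fin n))) x y =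
      Real.sqrt (InnerProductGeometry.angle x y ^ 2 + Real.log (‖x‖ / ‖y‖) ^ 2) := by
  have hd : 2 ≤ Module.finrank ℝ (EuclideanSpace ℝ (Fin n)) := by simpa using hn
  have : Nontrivial (EuclideanSpace ℝ (Fin n)) := ⟨x, 0, hx⟩
  have hlen : ∀ γ : ℝ → EuclideanSpace ℝ (Fin n), qhLength ({0}ᶜ) γ =
      ∫ t in (0:ℝ)..1, ‖deriv γ t‖ / ‖γ t‖ := by
    intro γ
    have : frontier ({0}ᶜ : Set (EuclideanSpace ℝ (Fin n))) = {0} := by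
      rw [frontier_compl, frontier, closure_singleton, interior_singleton, sdiff_empty]
    simp [qhLength, this]
  change _ = qhD x y
  obtain ⟨γ, h1, h2, h3, h4, h5⟩ := qh_upper x y hx hy hd
  have hlow : ∀ l ∈ qhLength ({0}ᶜ : Set (EuclideanSpace ℝ (Fin n))) '' {γ | IsRectPath {0}ᶜ x y γ}, qhD x y ≤ l := by
    rintro _ ⟨δ, ⟨⟨K, hK⟩, hm, d0, d1⟩, rfl⟩
    rw [hlen]
    exact qh_lower x y hx δ K hK (fun t ht => hm ht) d0 d1
  have hmem : qhD x y ∈ qhLength ({0}ᶜ : Set (EuclideanSpace ℝ (Fin n))) '' {γ | IsRectPath {0}ᶜ x y γ} :=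
    ⟨γ, ⟨h1, fun t _ => h2 t, h3, h4⟩, by rw [hlen]; simp [h5]⟩
  exact le_antisymm (csInf_le ⟨_, hlow⟩ hmem) (le_csInf ⟨_, hmem⟩ hlow)
end

section
/- Let Ω ⊊ ℝⁿ (n ≥ 2) be a proper subdomain and let x, y ∈ Ω. Then there exists a quasihyperbolic geodesic from x to y, i.e., a rectifiable curve γ in Ω joining x and y whose quasihyperbolic length achieves the infimum: ℓ_k(γ) = k_Ω(x,y). -/
open Set Metric MeasureTheory

open Filter Topology

theorem qg_infDist_pos {E : Type*} [NormedAddCommGroup E] [NormedSpace ℝ E] {Ω : Set E}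
    (hopen : IsOpen Ω) (hfr : (frontier Ω).Nonempty) {z : E} (hz : z ∈ Ω) :
    0 < infDist z (frontier Ω) := by
  rw [← infDist_pos_iff_notMem_closure hfr, isClosed_frontier.closure_eq]
  intro h
  rw [hopen.frontier_eq] at h
  exact h.2 hz

theorem qg_integrable {E : Type*} [NormedAddCommGroup E] [NormedSpace ℝ E]
    [FiniteDimensional ℝ E] {Ω : Set E}
    (hopen : IsOpen Ω) (hfr : (frontier Ω).Nonempty) {x y : E} {σ : ℝ → E}
    (hσ : IsRectPath Ω x y σ) :
    IntegrableOn (fun t => ‖deriv σ t‖ / infDist (σ t) (frontier Ω)) (Icc 0 1) := by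
  obtain ⟨⟨K, hK⟩, hm, -, -⟩ := hσ
  have hc : ContinuousOn (fun t => infDist (σ t) (frontier Ω)) (Icc 0 1) :=
    (continuous_infDist_pt _).comp_continuousOn hK.continuousOn
  have hci : ContinuousOn (fun t => (infDist (σ t) (frontier Ω))⁻¹) (Icc 0 1) :=
    hc.inv₀ (fun t ht => (qg_infDist_pos hopen hfr (hm ht)).ne')
  have hi := hci.integrableOn_compact (μ := volume) isCompact_Icc
  have hmd : AEStronglyMeasurable (fun t => ‖deriv σ t‖) (volume.restrict (Icc (0:ℝ) 1)) :=
    (stronglyMeasurable_deriv σ).norm.aestronglyMeasurable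
  have hb : ∀ᵐ t ∂(volume.restrict (Icc (0:ℝ) 1)), ‖‖deriv σ t‖‖ ≤ K := by
    rw [← restrict_Ioo_eq_restrict_Icc]
    filter_upwards [self_mem_ae_restrict measurableSet_Ioo] with t ht
    rw [norm_norm]
    exact norm_deriv_le_of_lipschitzOn (Icc_mem_nhds ht.1 ht.2) hK
  have := hi.bdd_mul hmd hb
  simpa [div_eq_mul_inv, IntegrableOn] using this

theorem qg_log_lip {a u v : ℝ} (ha : 0 < a) (hu : a ≤ u) (hv : a ≤ v) :
    |Real.log u - Real.log v| ≤ a⁻¹ * |u - v| := by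
  have key : ∀ u v : ℝ, a ≤ u → a ≤ v → Real.log u - Real.log v ≤ a⁻¹ * |u - v| := by
    intro u v hu hv
    have hu0 := ha.trans_le hu
    have hv0 := ha.trans_le hv
    rw [← Real.log_div hu0.ne' hv0.ne']
    have h1 := Real.log_le_sub_one_of_pos (div_pos hu0 hv0)
    have h2 : u / v - 1 = v⁻¹ * (u - v) := by field_simp
    have h3 : v⁻¹ * (u - v) ≤ v⁻¹ * |u - v| :=
      mul_le_mul_of_nonneg_left (le_abs_self _) (by positivity)
    have h4 : v⁻¹ * |u - v| ≤ a⁻¹ * |u - v| :=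
      mul_le_mul_of_nonneg_right (inv_anti₀ ha hv) (abs_nonneg _)
    linarith
  rw [abs_le]
  have h1 := key u v hu hv
  have h2 := key v u hv hu
  rw [abs_sub_comm] at h2
  constructor <;> linarith

theorem qg_deriv_le {E : Type*} [NormedAddCommGroup E] [NormedSpace ℝ E] {σ : ℝ → E} {c : E}
    {t : ℝ} (h1 : DifferentiableAt ℝ σ t) (h2 : DifferentiableAt ℝ (fun s => ‖σ s - c‖) t) :
    |deriv (fun s => ‖σ s - c‖) t| ≤ ‖deriv σ t‖ := by
  have a1 := (hasDerivAt_iff_tendsto_slope.1 h1.hasDerivAt).norm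
  have a2 := (hasDerivAt_iff_tendsto_slope.1 h2.hasDerivAt).norm
  rw [← Real.norm_eq_abs]
  refine le_of_tendsto_of_tendsto a2 a1 (Eventually.of_forall fun s => ?_)
  simp only [slope_def_module, norm_smul]
  refine mul_le_mul_of_nonneg_left ?_ (norm_nonneg _)
  have := abs_norm_sub_norm_le (σ s - c) (σ t - c)
  simpa using this

theorem qg_growth {E : Type*} [NormedAddCommGroup E] [NormedSpace ℝ E]
    [FiniteDimensional ℝ E] {Ω : Set E}
    (hopen : IsOpen Ω) (hfr : (frontier Ω).Nonempty) {x y : E} {σ : ℝ → E}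
    (hσ : IsRectPath Ω x y σ) {p q c : ℝ} (hp : 0 ≤ p) (hpq : p ≤ q) (hq : q ≤ 1)
    (hc : c ∈ Icc (0:ℝ) 1) :
    |Real.log (infDist (σ c) (frontier Ω) + ‖σ q - σ c‖)
      - Real.log (infDist (σ c) (frontier Ω) + ‖σ p - σ c‖)| ≤
      ∫ t in p..q, ‖deriv σ t‖ / infDist (σ t) (frontier Ω) := by
  have hint := qg_integrable hopen hfr hσ
  obtain ⟨⟨K, hK⟩, hm, -, -⟩ := hσ
  have hsub : Icc p q ⊆ Icc (0:ℝ) 1 := Icc_subset_Icc hp hq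
  have hd : 0 < infDist (σ c) (frontier Ω) := qg_infDist_pos hopen hfr (hm hc)
  set d := infDist (σ c) (frontier Ω) with hdd
  have hrl : ∀ s ∈ Icc p q, ∀ t ∈ Icc p q, |‖σ s - σ c‖ - ‖σ t - σ c‖| ≤ K * |s - t| := by
    intro s hs t ht
    have h1 := abs_norm_sub_norm_le (σ s - σ c) (σ t - σ c)
    have h2 := hK.dist_le_mul s (hsub hs) t (hsub ht)
    rw [dist_eq_norm, Real.dist_eq] at h2
    rw [sub_sub_sub_cancel_right] at h1
    linarith
  have hr : LipschitzOnWith K (fun s => ‖σ s - σ c‖) (Icc p q) :=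
    LipschitzOnWith.of_dist_le_mul fun s hs t ht => by
      simpa [Real.dist_eq] using hrl s hs t ht
  have hg : LipschitzOnWith (Real.toNNReal (d⁻¹ * K)) (fun s => Real.log (d + ‖σ s - σ c‖))
      (uIcc p q) := by
    rw [uIcc_of_le hpq]
    refine LipschitzOnWith.of_dist_le_mul fun s hs t ht => ?_
    rw [Real.coe_toNNReal _ (by positivity), Real.dist_eq, Real.dist_eq, mul_assoc]
    refine (qg_log_lip hd (by simp) (by simp)).trans ?_
    refine mul_le_mul_of_nonneg_left ?_ (by positivity)
    simpa using hrl s hs t ht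
  have hftc := hg.absolutelyContinuousOnInterval.integral_deriv_eq_sub
  rw [← hftc, ← Real.norm_eq_abs]
  refine intervalIntegral.norm_integral_le_of_norm_le hpq ?_ ?_
  · have b1 := hr.ae_differentiableWithinAt_of_mem (μ := volume)
    have b2 := (hK.mono hsub).ae_differentiableWithinAt_of_mem (μ := volume)
    have b3 : ∀ᵐ t : ℝ, t ≠ q := by simp [ae_iff]
    filter_upwards [b1, b2, b3] with t h1 h2 h3 ht
    have hIoo : t ∈ Ioo p q := ⟨ht.1, lt_of_le_of_ne ht.2 h3⟩
    have hI : t ∈ Icc p q := ⟨ht.1.le, ht.2⟩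
    have hn : Icc p q ∈ 𝓝 t := Icc_mem_nhds hIoo.1 hIoo.2
    have e1 := (h1 hI).differentiableAt hn
    have e2 := (h2 hI).differentiableAt hn
    have hpos : 0 < d + ‖σ t - σ c‖ := by positivity
    have e3 := ((e1.hasDerivAt.const_add d).log hpos.ne').deriv
    rw [e3, norm_div, Real.norm_eq_abs, Real.norm_eq_abs, abs_of_pos hpos]
    have hdt := qg_infDist_pos hopen hfr (hm (hsub hI))
    refine div_le_div₀ (norm_nonneg _) (qg_deriv_le e2 e1) hdt ?_
    have := infDist_le_infDist_add_dist (x := σ t) (y := σ c) (s := frontier Ω)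
    rwa [dist_eq_norm] at this
  · exact (hint.mono_set (by rw [uIcc_of_le hpq]; exact hsub)).intervalIntegrable

theorem qg_growth' {E : Type*} [NormedAddCommGroup E] [NormedSpace ℝ E]
    [FiniteDimensional ℝ E] {Ω : Set E}
    (hopen : IsOpen Ω) (hfr : (frontier Ω).Nonempty) {x y : E} {σ : ℝ → E}
    (hσ : IsRectPath Ω x y σ) {a b : ℝ} (ha : a ∈ Icc (0:ℝ) 1) (hb : b ∈ Icc (0:ℝ) 1) :
    ‖σ a - σ b‖ ≤ infDist (σ b) (frontier Ω) * (Real.exp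
      |(∫ t in (0:ℝ)..a, ‖deriv σ t‖ / infDist (σ t) (frontier Ω)) -
       (∫ t in (0:ℝ)..b, ‖deriv σ t‖ / infDist (σ t) (frontier Ω))| - 1) := by
  have hd : 0 < infDist (σ b) (frontier Ω) := qg_infDist_pos hopen hfr (hσ.2.1 hb)
  have hint := qg_integrable hopen hfr hσ
  have hii : ∀ u ∈ Icc (0:ℝ) 1, IntervalIntegrable
      (fun t => ‖deriv σ t‖ / infDist (σ t) (frontier Ω)) volume 0 u := fun u hu =>
    (hint.mono_set (by rw [uIcc_of_le hu.1]; exact Icc_subset_Icc le_rfl hu.2)).intervalIntegrable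
  rw [intervalIntegral.integral_interval_sub_left (hii a ha) (hii b hb)]
  set d := infDist (σ b) (frontier Ω) with hdd
  have key : Real.log (d + ‖σ a - σ b‖) - Real.log d ≤
      |∫ t in b..a, ‖deriv σ t‖ / infDist (σ t) (frontier Ω)| := by
    rcases le_total b a with h | h
    · have := qg_growth hopen hfr hσ hb.1 h ha.2 hb
      simp only [sub_self, norm_zero, add_zero, ← hdd] at this
      exact (le_abs_self _).trans (this.trans (le_abs_self _))
    · have := qg_growth hopen hfr hσ ha.1 h hb.2 hb
      simp only [sub_self, norm_zero, add_zero, ← hdd] at this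
      rw [abs_sub_comm] at this
      rw [intervalIntegral.integral_symm, abs_neg]
      exact (le_abs_self _).trans (this.trans (le_abs_self _))
  have hpos : 0 < d + ‖σ a - σ b‖ := by positivity
  have h2 := Real.exp_le_exp.2 (sub_le_iff_le_add.1 key)
  rw [Real.exp_log hpos, Real.exp_add, Real.exp_log hd] at h2
  linarith


theorem qg_trans {E : Type*} [NormedAddCommGroup E] [NormedSpace ℝ E] {Ω : Set E} {x y z : E}
    {f g : ℝ → E} (hf : IsRectPath Ω x y f) (hg : IsRectPath Ω y z g) :
    ∃ h, IsRectPath Ω x z h := by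
  obtain ⟨⟨K, hK⟩, hm, h0, h1⟩ := hf
  obtain ⟨⟨L, hL⟩, hn, i0, i1⟩ := hg
  have mem1 : ∀ t ∈ Icc (0:ℝ) 1, min (2*t) 1 ∈ Icc (0:ℝ) 1 := fun t ht =>
    ⟨le_min (by linarith [ht.1]) zero_le_one, min_le_right _ _⟩
  have mem2 : ∀ t ∈ Icc (0:ℝ) 1, max (2*t-1) 0 ∈ Icc (0:ℝ) 1 := fun t ht =>
    ⟨le_max_right _ _, max_le (by linarith [ht.2]) zero_le_one⟩
  refine ⟨fun t => f (min (2*t) 1) + g (max (2*t-1) 0) - y, ⟨2 * K + 2 * L, ?_⟩, ?_, ?_, ?_⟩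
  · refine LipschitzOnWith.of_dist_le_mul fun s hs t ht => ?_
    have a1 := hK.dist_le_mul _ (mem1 s hs) _ (mem1 t ht)
    have a2 := hL.dist_le_mul _ (mem2 s hs) _ (mem2 t ht)
    have b1 : dist (min (2*s) 1) (min (2*t) 1) ≤ 2 * dist s t := by
      rw [Real.dist_eq, Real.dist_eq]
      have := abs_min_sub_min_le_max (2*s) 1 (2*t) 1
      rw [sub_self, abs_zero, max_eq_left (abs_nonneg _), ← mul_sub, abs_mul] at this
      simpa using this
    have b2 : dist (max (2*s-1) 0) (max (2*t-1) 0) ≤ 2 * dist s t := by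
      rw [Real.dist_eq, Real.dist_eq]
      refine (abs_max_sub_max_le_max (2*s-1) 0 (2*t-1) 0).trans (max_le ?_ ?_)
      · rw [sub_sub_sub_cancel_right, ← mul_sub, abs_mul, abs_two]
      · rw [sub_self, abs_zero]
        positivity
    have c1 := mul_le_mul_of_nonneg_left b1 K.coe_nonneg
    have c2 := mul_le_mul_of_nonneg_left b2 L.coe_nonneg
    rw [dist_sub_right]
    refine (dist_add_add_le _ _ _ _).trans ?_
    push_cast
    linarith
  · intro t ht
    simp only
    rcases le_total t (1/2) with h | h
    · rw [max_eq_right (by linarith), i0, add_sub_cancel_right]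
      exact hm (mem1 t ht)
    · rw [min_eq_right (by linarith), h1, add_sub_cancel_left]
      exact hn (mem2 t ht)
  · simp [h0, i0]
  · norm_num [h1, i1]

theorem qg_exists {E : Type*} [NormedAddCommGroup E] [NormedSpace ℝ E] {Ω : Set E}
    (hopen : IsOpen Ω) (hconn : IsConnected Ω) {x y : E} (hx : x ∈ Ω) (hy : y ∈ Ω) :
    ∃ γ, IsRectPath Ω x y γ := by
  refine hconn.isPreconnected.induction₂' (fun x y => ∃ γ, IsRectPath Ω x y γ) ?_ ?_ hx hy
  · intro z hz
    obtain ⟨r, hr, hb⟩ := Metric.isOpen_iff.1 hopen z hz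
    have hseg : ∀ a ∈ ball z r, ∀ b ∈ ball z r, ∃ γ, IsRectPath Ω a b γ := by
      intro a ha b hbb
      refine ⟨AffineMap.lineMap a b, ⟨nndist a b, ?_⟩, ?_, by simp, by simp⟩
      · refine LipschitzOnWith.of_dist_le_mul fun s _ t _ => ?_
        rw [dist_lineMap_lineMap, mul_comm]
        simp
      · intro t ht
        exact hb ((convex_ball z r).lineMap_mem ha hbb ht)
    filter_upwards [mem_nhdsWithin_of_mem_nhds (ball_mem_nhds z hr)] with w hw
    exact ⟨hseg z (mem_ball_self hr) w hw, hseg w hw z (mem_ball_self hr)⟩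
  · intro a b c _ _ _ h1 h2
    obtain ⟨f, hf⟩ := h1
    obtain ⟨g, hg⟩ := h2
    exact qg_trans hf hg

theorem qg_length_nonneg {E : Type*} [NormedAddCommGroup E] [NormedSpace ℝ E] (Ω : Set E)
    (γ : ℝ → E) : 0 ≤ qhLength Ω γ :=
  intervalIntegral.integral_nonneg zero_le_one
    (fun _ _ => div_nonneg (norm_nonneg _) infDist_nonneg)

theorem qg_approx {E : Type*} [NormedAddCommGroup E] [NormedSpace ℝ E]
    [FiniteDimensional ℝ E] {Ω : Set E}
    (hopen : IsOpen Ω) (hfr : (frontier Ω).Nonempty) {x y : E} {σ : ℝ → E}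
    (hσ : IsRectPath Ω x y σ) :
    ∃ γ : ℝ → E, (∀ t ∈ Icc (0:ℝ) 1, γ t ∈ Ω) ∧ γ 0 = x ∧ γ 1 = y ∧ (∀ t ∉ Icc (0:ℝ) 1, γ t = x) ∧
      ∀ s ∈ Icc (0:ℝ) 1, ∀ t ∈ Icc (0:ℝ) 1,
        ‖γ s - γ t‖ ≤ infDist (γ t) (frontier Ω) * (Real.exp (qhLength Ω σ * |s - t|) - 1) := by
  classical
  set φ : ℝ → ℝ := fun u => ∫ t in (0:ℝ)..u, ‖deriv σ t‖ / infDist (σ t) (frontier Ω) with hφ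
  have hint := qg_integrable hopen hfr hσ
  have hcont : ContinuousOn φ (Icc 0 1) := by
    have := intervalIntegral.continuousOn_primitive_interval (a := (0:ℝ)) (b := 1) (μ := volume)
      (f := fun t => ‖deriv σ t‖ / infDist (σ t) (frontier Ω))
      (by rw [uIcc_of_le zero_le_one]; exact hint)
    rwa [uIcc_of_le zero_le_one] at this
  have h0 : φ 0 = 0 := by simp [hφ]
  have h1 : φ 1 = qhLength Ω σ := rfl
  have hl := qg_length_nonneg Ω σ
  set l := qhLength Ω σ with hll
  have hex : ∀ s : ℝ, ∃ u, s ∈ Icc (0:ℝ) 1 → u ∈ Icc (0:ℝ) 1 ∧ φ u = l * s ∧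
      (s = 0 → u = 0) ∧ (s = 1 → u = 1) := by
    intro s
    by_cases hs0 : s = 0
    · exact ⟨0, fun _ => ⟨by simp, by simp [h0, hs0], fun _ => rfl, fun h => by
        rw [hs0] at h; exact h⟩⟩
    by_cases hs1 : s = 1
    · exact ⟨1, fun _ => ⟨by simp, by simp [h1, hs1], fun h => absurd h hs0, fun _ => rfl⟩⟩
    by_cases hs : s ∈ Icc (0:ℝ) 1
    · have hmem : l * s ∈ Icc (φ 0) (φ 1) := by
        rw [h0, h1]
        exact ⟨mul_nonneg hl hs.1, mul_le_of_le_one_right hl hs.2⟩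
      obtain ⟨u, hu, hu'⟩ := intermediate_value_Icc zero_le_one hcont hmem
      exact ⟨u, fun _ => ⟨hu, hu', fun h => absurd h hs0, fun h => absurd h hs1⟩⟩
    · exact ⟨0, fun h => absurd h hs⟩
  choose τ hτ using hex
  have z0 : (0:ℝ) ∈ Icc (0:ℝ) 1 := by simp
  have z1 : (1:ℝ) ∈ Icc (0:ℝ) 1 := by simp
  refine ⟨fun t => if t ∈ Icc (0:ℝ) 1 then σ (τ t) else x, ?_, ?_, ?_, ?_, ?_⟩
  · intro t ht
    simp only [if_pos ht]
    exact hσ.2.1 (hτ t ht).1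
  · simp only [if_pos z0]
    rw [(hτ 0 z0).2.2.1 rfl, hσ.2.2.1]
  · simp only [if_pos z1]
    rw [(hτ 1 z1).2.2.2 rfl, hσ.2.2.2]
  · intro t ht
    simp only [if_neg ht]
  · intro s hs t ht
    simp only [if_pos hs, if_pos ht]
    have := qg_growth' hopen hfr hσ (hτ s hs).1 (hτ t ht).1
    change _ ≤ _ * (Real.exp |φ (τ s) - φ (τ t)| - 1) at this
    rwa [(hτ s hs).2.1, (hτ t ht).2.1, ← mul_sub, abs_mul, abs_of_nonneg hl] at this

theorem qg_limit {E : Type*} [NormedAddCommGroup E] [NormedSpace ℝ E]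
    [FiniteDimensional ℝ E] {Ω : Set E}
    (hopen : IsOpen Ω) (hfr : (frontier Ω).Nonempty) {x y : E} {L : ℝ} (hL : 0 ≤ L)
    (hσ : ∀ ε > 0, ∃ σ, IsRectPath Ω x y σ ∧ qhLength Ω σ < L + ε) :
    ∃ γ : ℝ → E, (∀ t ∈ Icc (0:ℝ) 1, γ t ∈ closure Ω) ∧ γ 0 = x ∧ γ 1 = y ∧
      ∀ s ∈ Icc (0:ℝ) 1, ∀ t ∈ Icc (0:ℝ) 1,
        ‖γ s - γ t‖ ≤ infDist (γ t) (frontier Ω) * (Real.exp (L * |s - t|) - 1) := by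
  set R : ℝ := infDist x (frontier Ω) * (Real.exp (L + 1) - 1) with hR
  have hd0 : 0 ≤ infDist x (frontier Ω) := infDist_nonneg
  have hR0 : 0 ≤ R := mul_nonneg hd0 (sub_nonneg.2 (Real.one_le_exp (by linarith)))
  let ε : ℕ → ℝ := fun n => 1 / ((n : ℝ) + 1)
  have hε : ∀ n, 0 < ε n := fun n => Nat.one_div_pos_of_nat
  have hε1 : ∀ n, ε n ≤ 1 := fun n => by
    simp only [ε]
    rw [div_le_one (by positivity)]
    linarith [(Nat.cast_nonneg n : (0:ℝ) ≤ n)]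
  have hεa : ∀ n, ε (n+1) ≤ ε n := fun n => Nat.one_div_le_one_div (Nat.le_succ n)
  let F : ℕ → Set (ℝ → E) := fun n =>
    {γ | (∀ t, γ t ∈ closedBall x R) ∧ (∀ t ∈ Icc (0:ℝ) 1, γ t ∈ closure Ω) ∧ γ 0 = x ∧ γ 1 = y ∧
      ∀ s ∈ Icc (0:ℝ) 1, ∀ t ∈ Icc (0:ℝ) 1,
        ‖γ s - γ t‖ ≤ infDist (γ t) (frontier Ω) * (Real.exp ((L + ε n) * |s - t|) - 1)}
  have hcl : ∀ n, IsClosed (F n) := by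
    intro n
    have c1 : IsClosed {γ : ℝ → E | ∀ t, γ t ∈ closedBall x R} := by
      simp only [setOf_forall]
      exact isClosed_iInter fun t => isClosed_closedBall.preimage (continuous_apply t)
    have c2 : IsClosed {γ : ℝ → E | ∀ t ∈ Icc (0:ℝ) 1, γ t ∈ closure Ω} := by
      simp only [setOf_forall]
      exact isClosed_iInter fun t => isClosed_iInter fun _ =>
        isClosed_closure.preimage (continuous_apply t)
    have c3 : IsClosed {γ : ℝ → E | γ 0 = x} := isClosed_eq (continuous_apply 0) continuous_const
    have c4 : IsClosed {γ : ℝ → E | γ 1 = y} := isClosed_eq (continuous_apply 1) continuous_const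
    have c5 : IsClosed {γ : ℝ → E | ∀ s ∈ Icc (0:ℝ) 1, ∀ t ∈ Icc (0:ℝ) 1,
        ‖γ s - γ t‖ ≤ infDist (γ t) (frontier Ω) *
          (Real.exp ((L + ε n) * |s - t|) - 1)} := by
      simp only [setOf_forall]
      refine isClosed_iInter fun s => isClosed_iInter fun _ => isClosed_iInter fun t =>
        isClosed_iInter fun _ => isClosed_le ?_ ?_
      · exact ((continuous_apply s).sub (continuous_apply t)).norm
      · exact ((continuous_infDist_pt _).comp (continuous_apply t)).mul continuous_const
    exact c1.inter (c2.inter (c3.inter (c4.inter c5)))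
  have hmono : ∀ a b s t : ℝ, ∀ z : E, a ≤ b →
      infDist z (frontier Ω) * (Real.exp (a * |s - t|) - 1) ≤
      infDist z (frontier Ω) * (Real.exp (b * |s - t|) - 1) := by
    intro a b s t z hab
    refine mul_le_mul_of_nonneg_left ?_ infDist_nonneg
    have := Real.exp_le_exp.2 (mul_le_mul_of_nonneg_right hab (abs_nonneg (s - t)))
    linarith
  have hne : (⋂ n, F n).Nonempty := by
    refine IsCompact.nonempty_iInter_of_sequence_nonempty_isCompact_isClosed F ?_ ?_ ?_ hcl
    · rintro n γ ⟨g1, g2, g3, g4, g5⟩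
      exact ⟨g1, g2, g3, g4, fun s hs t ht => (g5 s hs t ht).trans
        (hmono _ _ _ _ _ (by linarith [hεa n]))⟩
    · intro n
      obtain ⟨σ, hσ1, hσ2⟩ := hσ (ε n) (hε n)
      obtain ⟨γ, g1, g2, g3, g4, g5⟩ := qg_approx hopen hfr hσ1
      refine ⟨γ, ?_, fun t ht => subset_closure (g1 t ht), g2, g3,
        fun s hs t ht => (g5 s hs t ht).trans (hmono _ _ _ _ _ hσ2.le)⟩
      intro t
      by_cases ht : t ∈ Icc (0:ℝ) 1
      · rw [mem_closedBall, dist_eq_norm]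
        have := g5 t ht 0 (by simp)
        rw [g2, sub_zero, abs_of_nonneg ht.1] at this
        refine this.trans (mul_le_mul_of_nonneg_left ?_ hd0)
        have h3 : qhLength Ω σ * t ≤ L + 1 :=
          (mul_le_of_le_one_right (qg_length_nonneg _ _) ht.2).trans (by linarith [hε1 n])
        linarith [Real.exp_le_exp.2 h3]
      · rw [g4 t ht]
        exact mem_closedBall_self hR0
    · refine (isCompact_univ_pi (fun _ : ℝ => isCompact_closedBall x R)).of_isClosed_subset
        (hcl 0) ?_
      intro γ hγ t _
      exact hγ.1 t
  obtain ⟨γ, hγ⟩ := hne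
  rw [mem_iInter] at hγ
  refine ⟨γ, (hγ 0).2.1, (hγ 0).2.2.1, (hγ 0).2.2.2.1, fun s hs t ht => ?_⟩
  have hlim : Tendsto (fun n => infDist (γ t) (frontier Ω) *
      (Real.exp ((L + ε n) * |s - t|) - 1)) atTop
      (𝓝 (infDist (γ t) (frontier Ω) * (Real.exp ((L + 0) * |s - t|) - 1))) := by
    have h1 : Tendsto ε atTop (𝓝 0) := tendsto_one_div_add_atTop_nhds_zero_nat
    exact (((Real.continuous_exp.tendsto _).comp
      ((h1.const_add L).mul_const _)).sub_const 1).const_mul _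
  rw [add_zero] at hlim
  exact ge_of_tendsto' hlim fun n => (hγ n).2.2.2.2 s hs t ht

theorem qg_exp_bound {u : ℝ} : Real.exp u - 1 ≤ u * Real.exp u := by
  have h1 := Real.add_one_le_exp (-u)
  have h2 := mul_le_mul_of_nonneg_right h1 (Real.exp_pos u).le
  rw [← Real.exp_add, neg_add_cancel, Real.exp_zero] at h2
  linarith

theorem qg_final {E : Type*} [NormedAddCommGroup E] [NormedSpace ℝ E] {Ω : Set E}
    (hopen : IsOpen Ω) (hfr : (frontier Ω).Nonempty) {x y : E} (hx : x ∈ Ω) {L : ℝ} (hL : 0 ≤ L)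
    {γ : ℝ → E} (h1 : ∀ t ∈ Icc (0:ℝ) 1, γ t ∈ closure Ω) (h2 : γ 0 = x) (h3 : γ 1 = y)
    (h4 : ∀ s ∈ Icc (0:ℝ) 1, ∀ t ∈ Icc (0:ℝ) 1,
        ‖γ s - γ t‖ ≤ infDist (γ t) (frontier Ω) * (Real.exp (L * |s - t|) - 1)) :
    IsRectPath Ω x y γ ∧ qhLength Ω γ ≤ L := by
  have z0 : (0:ℝ) ∈ Icc (0:ℝ) 1 := by simp
  have hdx := qg_infDist_pos hopen hfr hx
  have hdpos : ∀ t ∈ Icc (0:ℝ) 1, 0 < infDist (γ t) (frontier Ω) := by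
    intro t ht
    have a1 := h4 0 z0 t ht
    rw [h2] at a1
    have a2 := infDist_le_infDist_add_dist (x := x) (y := γ t) (s := frontier Ω)
    rw [dist_eq_norm] at a2
    have a3 : 0 < infDist (γ t) (frontier Ω) * Real.exp (L * |0 - t|) := by linarith
    exact pos_of_mul_pos_left a3 (Real.exp_pos _).le
  have hmaps : MapsTo γ (Icc 0 1) Ω := by
    intro t ht
    by_contra hcon
    have hf : γ t ∈ frontier Ω := by
      rw [hopen.frontier_eq]
      exact ⟨h1 t ht, hcon⟩
    have := infDist_zero_of_mem hf
    linarith [hdpos t ht]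
  have hlip : ∀ s ∈ Icc (0:ℝ) 1, ∀ t ∈ Icc (0:ℝ) 1,
      ‖γ s - γ t‖ ≤ infDist (γ t) (frontier Ω) * (L * |s - t| * Real.exp (L * |s - t|)) :=
    fun s hs t ht => (h4 s hs t ht).trans
      (mul_le_mul_of_nonneg_left qg_exp_bound infDist_nonneg)
  have hle1 : ∀ s ∈ Icc (0:ℝ) 1, ∀ t ∈ Icc (0:ℝ) 1, L * |s - t| ≤ L := by
    intro s hs t ht
    refine mul_le_of_le_one_right hL ?_
    rw [abs_le]
    constructor <;> linarith [hs.1, hs.2, ht.1, ht.2]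
  have hbd : ∀ t ∈ Icc (0:ℝ) 1,
      infDist (γ t) (frontier Ω) ≤ infDist x (frontier Ω) * Real.exp L := by
    intro t ht
    have a1 := h4 t ht 0 z0
    rw [h2] at a1
    have a2 := infDist_le_infDist_add_dist (x := γ t) (y := x) (s := frontier Ω)
    rw [dist_eq_norm] at a2
    have a3 := mul_le_mul_of_nonneg_left (Real.exp_le_exp.2 (hle1 t ht 0 z0)) hdx.le
    linarith
  refine ⟨⟨⟨Real.toNNReal (infDist x (frontier Ω) * Real.exp L * (L * Real.exp L)), ?_⟩,
    hmaps, h2, h3⟩, ?_⟩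
  · refine LipschitzOnWith.of_dist_le_mul fun s hs t ht => ?_
    rw [Real.coe_toNNReal _ (by positivity), dist_eq_norm, Real.dist_eq]
    calc ‖γ s - γ t‖ ≤ infDist (γ t) (frontier Ω) * (L * |s - t| * Real.exp (L * |s - t|)) :=
          hlip s hs t ht
      _ ≤ (infDist x (frontier Ω) * Real.exp L) * (L * |s - t| * Real.exp L) := by
          have := hbd t ht
          have := hle1 s hs t ht
          gcongr
      _ = _ := by ring
  · have hder : ∀ t ∈ Ioo (0:ℝ) 1, ‖deriv γ t‖ ≤ infDist (γ t) (frontier Ω) * L := by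
      intro t ht
      have htI : t ∈ Icc (0:ℝ) 1 := ⟨ht.1.le, ht.2.le⟩
      have key : ∀ δ > 0, ‖deriv γ t‖ ≤ infDist (γ t) (frontier Ω) * L * Real.exp (L * δ) := by
        intro δ hδ
        refine norm_deriv_le_of_lip' (mul_nonneg (mul_nonneg infDist_nonneg hL)
          (Real.exp_pos _).le) ?_
        filter_upwards [Icc_mem_nhds ht.1 ht.2, ball_mem_nhds t hδ] with s hs hsb
        rw [mem_ball, Real.dist_eq] at hsb
        rw [Real.norm_eq_abs]
        calc ‖γ s - γ t‖ ≤ infDist (γ t) (frontier Ω) * (L * |s - t| * Real.exp (L * |s - t|)) :=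
              hlip s hs t htI
          _ ≤ infDist (γ t) (frontier Ω) * (L * |s - t| * Real.exp (L * δ)) := by
              have := (hdpos t htI).le
              gcongr
          _ = _ := by ring
      have hlim : Tendsto (fun δ : ℝ => infDist (γ t) (frontier Ω) * L * Real.exp (L * δ))
          (𝓝[>] 0) (𝓝 (infDist (γ t) (frontier Ω) * L * Real.exp (L * 0))) := by
        refine (Continuous.tendsto ?_ 0).mono_left nhdsWithin_le_nhds
        fun_prop
      rw [mul_zero, Real.exp_zero, mul_one] at hlim
      exact ge_of_tendsto hlim (by
        filter_upwards [self_mem_nhdsWithin] with δ hδ using key δ hδ)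
    have := intervalIntegral.norm_integral_le_of_norm_le_const_ae (a := (0:ℝ)) (b := 1) (C := L)
      (f := fun t => ‖deriv γ t‖ / infDist (γ t) (frontier Ω)) (by
        have b3 : ∀ᵐ t : ℝ, t ≠ 1 := by simp [ae_iff]
        filter_upwards [b3] with t h3 ht
        rw [uIoc_of_le zero_le_one] at ht
        have hI : t ∈ Ioo (0:ℝ) 1 := ⟨ht.1, lt_of_le_of_ne ht.2 h3⟩
        have hp := hdpos t ⟨ht.1.le, ht.2⟩
        rw [Real.norm_eq_abs, abs_of_nonneg (div_nonneg (norm_nonneg _) hp.le), div_le_iff₀ hp,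
          mul_comm]
        exact hder t hI)
    simp only [sub_zero, abs_one, mul_one] at this
    exact (le_abs_self _).trans this

/-- existence of quasihyperbolic geodesics in proper subdomains of `ℝⁿ`. -/
theorem qh_geodesic_exists (n : ℕ) (hn : 2 ≤ n) (Ω : Set (EuclideanSpace ℝ (Fin n)))
    (hopen : IsOpen Ω) (hconn : IsConnected Ω) (hproper : Ω ≠ univ)
    (x y : EuclideanSpace ℝ (Fin n)) (hx : x ∈ Ω) (hy : y ∈ Ω) :
    ∃ γ : ℝ → EuclideanSpace ℝ (Fin n),
      IsRectPath Ω x y γ ∧ qhLength Ω γ = qhDist Ω x y := by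
  have hfr : (frontier Ω).Nonempty := nonempty_frontier_iff.2 ⟨⟨x, hx⟩, hproper⟩
  have hne : (qhLength Ω '' {γ | IsRectPath Ω x y γ}).Nonempty := by
    obtain ⟨γ, hγ⟩ := qg_exists hopen hconn hx hy
    exact ⟨_, γ, hγ, rfl⟩
  have hnn : ∀ l ∈ qhLength Ω '' {γ | IsRectPath Ω x y γ}, 0 ≤ l := by
    rintro _ ⟨γ, -, rfl⟩
    exact qg_length_nonneg Ω γ
  have hL : 0 ≤ qhDist Ω x y := le_csInf hne hnn
  have happ : ∀ ε > 0, ∃ σ, IsRectPath Ω x y σ ∧ qhLength Ω σ < qhDist Ω x y + ε := by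
    intro ε hε
    obtain ⟨_, ⟨σ, hσ, rfl⟩, hlt⟩ := Real.lt_sInf_add_pos hne hε
    exact ⟨σ, hσ, hlt⟩
  obtain ⟨γ, g1, g2, g3, g4⟩ := qg_limit hopen hfr hL happ
  obtain ⟨f1, f2⟩ := qg_final hopen hfr hx hL g1 g2 g3 g4
  exact ⟨γ, f1, le_antisymm f2 (csInf_le ⟨0, hnn⟩ ⟨γ, f1, rfl⟩)⟩
end

section
/- Let n ≥ 2, Ω = ℝⁿ \ {0}, and x ∈ Ω. Then the quasihyperbolic ball B_k(x,r) = { y ∈ Ω : k_Ω(x,y) < r } is strictly convex for every r ∈ (0,1], and it is not convex for every r > 1. -/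
open Set Metric MeasureTheory

theorem qcc_re_gt {z : ℂ} (hz : z ≠ 0) (h : ‖Complex.log z‖ < 1) : Real.exp (-1) < z.re := by
  have hre : z.re = Real.exp (Complex.log z).re * Real.cos (Complex.log z).im := by
    rw [← Complex.exp_re, Complex.exp_log hz]
  set a := (Complex.log z).re
  set b := (Complex.log z).im
  have hab : a ^ 2 + b ^ 2 < 1 := by
    have h1 : ‖Complex.log z‖ ^ 2 < 1 := by
      have := norm_nonneg (Complex.log z)
      nlinarith
    rw [← Complex.normSq_eq_norm_sq, Complex.normSq_apply] at h1
    nlinarith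
  have ha : -1 < a := by nlinarith [sq_nonneg b]
  have hc := Real.one_sub_sq_div_two_le_cos (x := b)
  have he := Real.quadratic_le_exp_of_nonneg (x := 1 + a) (by linarith)
  have h3 : Real.exp (-1) = Real.exp a * (Real.exp (1 + a))⁻¹ := by
    rw [← Real.exp_neg, ← Real.exp_add]; congr 1; ring
  rw [hre, h3]
  refine mul_lt_mul_of_pos_left ?_ (Real.exp_pos _)
  rw [inv_lt_iff_one_lt_mul₀ (Real.exp_pos _)]
  have hq : 1 - (1 + a) + (1 + a) ^ 2 / 2 < Real.cos b := by nlinarith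
  have hp : 0 < 1 - (1 + a) + (1 + a) ^ 2 / 2 := by nlinarith [sq_nonneg a]
  calc (1:ℝ) ≤ (1 + (1 + a) + (1 + a) ^ 2 / 2) * (1 - (1 + a) + (1 + a) ^ 2 / 2) := by
        nlinarith [sq_nonneg ((1 + a) ^ 2)]
    _ < (1 + (1 + a) + (1 + a) ^ 2 / 2) * Real.cos b := by
        apply mul_lt_mul_of_pos_left hq; nlinarith [sq_nonneg (1 + a)]
    _ ≤ _ := by
      rw [mul_comm (Real.cos b)]
      exact mul_le_mul_of_nonneg_right he (by linarith)

theorem qcc_re_log {z : ℂ} (h : Real.exp (-1) < z.re) : -1 < (Complex.log z).re := by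
  rw [Complex.log_re, Real.lt_log_iff_exp_lt]
  · exact h.trans_le (Complex.re_le_norm z)
  · exact norm_pos_iff.2 (by rintro rfl; simp at h; linarith [Real.exp_pos (-1)])

theorem qcc_quasi {r : ℝ} {z₁ z₂ : ℂ} (h₁ : Real.exp (-1) < z₁.re) (h₂ : Real.exp (-1) < z₂.re)
    (k₁ : ‖Complex.log z₁‖ < r) (k₂ : ‖Complex.log z₂‖ < r) {t : ℝ} (ht : t ∈ Icc (0:ℝ) 1) :
    ‖Complex.log (z₁ + t * (z₂ - z₁))‖ < r := by
  by_cases hc : z₂ - z₁ = 0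
  · simpa [hc] using k₁
  set c := z₂ - z₁ with hcdef
  set P : ℝ → ℂ := fun s => z₁ + s * c with hP
  set S : Set ℝ := {s | Real.exp (-1) < (P s).re} with hS
  have hPc : Continuous P := by fun_prop
  have hSo : IsOpen S := isOpen_lt continuous_const (Complex.continuous_re.comp hPc)
  have hIS : Icc (0:ℝ) 1 ⊆ S := by
    intro s hs
    simp only [hS, hP, hcdef, mem_ofPred_eq, Complex.add_re, Complex.re_ofReal_mul, Complex.sub_re]
    nlinarith [hs.1, hs.2, mul_nonneg hs.1 (sub_pos.2 h₂).le, mul_nonneg (sub_nonneg.2 hs.2) (sub_pos.2 h₁).le]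
  have hslit : ∀ s ∈ S, P s ∈ Complex.slitPlane := fun s hs =>
    Or.inl ((Real.exp_pos _).trans hs)
  have hPd : ∀ s, HasDerivAt P c s := by
    intro s
    have := ((Complex.ofRealCLM.hasDerivAt (x := s)).mul_const c).const_add z₁
    simpa [hP] using this
  have hw : ∀ s ∈ S, HasDerivAt (fun s => Complex.log (P s)) (c / P s) s := fun s hs =>
    (hPd s).clog_real (hslit s hs)
  have hw' : ∀ s ∈ S, HasDerivAt (fun s => c / P s) (-(c / P s) ^ 2) s := by
    intro s hs
    have hne := Complex.slitPlane_ne_zero (hslit s hs)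
    have := (hasDerivAt_const s c).div (hPd s) hne
    refine this.congr_deriv ?_
    field_simp; simp
  have hre : ∀ {g : ℝ → ℂ} {g' : ℂ} {s : ℝ}, HasDerivAt g g' s →
      HasDerivAt (fun s => (g s).re) g'.re s := fun h =>
    (Complex.reCLM.hasFDerivAt.comp_hasDerivAt _ h)
  have him : ∀ {g : ℝ → ℂ} {g' : ℂ} {s : ℝ}, HasDerivAt g g' s →
      HasDerivAt (fun s => (g s).im) g'.im s := fun h =>
    (Complex.imCLM.hasFDerivAt.comp_hasDerivAt _ h)
  set f : ℝ → ℝ := fun s => (Complex.log (P s)).re ^ 2 + (Complex.log (P s)).im ^ 2 with hf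
  set f1 : ℝ → ℝ := fun s => 2 * ((Complex.log (P s)).re * (c / P s).re
    + (Complex.log (P s)).im * (c / P s).im) with hf1
  have hfd : ∀ s ∈ S, HasDerivAt f (f1 s) s := by
    intro s hs
    have := ((hre (hw s hs)).pow 2).add ((him (hw s hs)).pow 2)
    refine this.congr_deriv ?_
    simp only [hf1]; push_cast; ring
  have hfd1 : ∀ s ∈ S, HasDerivAt f1 (2 * (((c / P s).re * (c / P s).re
      + (Complex.log (P s)).re * (-(c / P s) ^ 2).re) + ((c / P s).im * (c / P s).im
      + (Complex.log (P s)).im * (-(c / P s) ^ 2).im))) s := by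
    intro s hs
    exact (((hre (hw s hs)).mul (hre (hw' s hs))).add ((him (hw s hs)).mul (him (hw' s hs)))).const_mul 2
  have hfn : ∀ s, f s = ‖Complex.log (P s)‖ ^ 2 := by
    intro s
    rw [← Complex.normSq_eq_norm_sq, Complex.normSq_apply]; simp only [hf]; ring
  have hr : 0 < r := (norm_nonneg _).trans_lt k₁
  suffices hmain : f t < r ^ 2 by
    rw [hfn] at hmain
    exact lt_of_pow_lt_pow_left₀ 2 hr.le hmain
  have hfc : ContinuousOn f (Icc 0 1) := fun s hs =>
    (hfd s (hIS hs)).continuousAt.continuousWithinAt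
  obtain ⟨m, hm, hmax⟩ := isCompact_Icc.exists_isMaxOn ⟨t, ht⟩ hfc
  refine lt_of_le_of_lt (hmax ht) ?_
  rcases eq_or_lt_of_le hm.1 with h0 | h0
  · rw [← h0, hfn]
    have : P 0 = z₁ := by simp [hP]
    rw [this]; exact pow_lt_pow_left₀ k₁ (norm_nonneg _) (by norm_num)
  rcases eq_or_lt_of_le hm.2 with h1 | h1
  · rw [h1, hfn]
    have : P 1 = z₂ := by simp [hP, hcdef]
    rw [this]; exact pow_lt_pow_left₀ k₂ (norm_nonneg _) (by norm_num)
  exfalso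
  have hmS := hIS hm
  have hlm : IsLocalMax f m := hmax.isLocalMax (Icc_mem_nhds h0 h1)
  have hd0 : deriv f m = 0 := hlm.deriv_eq_zero
  have hev : deriv f =ᶠ[nhds m] f1 := by
    filter_upwards [hSo.mem_nhds hmS] with s hs using (hfd s hs).deriv
  have hdd := hev.deriv_eq.trans (hfd1 m hmS).deriv
  have hcrit : f1 m = 0 := by rw [← hd0, (hfd m hmS).deriv]
  have hne : c / P m ≠ 0 := div_ne_zero hc (Complex.slitPlane_ne_zero (hslit m hmS))
  have hlog := qcc_re_log hmS
  have hpos : deriv (deriv f) m > 0 := by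
    rw [hdd]
    simp only [hf1] at hcrit
    have hn : 0 < (c / P m).re ^ 2 + (c / P m).im ^ 2 := by
      have := Complex.normSq_pos.2 hne
      rw [Complex.normSq_apply] at this; nlinarith
    generalize (Complex.log (P m)).re = a at *
    generalize (Complex.log (P m)).im = b at *
    simp only [Complex.neg_re, Complex.neg_im, pow_two, Complex.mul_re, Complex.mul_im] at *
    generalize (c / P m).re = p at *
    generalize (c / P m).im = q at *
    have : 0 < (p * p + q * q) * (1 + a) := mul_pos hn (by linarith)
    have e : a * p * p = - (b * q * p) := by linear_combination p / 2 * hcrit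
    nlinarith
  have hmin := isLocalMin_of_deriv_deriv_pos hpos hd0 (hfd m hmS).continuousAt
  have hconst : f =ᶠ[nhds m] fun _ => f m := by
    filter_upwards [hlm, hmin] with s a b using le_antisymm a b
  have h5 : deriv f =ᶠ[nhds m] deriv (fun _ => f m) := hconst.deriv
  have := h5.deriv_eq
  simp at this
  linarith

theorem frontier_unique {V : Type*} [NormedAddCommGroup V] [NormedSpace ℝ V] {G : Set V}
    (hc : Convex ℝ G) (ho : IsOpen G) (hb : Bornology.IsBounded G) {x : V} (hx : x ∈ G) {v : V}
    (hv : v ≠ 0) : ∃! p : V, p ∈ frontier G ∧ ∃ t : ℝ, 0 < t ∧ p = x + t • v := by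
  set s : Set V := (fun y => x + y) ⁻¹' G with hs
  have hsc : Convex ℝ s := hc.translate_preimage_right x
  have hs0 : s ∈ nhds (0:V) := (ho.preimage (by fun_prop)).mem_nhds (by simpa [hs] using hx)
  have hsb : Bornology.IsBounded s := by
    have := hb.vadd (-x)
    convert this using 1
    ext y; simp [hs, mem_vadd_set_iff_neg_vadd_mem]
  have hfr : ∀ y, x + y ∈ frontier G ↔ gauge s y = 1 := by
    intro y
    rw [gauge_eq_one_iff_mem_frontier hsc hs0]
    have := (Homeomorph.addLeft x).preimage_frontier G
    rw [show s = (Homeomorph.addLeft x) ⁻¹' G from rfl, ← this]; rfl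
  have hg : 0 < gauge s v := (gauge_pos (absorbent_nhds_zero hs0)
    ((NormedSpace.isVonNBounded_iff ℝ).2 hsb)).2 hv
  refine ⟨x + (gauge s v)⁻¹ • v, ⟨(hfr _).2 ?_, _, inv_pos.2 hg, rfl⟩, ?_⟩
  · rw [gauge_smul_of_nonneg (inv_pos.2 hg).le, smul_eq_mul, inv_mul_cancel₀ hg.ne']
  · rintro _ ⟨hp, t, ht, rfl⟩
    rw [hfr, gauge_smul_of_nonneg ht.le, smul_eq_mul] at hp
    rw [eq_inv_of_mul_eq_one_left hp]


noncomputable section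
def Zc {V : Type*} [NormedAddCommGroup V] [InnerProductSpace ℝ V] (x y : V) : ℂ :=
  ⟨inner ℝ x y / ‖x‖ ^ 2, ‖y - (inner ℝ x y / ‖x‖ ^ 2) • x‖ / ‖x‖⟩
end

section
variable {V : Type*} [NormedAddCommGroup V] [InnerProductSpace ℝ V]

theorem Zc_im_sq {x : V} (hx : x ≠ 0) (y : V) :
    (Zc x y).im ^ 2 = ‖y‖ ^ 2 / ‖x‖ ^ 2 - (Zc x y).re ^ 2 := by
  have h := norm_pos_iff.2 hx
  simp only [Zc, div_pow]
  rw [norm_sub_sq_real, inner_smul_right, norm_smul, mul_pow, real_inner_comm]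
  simp only [Real.norm_eq_abs, sq_abs]
  field_simp
  ring

theorem Zc_norm {x : V} (hx : x ≠ 0) (y : V) : ‖Zc x y‖ = ‖y‖ / ‖x‖ := by
  rw [← sq_eq_sq₀ (norm_nonneg _) (by positivity), ← Complex.normSq_eq_norm_sq,
    Complex.normSq_apply, div_pow]
  have := Zc_im_sq hx y
  nlinarith

theorem Zc_ne {x y : V} (hx : x ≠ 0) (hy : y ≠ 0) : Zc x y ≠ 0 := by
  rw [← norm_pos_iff, Zc_norm hx]
  have := norm_pos_iff.2 hx; have := norm_pos_iff.2 hy; positivity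

theorem Zc_im_nonneg (x y : V) : 0 ≤ (Zc x y).im := by
  simp only [Zc]; positivity

theorem Zc_arg {x y : V} (hx : x ≠ 0) (hy : y ≠ 0) :
    (Zc x y).arg = InnerProductGeometry.angle x y := by
  rw [Complex.arg_of_im_nonneg_of_ne_zero (Zc_im_nonneg x y) (Zc_ne hx hy), Zc_norm hx,
    InnerProductGeometry.angle]
  have := norm_pos_iff.2 hx; have := norm_pos_iff.2 hy
  congr 1
  simp only [Zc]; field_simp

theorem Zc_sub_one {x : V} (hx : x ≠ 0) (y : V) : ‖Zc x y - 1‖ = ‖y - x‖ / ‖x‖ := by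
  have h := norm_pos_iff.2 hx
  rw [← sq_eq_sq₀ (norm_nonneg _) (by positivity), ← Complex.normSq_eq_norm_sq,
    Complex.normSq_apply, div_pow, norm_sub_sq_real]
  have := Zc_im_sq hx y
  have h2 : (Zc x y).re = inner ℝ y x / ‖x‖ ^ 2 := by simp only [Zc, real_inner_comm]
  have h3 : (‖y‖ ^ 2 - 2 * inner ℝ y x + ‖x‖ ^ 2) / ‖x‖ ^ 2 =
    ‖y‖ ^ 2 / ‖x‖ ^ 2 - 2 * (Zc x y).re + 1 := by rw [h2]; field_simp
  rw [h3]
  simp only [Complex.sub_re, Complex.one_re, Complex.sub_im, Complex.one_im, sub_zero]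
  nlinarith

theorem Zc_log_sq {x y : V} (hx : x ≠ 0) (hy : y ≠ 0) : ‖Complex.log (Zc x y)‖ ^ 2 =
    (Real.log (‖y‖ / ‖x‖)) ^ 2 + (InnerProductGeometry.angle x y) ^ 2 := by
  rw [← Complex.normSq_eq_norm_sq, Complex.normSq_apply, Complex.log_re, Complex.log_im,
    Zc_norm hx, Zc_arg hx hy]; ring

/-- local estimate -/
theorem Zc_log_le {x y : V} (hx : x ≠ 0) (h : ‖y - x‖ / ‖x‖ ≤ 1 / 2) :
    ‖Complex.log (Zc x y)‖ ≤ (‖y - x‖ / ‖x‖) * (1 + ‖y - x‖ / ‖x‖) := by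
  have h0 := Zc_sub_one hx y
  have h1 : ‖Zc x y - 1‖ < 1 := by rw [h0]; linarith
  have := Complex.norm_log_one_add_le h1
  rw [add_sub_cancel, h0] at this
  have hp : 0 ≤ ‖y - x‖ / ‖x‖ := by positivity
  generalize ‖y - x‖ / ‖x‖ = q at *
  have hi : (1 - q)⁻¹ ≤ 2 := by
    rw [inv_le_comm₀ (by linarith) (by norm_num)]; linarith
  nlinarith [mul_le_mul_of_nonneg_left hi (sq_nonneg q)]

/-- calibration -/
noncomputable def calib (x : V) (a b : ℝ) (y : V) : ℝ :=
  a * Real.log ‖y‖ + b * InnerProductGeometry.angle x y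

theorem calib_sub {x y z : V} (hy : y ≠ 0) (hz : z ≠ 0) {a b : ℝ}
    (hb : 0 ≤ b) (hab : a ^ 2 + b ^ 2 ≤ 1) :
    calib x a b z - calib x a b y ≤ ‖Complex.log (Zc y z)‖ := by
  have h1 : InnerProductGeometry.angle x z - InnerProductGeometry.angle x y ≤
      InnerProductGeometry.angle y z := by
    linarith [InnerProductGeometry.angle_le_angle_add_angle x y z]
  have h2 : calib x a b z - calib x a b y ≤ a * Real.log (‖z‖ / ‖y‖) +
      b * InnerProductGeometry.angle y z := by
    rw [Real.log_div (norm_ne_zero_iff.2 hz) (norm_ne_zero_iff.2 hy)]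
    simp only [calib]
    nlinarith [mul_le_mul_of_nonneg_left h1 hb]
  refine h2.trans ?_
  refine le_of_abs_le (abs_le_of_sq_le_sq ?_ (norm_nonneg _))
  rw [Zc_log_sq hy hz]
  generalize Real.log (‖z‖ / ‖y‖) = p
  generalize InnerProductGeometry.angle y z = q
  nlinarith [sq_nonneg (a * q - b * p), mul_nonneg (sub_nonneg.2 hab) (add_nonneg (sq_nonneg p) (sq_nonneg q))]

theorem abs_calib_sub {x y z : V} (hy : y ≠ 0) (hz : z ≠ 0) {a b : ℝ}
    (hb : 0 ≤ b) (hab : a ^ 2 + b ^ 2 ≤ 1) :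
    |calib x a b z - calib x a b y| ≤ ‖Complex.log (Zc y z)‖ := by
  rw [abs_le]
  refine ⟨?_, calib_sub hy hz hb hab⟩
  have h := calib_sub (x := x) hz hy hb hab
  have : ‖Complex.log (Zc z y)‖ = ‖Complex.log (Zc y z)‖ := by
    rw [← sq_eq_sq₀ (norm_nonneg _) (norm_nonneg _), Zc_log_sq hy hz, Zc_log_sq hz hy,
      InnerProductGeometry.angle_comm, ← inv_div, Real.log_inv]; ring
  linarith

/-- global crude Lipschitz bound -/
theorem Zc_log_lip {m : ℝ} (hm : 0 < m) {y z : V} (hy : m ≤ ‖y‖) (hz : m ≤ ‖z‖) :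
    ‖Complex.log (Zc y z)‖ ≤ (2 * Real.pi + 1) / m * ‖z - y‖ := by
  have hy0 : y ≠ 0 := norm_pos_iff.1 (hm.trans_le hy)
  have hz0 : z ≠ 0 := norm_pos_iff.1 (hm.trans_le hz)
  have hyp := norm_pos_iff.2 hy0
  have hzp := norm_pos_iff.2 hz0
  have hpi := Real.pi_gt_three
  have hq : ‖z - y‖ / ‖y‖ ≤ ‖z - y‖ / m := by gcongr
  rcases le_or_gt (‖z - y‖ / ‖y‖) (1 / 2) with h | h
  · refine (Zc_log_le hy0 h).trans ?_
    have e : (2 * Real.pi + 1) / m * ‖z - y‖ = (2 * Real.pi + 1) * (‖z - y‖ / m) := by ring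
    rw [e]
    have hp : 0 ≤ ‖z - y‖ / ‖y‖ := by positivity
    nlinarith
  · have h1 : ‖Complex.log (Zc y z)‖ ≤ |Real.log (‖z‖ / ‖y‖)| + |InnerProductGeometry.angle y z| := by
      have := Complex.norm_le_abs_re_add_abs_im (Complex.log (Zc y z))
      rwa [Complex.log_re, Complex.log_im, Zc_norm hy0, Zc_arg hy0 hz0] at this
    have h2 : |InnerProductGeometry.angle y z| ≤ 2 * Real.pi * (‖z - y‖ / m) := by
      rw [abs_of_nonneg (InnerProductGeometry.angle_nonneg _ _)]
      have := InnerProductGeometry.angle_le_pi y z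
      nlinarith
    have h4 : ∀ u w : V, m ≤ ‖u‖ → m ≤ ‖w‖ → Real.log (‖u‖ / ‖w‖) ≤ ‖u - w‖ / m := by
      intro u w hu hw
      have hup := hm.trans_le hu
      have hwp := hm.trans_le hw
      have := Real.log_le_sub_one_of_pos (div_pos hup hwp)
      have h6 : ‖u‖ / ‖w‖ - 1 = (‖u‖ - ‖w‖) / ‖w‖ := by field_simp
      have h7 : (‖u‖ - ‖w‖) / ‖w‖ ≤ ‖u - w‖ / ‖w‖ := by gcongr; exact norm_sub_norm_le u w
      have h8 : ‖u - w‖ / ‖w‖ ≤ ‖u - w‖ / m := by gcongr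
      linarith
    have h3 : |Real.log (‖z‖ / ‖y‖)| ≤ ‖z - y‖ / m := by
      rw [abs_le]
      refine ⟨?_, h4 z y hz hy⟩
      have := h4 y z hy hz
      rw [norm_sub_rev, ← inv_div, Real.log_inv] at this
      linarith
    rw [div_mul_eq_mul_div, mul_div_assoc]
    linarith
end

section
variable {V : Type*} [NormedAddCommGroup V] [InnerProductSpace ℝ V]

theorem calib_deriv_le {x : V} {a b : ℝ} (hb : 0 ≤ b) (hab : a ^ 2 + b ^ 2 ≤ 1)
    {γ : ℝ → V} {t : ℝ} {v : V} {g' : ℝ} (hγ : HasDerivAt γ v t) (h0 : γ t ≠ 0)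
    (hg : HasDerivAt (fun s => calib x a b (γ s)) g' t) : g' ≤ ‖v‖ / ‖γ t‖ := by
  refine (le_abs_self g').trans ?_
  have h1 := (hasDerivAt_iff_tendsto_slope.1 hg).norm
  have h2 := (hasDerivAt_iff_tendsto_slope.1 hγ).norm
  have hc : Filter.Tendsto γ (nhdsWithin t {t}ᶜ) (nhds (γ t)) :=
    hγ.continuousAt.tendsto.mono_left nhdsWithin_le_nhds
  have hq : Filter.Tendsto (fun s => ‖γ s - γ t‖ / ‖γ t‖) (nhdsWithin t {t}ᶜ) (nhds 0) := by
    have := ((hc.sub_const (γ t)).norm).div_const ‖γ t‖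
    simpa using this
  have h3 := (h2.div_const ‖γ t‖).mul (hq.const_add 1)
  rw [add_zero, mul_one] at h3
  refine le_of_tendsto_of_tendsto h1 h3 ?_
  have hne : ∀ᶠ s in nhdsWithin t {t}ᶜ, γ s ≠ 0 := hc.eventually_ne h0
  have hhalf : ∀ᶠ s in nhdsWithin t {t}ᶜ, ‖γ s - γ t‖ / ‖γ t‖ ≤ 1 / 2 :=
    (hq.eventually_lt_const (by norm_num)).mono fun _ h => h.le
  filter_upwards [hne, hhalf] with s hs hh
  have h4 := (abs_calib_sub (x := x) h0 hs hb hab).trans (Zc_log_le h0 hh)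
  rw [slope_def_module, slope_def_module, norm_smul, norm_smul, Real.norm_eq_abs (_ - _)]
  calc _ ≤ ‖(s - t)⁻¹‖ * (‖γ s - γ t‖ / ‖γ t‖ * (1 + ‖γ s - γ t‖ / ‖γ t‖)) := by gcongr
    _ = _ := by ring

theorem qh_frontier [Nontrivial V] : frontier ({0}ᶜ : Set V) = {0} := by
  rw [frontier_compl, frontier, interior_singleton, closure_singleton, sdiff_empty]

theorem qh_lower_s4 [FiniteDimensional ℝ V] [Nontrivial V] {x y : V} {γ : ℝ → V} (hx : x ≠ 0)
    (h : IsRectPath ({0}ᶜ : Set V) x y γ) :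
    ‖Complex.log (Zc x y)‖ ≤ qhLength ({0}ᶜ : Set V) γ := by
  obtain ⟨⟨K, hK⟩, hmaps, h0, h1⟩ := h
  have hne : ∀ t ∈ Icc (0:ℝ) 1, γ t ≠ 0 := fun t ht => hmaps ht
  have hy : y ≠ 0 := h1 ▸ hne 1 (by simp)
  obtain ⟨τ, hτ, hmin⟩ := isCompact_Icc.exists_isMinOn (f := fun t => ‖γ t‖) ⟨0, by simp⟩
    hK.continuousOn.norm
  set m := ‖γ τ‖
  have hm : 0 < m := norm_pos_iff.2 (hne τ hτ)
  have hle : ∀ t ∈ Icc (0:ℝ) 1, m ≤ ‖γ t‖ := fun t ht => hmin ht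
  -- the integrand
  simp only [qhLength, qh_frontier, infDist_singleton, dist_zero_right]
  have hint : IntervalIntegrable (fun t => ‖deriv γ t‖ / ‖γ t‖) volume 0 1 := by
    rw [intervalIntegrable_iff_integrableOn_Ioo_of_le (by norm_num)]
    refine Integrable.of_bound (C := K / m) ?_ ?_
    · refine AEMeasurable.aestronglyMeasurable ?_
      refine AEMeasurable.div ?_ ?_
      · exact (stronglyMeasurable_deriv γ).norm.measurable.aemeasurable
      · exact (hK.continuousOn.norm.mono Ioo_subset_Icc_self).aemeasurable measurableSet_Ioo
    · filter_upwards [ae_restrict_mem measurableSet_Ioo] with t ht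
      have h3 := norm_deriv_le_of_lipschitzOn (Icc_mem_nhds ht.1 ht.2) hK
      have h4 := hle t (Ioo_subset_Icc_self ht)
      rw [Real.norm_of_nonneg (by positivity)]
      gcongr
  rcases eq_or_ne (‖Complex.log (Zc x y)‖) 0 with hz | hz
  · rw [hz]
    exact intervalIntegral.integral_nonneg (by norm_num) fun t _ => by positivity
  set L := ‖Complex.log (Zc x y)‖ with hL
  have hLp : 0 < L := lt_of_le_of_ne (norm_nonneg _) hz.symm
  have hL2 := Zc_log_sq hx hy
  rw [← hL] at hL2
  set a := Real.log (‖y‖ / ‖x‖) / L with ha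
  set b := InnerProductGeometry.angle x y / L with hb
  have hb0 : 0 ≤ b := div_nonneg (InnerProductGeometry.angle_nonneg _ _) hLp.le
  have hab : a ^ 2 + b ^ 2 ≤ 1 := by
    rw [ha, hb, div_pow, div_pow, ← add_div, ← hL2, div_self (by positivity)]
  set g : ℝ → ℝ := fun t => calib x a b (γ t) with hg
  have hgl : LipschitzOnWith (Real.toNNReal ((2 * Real.pi + 1) / m) * K) g (Icc 0 1) := by
    refine LipschitzOnWith.of_dist_le_mul fun s hs t ht => ?_
    have hpi := Real.pi_pos
    rw [NNReal.coe_mul, Real.coe_toNNReal _ (by positivity), mul_assoc, Real.dist_eq]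
    refine (abs_calib_sub (hne t ht) (hne s hs) hb0 hab).trans ?_
    refine (Zc_log_lip hm (hle t ht) (hle s hs)).trans ?_
    have := hK.dist_le_mul s hs t ht
    rw [dist_eq_norm] at this
    gcongr
  have hac : AbsolutelyContinuousOnInterval g 0 1 :=
    LipschitzOnWith.absolutelyContinuousOnInterval (by rwa [uIcc_of_le zero_le_one])
  have hftc := hac.integral_deriv_eq_sub
  have hg01 : g 1 - g 0 = L := by
    simp only [hg, h0, h1, calib, InnerProductGeometry.angle_self hx]
    have : a * Real.log ‖y‖ + b * InnerProductGeometry.angle x y - (a * Real.log ‖x‖ + b * 0)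
      = a * Real.log (‖y‖ / ‖x‖) + b * InnerProductGeometry.angle x y := by
      rw [Real.log_div (norm_ne_zero_iff.2 hy) (norm_ne_zero_iff.2 hx)]; ring
    rw [this, ha, hb]
    field_simp
    linarith
  rw [← hg01, ← hftc]
  refine intervalIntegral.integral_mono_ae_restrict (by norm_num) hac.intervalIntegrable_deriv hint ?_
  rw [← restrict_Ioo_eq_restrict_Icc]
  have hd1 := hac.ae_differentiableAt
  have hd2 := hK.ae_differentiableWithinAt_of_mem_real
  filter_upwards [ae_restrict_mem measurableSet_Ioo, ae_restrict_of_ae hd1,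
    ae_restrict_of_ae hd2] with t ht k1 k2
  have ht' := Ioo_subset_Icc_self ht
  have k3 := (k2 ht').differentiableAt (Icc_mem_nhds ht.1 ht.2)
  have k4 := k1 (by rwa [uIcc_of_le zero_le_one])
  exact calib_deriv_le hb0 hab k3.hasDerivAt (hne t ht') k4.hasDerivAt

theorem qh_spiral [Nontrivial V] {e f : V} (he : ‖e‖ = 1) (hf : ‖f‖ = 1)
    (hef : inner ℝ e f = 0) {ρ : ℝ} (hρ : 0 < ρ) (l α : ℝ) :
    ∃ γ, IsRectPath ({0}ᶜ : Set V) (ρ • e)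
      ((ρ * Real.exp l) • (Real.cos α • e + Real.sin α • f)) γ ∧
      qhLength ({0}ᶜ : Set V) γ = √(l ^ 2 + α ^ 2) := by
  have hnorm : ∀ p q : ℝ, ‖p • e + q • f‖ ^ 2 = p ^ 2 + q ^ 2 := by
    intro p q
    rw [norm_add_sq_real, inner_smul_left, inner_smul_right, hef, norm_smul, norm_smul, he, hf]
    simp
  set γ : ℝ → V := fun t => (ρ * Real.exp (t * l)) •
    (Real.cos (t * α) • e + Real.sin (t * α) • f) with hγ
  have hγn : ∀ t, ‖γ t‖ = ρ * Real.exp (t * l) := by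
    intro t
    rw [← sq_eq_sq₀ (norm_nonneg _) (by positivity), hγ]
    simp only
    rw [norm_smul, mul_pow, hnorm, add_comm, Real.sin_sq_add_cos_sq]
    simp [abs_of_pos hρ]
  have hγd : ∀ t, HasDerivAt γ ((ρ * Real.exp (t * l)) •
      ((l * Real.cos (t * α) - α * Real.sin (t * α)) • e
        + (l * Real.sin (t * α) + α * Real.cos (t * α)) • f)) t := by
    intro t
    have d1 : HasDerivAt (fun t => ρ * Real.exp (t * l)) (ρ * (Real.exp (t * l) * (1 * l))) t :=
      (((hasDerivAt_id t).mul_const l).exp).const_mul ρ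
    have d2 : HasDerivAt (fun t => Real.cos (t * α)) (-Real.sin (t * α) * (1 * α)) t :=
      ((hasDerivAt_id t).mul_const α).cos
    have d3 : HasDerivAt (fun t => Real.sin (t * α)) (Real.cos (t * α) * (1 * α)) t :=
      ((hasDerivAt_id t).mul_const α).sin
    refine (d1.smul ((d2.smul_const e).add (d3.smul_const f))).congr_deriv ?_
    simp only [Pi.add_apply]
    module
  have hγdn : ∀ t, ‖deriv γ t‖ = ρ * Real.exp (t * l) * √(l ^ 2 + α ^ 2) := by
    intro t
    rw [(hγd t).deriv, norm_smul, Real.norm_of_nonneg (by positivity)]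
    congr 1
    rw [← sq_eq_sq₀ (norm_nonneg _) (by positivity), hnorm, Real.sq_sqrt (by positivity)]
    nlinarith [Real.sin_sq_add_cos_sq (t * α)]
  refine ⟨γ, ⟨⟨Real.toNNReal (ρ * Real.exp |l| * √(l ^ 2 + α ^ 2)), ?_⟩, ?_, ?_, ?_⟩, ?_⟩
  · refine (convex_Icc (0:ℝ) 1).lipschitzOnWith_of_nnnorm_deriv_le
      (fun t _ => (hγd t).differentiableAt) fun t ht => ?_
    rw [← NNReal.coe_le_coe, coe_nnnorm, Real.coe_toNNReal _ (by positivity), hγdn]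
    have : t * l ≤ |l| := by
      have := le_abs_self l
      have := abs_nonneg l
      nlinarith [ht.1, ht.2, mul_le_mul_of_nonneg_left (le_abs_self l) ht.1]
    gcongr
  · intro t _
    have : 0 < ‖γ t‖ := by rw [hγn]; positivity
    exact norm_pos_iff.1 this
  · simp [hγ]
  · simp [hγ]
  · simp only [qhLength, qh_frontier, infDist_singleton, dist_zero_right, hγn, hγdn]
    have : ∀ t : ℝ, ρ * Real.exp (t * l) * √(l ^ 2 + α ^ 2) / (ρ * Real.exp (t * l)) = √(l ^ 2 + α ^ 2) := by
      intro t
      have := Real.exp_pos (t * l)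
      field_simp
    simp [this]
end

section
variable {V : Type*} [NormedAddCommGroup V] [InnerProductSpace ℝ V] [FiniteDimensional ℝ V]

theorem exists_orth (h2 : 2 ≤ Module.finrank ℝ V) (x : V) :
    ∃ f : V, ‖f‖ = 1 ∧ inner ℝ x f = 0 := by
  have hK : (Submodule.span ℝ {x})ᗮ ≠ ⊥ := by
    intro h
    rw [Submodule.orthogonal_eq_bot_iff] at h
    have h3 := finrank_span_le_card (R := ℝ) ({x} : Set V)
    rw [h, finrank_top] at h3
    simp at h3
    omega
  obtain ⟨f, hf, hf0⟩ := Submodule.exists_mem_ne_zero_of_ne_bot hK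
  refine ⟨‖f‖⁻¹ • f, norm_smul_inv_norm hf0, ?_⟩
  rw [inner_smul_right, Submodule.mem_orthogonal_singleton_iff_inner_right.1 hf, mul_zero]

theorem qh_decomp (h2 : 2 ≤ Module.finrank ℝ V) {x y : V} (hx : x ≠ 0) (hy : y ≠ 0) :
    ∃ f : V, ‖f‖ = 1 ∧ inner ℝ (‖x‖⁻¹ • x) f = 0 ∧
      y = (‖x‖ * Real.exp (Real.log (‖y‖ / ‖x‖))) •
        (Real.cos (InnerProductGeometry.angle x y) • (‖x‖⁻¹ • x)
          + Real.sin (InnerProductGeometry.angle x y) • f) := by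
  have hxp := norm_pos_iff.2 hx
  have hyp := norm_pos_iff.2 hy
  set c := inner ℝ x y / ‖x‖ ^ 2 with hc
  set w := y - c • x with hw
  have hxw : inner ℝ x w = 0 := by
    rw [hw, inner_sub_right, inner_smul_right, real_inner_self_eq_norm_sq, hc]
    field_simp; simp
  obtain ⟨f, hf1, hxf, hwf⟩ : ∃ f : V, ‖f‖ = 1 ∧ inner ℝ x f = 0 ∧ w = ‖w‖ • f := by
    by_cases h : w = 0
    · obtain ⟨f, a, b⟩ := exists_orth h2 x
      exact ⟨f, a, b, by simp [h]⟩
    · refine ⟨‖w‖⁻¹ • w, norm_smul_inv_norm h, by rw [inner_smul_right, hxw, mul_zero], ?_⟩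
      rw [smul_smul, mul_inv_cancel₀ (norm_ne_zero_iff.2 h), one_smul]
  refine ⟨f, hf1, by rw [inner_smul_left, hxf, mul_zero], ?_⟩
  have hre : c = ‖Zc x y‖ * Real.cos (Zc x y).arg := by
    rw [Complex.norm_mul_cos_arg]; rfl
  have him : ‖w‖ / ‖x‖ = ‖Zc x y‖ * Real.sin (Zc x y).arg := by
    rw [Complex.norm_mul_sin_arg]; rfl
  rw [Zc_arg hx hy, Zc_norm hx] at hre him
  rw [Real.exp_log (by positivity)]
  generalize Real.cos (InnerProductGeometry.angle x y) = C at *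
  generalize Real.sin (InnerProductGeometry.angle x y) = S at *
  have hw2 : ‖w‖ = ‖y‖ * S := by field_simp at him; linarith
  have e1 : y = c • x + ‖w‖ • f := by rw [← hwf, hw]; abel
  have e2 : (‖x‖ * (‖y‖ / ‖x‖)) • (C • (‖x‖⁻¹ • x) + S • f) =
      (‖x‖ * (‖y‖ / ‖x‖) * C * ‖x‖⁻¹) • x + (‖x‖ * (‖y‖ / ‖x‖) * S) • f := by
    module
  rw [e2]
  conv_lhs => rw [e1]
  congr 2
  · rw [hre]; field_simp
  · rw [hw2]; field_simp

theorem qhDist_le [Nontrivial V] {x y : V} (hx : x ≠ 0) {γ : ℝ → V}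
    (h : IsRectPath ({0}ᶜ : Set V) x y γ) :
    qhDist ({0}ᶜ : Set V) x y ≤ qhLength ({0}ᶜ : Set V) γ := by
  refine csInf_le ⟨‖Complex.log (Zc x y)‖, ?_⟩ ⟨γ, h, rfl⟩
  rintro _ ⟨δ, hδ, rfl⟩
  exact qh_lower_s4 hx hδ

theorem qhDist_eq (h2 : 2 ≤ Module.finrank ℝ V) {x y : V} (hx : x ≠ 0) (hy : y ≠ 0) :
    qhDist ({0}ᶜ : Set V) x y = ‖Complex.log (Zc x y)‖ := by
  haveI : Nontrivial V := ⟨x, 0, hx⟩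
  have hxp := norm_pos_iff.2 hx
  obtain ⟨f, hf, hef, hyeq⟩ := qh_decomp h2 hx hy
  obtain ⟨γ, hγ, hlen⟩ := qh_spiral (V := V) (norm_smul_inv_norm hx) hf hef hxp
    (Real.log (‖y‖ / ‖x‖)) (InnerProductGeometry.angle x y)
  rw [RCLike.ofReal_real_eq_id] at *
  simp only [id] at *
  rw [← hyeq, smul_smul, mul_inv_cancel₀ hxp.ne', one_smul] at hγ
  rw [← Zc_log_sq hx hy, Real.sqrt_sq (norm_nonneg _)] at hlen
  refine le_antisymm (hlen ▸ qhDist_le hx hγ) ?_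
  refine le_csInf ⟨_, γ, hγ, rfl⟩ ?_
  rintro _ ⟨δ, hδ, rfl⟩
  exact qh_lower_s4 hx hδ

theorem qhBall_mem (h2 : 2 ≤ Module.finrank ℝ V) {x y : V} (hx : x ≠ 0) {r : ℝ} :
    y ∈ qhBall ({0}ᶜ : Set V) x r ↔ y ≠ 0 ∧ ‖Complex.log (Zc x y)‖ < r := by
  constructor
  · rintro ⟨h, h'⟩
    exact ⟨h, by rwa [qhDist_eq h2 hx h] at h'⟩
  · rintro ⟨h, h'⟩
    exact ⟨h, by rwa [qhDist_eq h2 hx h]⟩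

theorem qhBall_open (h2 : 2 ≤ Module.finrank ℝ V) {x : V} (hx : x ≠ 0) {r : ℝ} :
    IsOpen (qhBall ({0}ᶜ : Set V) x r) := by
  rw [isOpen_iff_mem_nhds]
  intro y hy
  rw [qhBall_mem h2 hx] at hy
  obtain ⟨hy0, hyr⟩ := hy
  have hr : 0 < r := (norm_nonneg _).trans_lt hyr
  have hc : ContinuousAt (fun z : V => (Real.log (‖z‖ / ‖x‖)) ^ 2
      + (InnerProductGeometry.angle x z) ^ 2) y := by
    have hxp := norm_pos_iff.2 hx
    have hyp := norm_pos_iff.2 hy0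
    have a1 : ContinuousAt (fun z : V => Real.log (‖z‖ / ‖x‖)) y :=
      (continuousAt_id.norm.div_const _).log (div_pos hyp hxp).ne'
    have a2 : ContinuousAt (fun z : V => InnerProductGeometry.angle x z) y :=
      (InnerProductGeometry.continuousAt_angle (x := (x, y)) hx hy0).comp
        (f := fun z : V => (x, z)) (by fun_prop)
    exact (a1.pow 2).add (a2.pow 2)
  have hlt : (Real.log (‖y‖ / ‖x‖)) ^ 2 + (InnerProductGeometry.angle x y) ^ 2 < r ^ 2 := by
    rw [← Zc_log_sq hx hy0]; exact pow_lt_pow_left₀ hyr (norm_nonneg _) (by norm_num)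
  filter_upwards [hc.eventually_lt_const hlt, isOpen_ne.mem_nhds hy0] with z hz hz0
  rw [qhBall_mem h2 hx]
  refine ⟨hz0, ?_⟩
  rw [← Zc_log_sq hx hz0] at hz
  exact lt_of_pow_lt_pow_left₀ 2 hr.le hz

theorem qhBall_bdd (h2 : 2 ≤ Module.finrank ℝ V) {x : V} (hx : x ≠ 0) {r : ℝ} :
    Bornology.IsBounded (qhBall ({0}ᶜ : Set V) x r) := by
  rw [isBounded_iff_forall_norm_le]
  refine ⟨‖x‖ * Real.exp r, fun y hy => ?_⟩
  rw [qhBall_mem h2 hx] at hy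
  have hxp := norm_pos_iff.2 hx
  have hyp := norm_pos_iff.2 hy.1
  have h := (Complex.re_le_norm (Complex.log (Zc x y))).trans hy.2.le
  rw [Complex.log_re, Zc_norm hx, Real.log_le_iff_le_exp (by positivity)] at h
  rw [div_le_iff₀ hxp] at h
  linarith

theorem qhBall_convex (h2 : 2 ≤ Module.finrank ℝ V) {x : V} (hx : x ≠ 0) {r : ℝ} (hr : r ≤ 1) :
    Convex ℝ (qhBall ({0}ᶜ : Set V) x r) := by
  intro y₁ hy₁ y₂ hy₂ a b ha hb hab
  rw [qhBall_mem h2 hx] at *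
  have hxp := norm_pos_iff.2 hx
  have k₁ := qcc_re_gt (Zc_ne hx hy₁.1) (hy₁.2.trans_le hr)
  have k₂ := qcc_re_gt (Zc_ne hx hy₂.1) (hy₂.2.trans_le hr)
  have hq := qcc_quasi k₁ k₂ hy₁.2 hy₂.2 (t := b) ⟨hb, by linarith⟩
  set ζ' := Zc x y₁ + b * (Zc x y₂ - Zc x y₁) with hζ'
  set ζ := Zc x (a • y₁ + b • y₂) with hζ
  have ha' : a = 1 - b := by linarith
  have hre : ζ.re = ζ'.re := by
    simp only [hζ, hζ', Zc, inner_add_right, inner_smul_right, Complex.add_re,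
      Complex.re_ofReal_mul, Complex.sub_re]
    rw [ha']; ring
  have him : ζ.im ≤ ζ'.im := by
    have e : ζ'.im = (a * ‖y₁ - (inner ℝ x y₁ / ‖x‖ ^ 2) • x‖
        + b * ‖y₂ - (inner ℝ x y₂ / ‖x‖ ^ 2) • x‖) / ‖x‖ := by
      simp only [hζ', Zc, Complex.add_im, Complex.im_ofReal_mul, Complex.sub_im]
      rw [ha']; ring
    rw [e]
    simp only [hζ, Zc]
    gcongr
    have e2 : a • y₁ + b • y₂ - (inner ℝ x (a • y₁ + b • y₂) / ‖x‖ ^ 2) • x =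
        a • (y₁ - (inner ℝ x y₁ / ‖x‖ ^ 2) • x) + b • (y₂ - (inner ℝ x y₂ / ‖x‖ ^ 2) • x) := by
      rw [inner_add_right, inner_smul_right, inner_smul_right]; module
    rw [e2]
    refine (norm_add_le _ _).trans ?_
    rw [norm_smul, norm_smul, Real.norm_of_nonneg ha, Real.norm_of_nonneg hb]
  have him0 : 0 ≤ ζ.im := Zc_im_nonneg _ _
  have hre' : Real.exp (-1) < ζ'.re := by
    simp only [hζ', Complex.add_re, Complex.re_ofReal_mul, Complex.sub_re]
    have hb1 : 0 ≤ 1 - b := by linarith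
    nlinarith [mul_nonneg hb (sub_pos.2 k₂).le, mul_nonneg hb1 (sub_pos.2 k₁).le]
  have hep := Real.exp_pos (-1)
  constructor
  · intro h0
    rw [hζ, h0] at hre
    have : (Zc x (0:V)).re = 0 := by simp [Zc]
    linarith
  · rcases eq_or_lt_of_le (him0.trans him) with h | h
    · have : ζ = ζ' := Complex.ext hre (by linarith)
      rwa [this]
    · have hconj : ‖Complex.log ((starRingEnd ℂ) ζ')‖ < r := by
        rw [Complex.log_conj, RCLike.norm_conj]
        · exact hq
        · intro hpi
          rw [Complex.arg_eq_pi_iff] at hpi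
          linarith [hpi.1]
      have := qcc_quasi (z₁ := (starRingEnd ℂ) ζ') (z₂ := ζ') (by simpa using hre') hre' hconj hq
        (t := (ζ.im + ζ'.im) / (2 * ζ'.im)) ⟨by positivity, by
          rw [div_le_one (by positivity)]; linarith⟩
      convert this using 3
      apply Complex.ext
      · simp [Complex.re_ofReal_mul, hre, -Complex.ofReal_div]
      · simp only [Complex.add_im, Complex.im_ofReal_mul, Complex.sub_im, Complex.conj_im]
        field_simp; ring

theorem qhBall_not_convex (h2 : 2 ≤ Module.finrank ℝ V) {x : V} (hx : x ≠ 0) {r : ℝ}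
    (hr : 1 < r) : ¬ Convex ℝ (qhBall ({0}ᶜ : Set V) x r) := by
  intro hconv
  haveI : Nontrivial V := ⟨x, 0, hx⟩
  have hxp := norm_pos_iff.2 hx
  obtain ⟨f, hf, hxf⟩ := exists_orth h2 x
  set e := ‖x‖⁻¹ • x with he
  have hen : ‖e‖ = 1 := norm_smul_inv_norm hx
  have hef : inner ℝ e f = 0 := by rw [he, inner_smul_left, hxf, mul_zero]
  have hxe : ‖x‖ • e = x := by rw [he, smul_smul, mul_inv_cancel₀ hxp.ne', one_smul]
  set s := min (r - 1) 2 with hs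
  have hs0 : 0 < s := lt_min (by linarith) (by norm_num)
  have hs1 : s ≤ r - 1 := min_le_left _ _
  have hs2 : s ≤ 2 := min_le_right _ _
  set δ := s / (2 * (r + 1)) with hδ
  have hδe : δ * (2 * (r + 1)) = s := by rw [hδ]; field_simp
  have hδ0 : 0 < δ := by positivity
  set θ := √(s / 2) with hθ
  have hθ2 : θ ^ 2 = s / 2 := Real.sq_sqrt (by positivity)
  have hθ0 : 0 ≤ θ := Real.sqrt_nonneg _
  have hθ1 : θ ≤ 1 := by nlinarith
  set l := -(r - δ) with hl
  have hlen : l ^ 2 + θ ^ 2 < r ^ 2 := by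
    rw [hθ2, hl]
    have : δ < r - 1 := by nlinarith
    nlinarith
  have hmem : ∀ α : ℝ, α ^ 2 = θ ^ 2 → (‖x‖ * Real.exp l) • (Real.cos α • e + Real.sin α • f) ∈
      qhBall ({0}ᶜ : Set V) x r := by
    intro α hα
    obtain ⟨γ, hγ, hγl⟩ := qh_spiral hen hf hef hxp l α
    rw [hxe] at hγ
    refine ⟨?_, (qhDist_le hx hγ).trans_lt ?_⟩
    · have := hγ.2.1 (show (1:ℝ) ∈ Icc (0:ℝ) 1 by simp)
      rwa [hγ.2.2.2] at this
    · rw [hγl, hα, Real.sqrt_lt' (by linarith)]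
      exact hlen
  have hmid := hconv (hmem θ rfl) (hmem (-θ) (by ring)) (a := 1 / 2) (b := 1 / 2)
    (by norm_num) (by norm_num) (by norm_num)
  have hcos0 : 0 < Real.cos θ := Real.cos_pos_of_mem_Ioo
    ⟨by linarith [Real.pi_gt_three], by linarith [Real.pi_gt_three]⟩
  have heq : (1 / 2 : ℝ) • ((‖x‖ * Real.exp l) • (Real.cos θ • e + Real.sin θ • f))
      + (1 / 2 : ℝ) • ((‖x‖ * Real.exp l) • (Real.cos (-θ) • e + Real.sin (-θ) • f))
      = (Real.exp l * Real.cos θ) • x := by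
    rw [Real.cos_neg, Real.sin_neg]
    conv_rhs => rw [← hxe]
    module
  rw [heq, qhBall_mem h2 hx] at hmid
  have hlt := (abs_le.1 (Complex.abs_re_le_norm
    (Complex.log (Zc x ((Real.exp l * Real.cos θ) • x))))).1
  rw [Complex.log_re, Zc_norm hx, norm_smul, mul_div_assoc, div_self hxp.ne', mul_one,
    Real.norm_of_nonneg (by positivity)] at hlt
  have hlt2 : -r < Real.log (Real.exp l * Real.cos θ) := by linarith [hmid.2]
  rw [Real.lt_log_iff_exp_lt (by positivity)] at hlt2
  have hcos : Real.cos θ ≤ Real.exp (-δ) := by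
    have c1 := Real.cos_le_one_div_sqrt_sq_add_one (x := θ)
      (by linarith [Real.pi_gt_three]) (by linarith [Real.pi_gt_three])
    refine le_of_sq_le_sq ?_ (Real.exp_pos _).le
    have c2 : Real.cos θ ^ 2 ≤ 1 / (θ ^ 2 + 1) := by
      have := pow_le_pow_left₀ hcos0.le c1 2
      rwa [div_pow, one_pow, Real.sq_sqrt (by positivity)] at this
    have c3 : 1 / (θ ^ 2 + 1) ≤ 1 - 2 * δ := by
      rw [div_le_iff₀ (by positivity), hθ2]
      have : 0 ≤ δ * (r - 1 - s) := mul_nonneg hδ0.le (by linarith)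
      nlinarith
    have c4 := Real.add_one_le_exp (-(2 * δ))
    have c5 : Real.exp (-δ) ^ 2 = Real.exp (-(2 * δ)) := by
      rw [← Real.exp_nat_mul]; congr 1; push_cast; ring
    rw [c5]; linarith
  have : Real.exp l * Real.cos θ ≤ Real.exp (-r) := by
    calc _ ≤ Real.exp l * Real.exp (-δ) := by gcongr
      _ = Real.exp (-r) := by rw [← Real.exp_add, hl]; congr 1; ring
  linarith
end

/-- in the punctured space, quasihyperbolic balls are strictly convex
exactly for radii `r ∈ (0,1]`. -/
theorem qh_ball_punctured_convexity (n : ℕ) (hn : 2 ≤ n)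
    (x : EuclideanSpace ℝ (Fin n)) (hx : x ≠ 0) (r : ℝ) :
    (0 < r → r ≤ 1 →
        StrictlyConvexSet (qhBall ({0}ᶜ : Set (EuclideanSpace ℝ (Fin n))) x r)) ∧
      (1 < r → ¬ Convex ℝ (qhBall ({0}ᶜ : Set (EuclideanSpace ℝ (Fin n))) x r)) := by
  have h2 : 2 ≤ Module.finrank ℝ (EuclideanSpace ℝ (Fin n)) := by simpa using hn
  refine ⟨fun _ h1 y hy => ⟨(qhBall_convex h2 hx h1).starConvex hy, fun v hv => ?_⟩,
    fun h => qhBall_not_convex h2 hx h⟩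
  exact frontier_unique (qhBall_convex h2 hx h1) (qhBall_open h2 hx) (qhBall_bdd h2 hx) hy hv
end

section
/- Let n ≥ 2, Ω = ℝⁿ \ {0}, and x ∈ Ω. Then the quasihyperbolic ball B_k(x,r) is strictly starlike with respect to x for every r ∈ (0, κ], and it is not starlike with respect to x for every r > κ, where κ ≈ 2.83297 is the unique solution p ∈ [1, π] of cos√(p²−1) + √(p²−1)·sin√(p²−1) = e⁻¹. -/
open Set Metric MeasureTheory

namespace QHAux

/-- auxiliary -/
noncomputable def hh (s : ℝ) : ℝ := Real.cos s + s * Real.sin s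

lemma hasDerivAt_hh (s : ℝ) : HasDerivAt hh (s * Real.cos s) s := by
  have := (Real.hasDerivAt_cos s).add ((hasDerivAt_id s).mul (Real.hasDerivAt_sin s))
  convert! this using 1
  simp

lemma hh_strictAnti : StrictAntiOn hh (Icc (Real.pi / 2) Real.pi) := by
  apply strictAntiOn_of_deriv_neg (convex_Icc _ _)
  · exact fun s _ => (hasDerivAt_hh s).continuousAt.continuousWithinAt
  · intro s hs
    rw [interior_Icc] at hs
    rw [(hasDerivAt_hh s).deriv]
    have := Real.cos_neg_of_pi_div_two_lt_of_lt hs.1 (by linarith [hs.2, Real.pi_pos])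
    have hp := Real.pi_pos
    have : 0 < s := by linarith [hs.1]
    nlinarith

lemma hh_ge_one {s : ℝ} (h0 : 0 ≤ s) (h1 : s ≤ Real.pi / 2) : 1 ≤ hh s := by
  have hm : MonotoneOn hh (Icc 0 (Real.pi / 2)) := by
    apply monotoneOn_of_deriv_nonneg (convex_Icc _ _)
    · exact fun s _ => (hasDerivAt_hh s).continuousAt.continuousWithinAt
    · exact fun s _ => (hasDerivAt_hh s).differentiableAt.differentiableWithinAt
    · intro s hs
      rw [interior_Icc] at hs
      rw [(hasDerivAt_hh s).deriv]
      exact mul_nonneg hs.1.le (Real.cos_nonneg_of_neg_pi_div_two_le_of_le (by linarith [hs.1, hs.2]) hs.2.le)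
  have := hm ⟨le_refl 0, by linarith⟩ ⟨h0, h1⟩ h0
  simpa [hh] using this

lemma exp_lt : Real.exp (-1) < 1 := by simp

lemma kappa_lt {κ : ℝ} (hκmem : κ ∈ Icc 1 Real.pi)
    (hκeq : hh (Real.sqrt (κ ^ 2 - 1)) = Real.exp (-1)) : κ < Real.pi := by
  refine lt_of_le_of_ne hκmem.2 ?_
  rintro rfl
  set s := Real.sqrt (Real.pi ^ 2 - 1) with hs
  have hp := Real.pi_gt_three
  have hs2 : s ^ 2 = Real.pi ^ 2 - 1 := Real.sq_sqrt (by nlinarith)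
  have hs0 : 0 ≤ s := Real.sqrt_nonneg _
  have hsp : s < Real.pi := by nlinarith
  have hs1 : 2 < s := by nlinarith
  have h1 : Real.sin s ≤ Real.pi - s := by
    rw [← Real.sin_pi_sub]; exact Real.sin_le (by linarith)
  have h2 : Real.cos s ≤ -(1 - (Real.pi - s) ^ 2 / 2) := by
    have := Real.one_sub_sq_div_two_le_cos (x := Real.pi - s)
    rw [Real.cos_pi_sub] at this
    linarith
  have h3 : (Real.pi - s) * (Real.pi + s) = 1 := by nlinarith
  have h4 : s * Real.sin s ≤ s * (Real.pi - s) := by gcongr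
  have h5 : Real.pi - s ≤ 1/5 := by nlinarith
  have := Real.exp_pos (-1)
  unfold hh at hκeq
  nlinarith

lemma pi_le_sstar {σ : ℝ} (h0 : 0 ≤ σ) (heq : hh σ = Real.exp (-1)) : Real.pi / 2 < σ := by
  by_contra! h
  linarith [hh_ge_one h0 h, exp_lt]

lemma hh_ge {σ θ : ℝ} (h0 : 0 ≤ σ) (hπ : σ ≤ Real.pi) (heq : hh σ = Real.exp (-1))
    (hθ0 : 0 ≤ θ) (hθ : θ ≤ σ) : Real.exp (-1) ≤ hh θ := by
  have h1 := pi_le_sstar h0 heq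
  rcases le_total θ (Real.pi / 2) with h | h
  · linarith [hh_ge_one hθ0 h, exp_lt]
  · rw [← heq]
    exact hh_strictAnti.antitoneOn ⟨h, by linarith⟩ ⟨h1.le, hπ⟩ hθ

lemma hh_eq {σ θ : ℝ} (h0 : 0 ≤ σ) (hπ : σ ≤ Real.pi) (heq : hh σ = Real.exp (-1))
    (hθ0 : 0 ≤ θ) (hθ : θ ≤ Real.pi) (he : hh θ = Real.exp (-1)) : θ = σ :=
  hh_strictAnti.injOn ⟨(pi_le_sstar hθ0 he).le, hθ⟩ ⟨(pi_le_sstar h0 heq).le, hπ⟩ (he.trans heq.symm)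

/-- auxiliary -/
noncomputable def Psi (L θ : ℝ) : ℝ := L * (Real.exp L - Real.cos θ) + θ * Real.sin θ

/-- main inequality -/
lemma Psi_main {κ : ℝ} (hκ1 : 1 ≤ κ) (hκπ : κ < Real.pi)
    (hκeq : hh (Real.sqrt (κ ^ 2 - 1)) = Real.exp (-1))
    {L θ : ℝ} (hθ0 : 0 ≤ θ) (hle : L ^ 2 + θ ^ 2 ≤ κ ^ 2) :
    0 ≤ Psi L θ ∧ (Psi L θ = 0 → (L = 0 ∧ θ = 0) ∨ (L = -1 ∧ θ = Real.sqrt (κ ^ 2 - 1))) := by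
  have hθπ : θ < Real.pi := by nlinarith [sq_nonneg L]
  have hsin : 0 ≤ Real.sin θ := Real.sin_nonneg_of_nonneg_of_le_pi hθ0 hθπ.le
  rcases le_or_gt 0 L with hL | hL
  · have h1 : 1 ≤ Real.exp L := Real.one_le_exp hL
    have h2 := Real.cos_le_one θ
    have h3 : 0 ≤ L * (Real.exp L - Real.cos θ) := mul_nonneg hL (by linarith)
    have h4 : 0 ≤ θ * Real.sin θ := mul_nonneg hθ0 hsin
    refine ⟨add_nonneg h3 h4, fun h => Or.inl ?_⟩
    unfold Psi at h
    have h5 : θ * Real.sin θ = 0 := by linarith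
    have h6 : θ = 0 := by
      by_contra hne
      have : 0 < Real.sin θ := Real.sin_pos_of_pos_of_lt_pi (lt_of_le_of_ne hθ0 (Ne.symm hne)) hθπ
      rcases mul_eq_zero.1 h5 with h | h
      · exact hne h
      · linarith
    subst h6
    refine ⟨?_, rfl⟩
    by_contra hne
    have hLp : 0 < L := lt_of_le_of_ne hL (Ne.symm hne)
    have : 1 < Real.exp L := Real.one_lt_exp_iff.2 hLp
    simp at h
    rcases h with h | h
    · exact hne h
    · linarith
  · set R := Real.sqrt (L ^ 2 + θ ^ 2) with hR
    have hRR : R ^ 2 = L ^ 2 + θ ^ 2 := Real.sq_sqrt (by positivity)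
    have hR0 : 0 < R := Real.sqrt_pos.2 (by nlinarith [mul_pos_of_neg_of_neg hL hL, sq_nonneg θ])
    have hRκ : R ≤ κ := by nlinarith
    have hRπ : R < Real.pi := by linarith
    let P : ℝ → ℝ := fun φ => Psi (-(R * Real.cos φ)) (R * Real.sin φ)
    have hPd : ∀ φ, HasDerivAt P ((Real.exp (-(R * Real.cos φ)) - Real.cos (R * Real.sin φ)) * (R * Real.sin φ)
        + (-(R * Real.cos φ)) * (Real.exp (-(R * Real.cos φ)) * (R * Real.sin φ) + Real.sin (R * Real.sin φ) * (R * Real.cos φ))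
        + (R * Real.cos φ) * Real.sin (R * Real.sin φ) + (R * Real.sin φ) * (Real.cos (R * Real.sin φ) * (R * Real.cos φ))) φ := by
      intro φ
      have hl : HasDerivAt (fun φ => -(R * Real.cos φ)) (R * Real.sin φ) φ := by
        convert! ((Real.hasDerivAt_cos φ).const_mul R).neg using 1
        ring
      have ht : HasDerivAt (fun φ => R * Real.sin φ) (R * Real.cos φ) φ := (Real.hasDerivAt_sin φ).const_mul R
      have := (hl.mul (hl.exp.sub ht.cos)).add (ht.mul ht.sin)
      convert! this using 1
      simp only [Pi.sub_apply]
      ring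
    have hPc : ContinuousOn P (Icc 0 (Real.pi / 2)) := fun φ _ => (hPd φ).continuousAt.continuousWithinAt
    have hpp := Real.pi_pos
    obtain ⟨φ₀, hφ₀, hmin⟩ := isCompact_Icc.exists_isMinOn (nonempty_Icc.2 (by linarith)) hPc
    -- at a minimum with nonpositive value
    have key : ∀ φ ∈ Icc 0 (Real.pi / 2), IsMinOn P (Icc 0 (Real.pi / 2)) φ → P φ ≤ 0 →
        R * Real.cos φ = 1 ∧ P φ = hh (R * Real.sin φ) - Real.exp (-1) := by
      intro φ hφ hm hle0
      have hc0 : φ ≠ 0 := by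
        rintro rfl
        simp only [P, Psi, Real.cos_zero, Real.sin_zero] at hle0
        have : Real.exp (-R) < 1 := by simpa using hR0
        simp at hle0
        nlinarith
      have hc1 : φ ≠ Real.pi / 2 := by
        rintro rfl
        simp only [P, Psi, Real.cos_pi_div_two, Real.sin_pi_div_two] at hle0
        have : 0 < Real.sin R := Real.sin_pos_of_pos_of_lt_pi hR0 hRπ
        simp at hle0
        nlinarith
      have hio : φ ∈ Ioo 0 (Real.pi / 2) := ⟨lt_of_le_of_ne hφ.1 (Ne.symm hc0), lt_of_le_of_ne hφ.2 hc1⟩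
      have hd := (hm.isLocalMin (Icc_mem_nhds hio.1 hio.2)).hasDerivAt_eq_zero (hPd φ)
      have hs : 0 < Real.sin φ := Real.sin_pos_of_pos_of_lt_pi hio.1 (by linarith [hio.2])
      have hs1 := Real.sin_le_one φ
      have hc : 0 < Real.cos φ := Real.cos_pos_of_mem_Ioo ⟨by linarith [hio.1], hio.2⟩
      have hsc := Real.sin_sq_add_cos_sq φ
      have hPe : P φ = -(R * Real.cos φ) * (Real.exp (-(R * Real.cos φ)) - Real.cos (R * Real.sin φ)) + (R * Real.sin φ) * Real.sin (R * Real.sin φ) := rfl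
      have hl0 : 0 < R * Real.cos φ := by positivity
      have hrs : R * Real.sin φ < Real.pi := by nlinarith
      have ht0 : 0 < R * Real.sin φ := by positivity
      have hRe : (R * Real.cos φ) ^ 2 + (R * Real.sin φ) ^ 2 = R ^ 2 := by
        linear_combination R ^ 2 * hsc
      have hl1 : R * Real.cos φ = 1 := by
        generalize R * Real.cos φ = l at *
        generalize R * Real.sin φ = t at *
        have hst : 0 < Real.sin t := Real.sin_pos_of_pos_of_lt_pi ht0 hrs
        have hfac : (1 - l) * (R ^ 2 * Real.sin t - t * P φ) = 0 := by
          rw [hPe, ← hRe]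
          linear_combination l * hd
        rcases mul_eq_zero.1 hfac with h | h
        · linarith
        · exfalso
          have : 0 < R ^ 2 * Real.sin t := by positivity
          nlinarith
      refine ⟨hl1, ?_⟩
      rw [hPe, hl1]
      unfold hh
      ring
    have hσ0 := Real.sqrt_nonneg (κ ^ 2 - 1)
    have hσ2 : Real.sqrt (κ ^ 2 - 1) ^ 2 = κ ^ 2 - 1 := Real.sq_sqrt (by nlinarith)
    have hσπ : Real.sqrt (κ ^ 2 - 1) ≤ Real.pi := by nlinarith
    have hnn : 0 ≤ P φ₀ := by
      by_contra! hneg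
      obtain ⟨h1, h2⟩ := key φ₀ hφ₀ hmin hneg.le
      have hsc := Real.sin_sq_add_cos_sq φ₀
      have hRe : (R * Real.cos φ₀) ^ 2 + (R * Real.sin φ₀) ^ 2 = R ^ 2 := by
        linear_combination R ^ 2 * hsc
      have hs : 0 ≤ Real.sin φ₀ := Real.sin_nonneg_of_nonneg_of_le_pi hφ₀.1 (by linarith [hφ₀.2])
      have ht0 : 0 ≤ R * Real.sin φ₀ := by positivity
      have := hh_ge hσ0 hσπ hκeq ht0 (by
        rw [h1] at hRe
        nlinarith)
      linarith
    -- the given point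
    have hLR : -L / R ∈ Icc (0:ℝ) 1 := by
      refine ⟨div_nonneg (by linarith) hR0.le, ?_⟩
      rw [div_le_one hR0]
      nlinarith [sq_nonneg θ]
    set φ := Real.arccos (-L / R) with hφ
    have hcos : R * Real.cos φ = -L := by
      rw [hφ, Real.cos_arccos (by linarith [hLR.1]) hLR.2]
      field_simp
    have hφm : φ ∈ Icc 0 (Real.pi / 2) := ⟨Real.arccos_nonneg _, Real.arccos_le_pi_div_two.2 hLR.1⟩
    have hsc := Real.sin_sq_add_cos_sq φ
    have hRe : (R * Real.cos φ) ^ 2 + (R * Real.sin φ) ^ 2 = R ^ 2 := by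
      linear_combination R ^ 2 * hsc
    have hs : 0 ≤ Real.sin φ := Real.sin_nonneg_of_nonneg_of_le_pi hφm.1 (by linarith [hφm.2])
    have ht0 : 0 ≤ R * Real.sin φ := by positivity
    have hsin' : R * Real.sin φ = θ := by
      rw [hcos] at hRe
      have : (R * Real.sin φ) ^ 2 = θ ^ 2 := by nlinarith
      exact (sq_eq_sq₀ ht0 hθ0).1 this
    have hPφ : P φ = Psi L θ := by
      simp only [P, hcos, hsin', neg_neg]
    have hmin' := isMinOn_iff.1 hmin
    refine ⟨by rw [← hPφ]; exact hnn.trans (hmin' φ hφm), fun h0 => Or.inr ?_⟩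
    obtain ⟨h1, h2⟩ := key φ hφm (isMinOn_iff.2 fun y hy => by
      rw [hPφ, h0]; exact hnn.trans (hmin' y hy)) (by rw [hPφ, h0])
    refine ⟨by linarith, hh_eq hσ0 hσπ hκeq hθ0 hθπ.le ?_⟩
    rw [hPφ, h0, hsin'] at h2
    linarith

lemma Psi_neg_right (L θ : ℝ) : Psi L (-θ) = Psi L θ := by
  simp [Psi]

lemma Psi_abs (L θ : ℝ) : Psi L |θ| = Psi L θ := by
  rcases abs_choice θ with h | h <;> rw [h]
  exact Psi_neg_right _ _

/-- derivative along ray -/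
lemma hasDerivAt_ray {ζ : ℂ} {t : ℝ} (h : 1 + (t:ℂ) * ζ ∈ Complex.slitPlane) :
    ∃ d : ℝ, HasDerivAt (fun t : ℝ => ‖Complex.log (1 + (t:ℂ) * ζ)‖ ^ 2) d t ∧
      t * ‖1 + (t:ℂ) * ζ‖ * d = 2 * Psi (Real.log ‖1 + (t:ℂ) * ζ‖) (Complex.arg (1 + (t:ℂ) * ζ)) := by
  have h1 : HasDerivAt (fun t : ℝ => 1 + (t:ℂ) * ζ) ζ t := by
    have := (((hasDerivAt_id t).ofReal_comp).mul_const ζ).const_add 1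
    simpa using this
  have h2 := h1.clog_real h
  refine ⟨_, h2.norm_sq, ?_⟩
  have hw0 : 1 + (t:ℂ) * ζ ≠ 0 := Complex.slitPlane_ne_zero h
  have ht : (t:ℂ) * ζ = (1 + (t:ℂ) * ζ) - 1 := by ring
  generalize hw : 1 + (t:ℂ) * ζ = w at *
  have hn : 0 < ‖w‖ := norm_pos_iff.2 hw0
  have key : t * inner ℝ (Complex.log w) (ζ / w) = inner ℝ (Complex.log w) ((w - 1) / w) := by
    rw [← ht, mul_div_assoc, ← Complex.real_smul, inner_smul_right]
  have e2 : inner ℝ (Complex.log w) ((w - 1) / w) * ‖w‖ = Psi (Real.log ‖w‖) (Complex.arg w) := by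
    have hre : w.re = ‖w‖ * Real.cos w.arg := (Complex.norm_mul_cos_arg w).symm
    have him : w.im = ‖w‖ * Real.sin w.arg := (Complex.norm_mul_sin_arg w).symm
    rw [Complex.inner]
    unfold Psi
    rw [Real.exp_log hn]
    have : (w - 1) / w = 1 - w⁻¹ := by field_simp
    rw [this]
    simp only [Complex.mul_re, Complex.conj_re, Complex.conj_im, Complex.log_re, Complex.log_im,
      Complex.sub_re, Complex.sub_im, Complex.one_re, Complex.one_im, Complex.inv_re, Complex.inv_im,
      Complex.normSq_eq_norm_sq]
    rw [hre, him]
    field_simp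
    ring
  rw [← e2, ← key]; ring

end QHAux

namespace QHAux
section
variable {E : Type*} [NormedAddCommGroup E] [InnerProductSpace ℝ E]

open InnerProductGeometry

/-- auxiliary -/
noncomputable def DD (x y : E) : ℝ := Real.sqrt (Real.log (‖y‖ / ‖x‖) ^ 2 + angle x y ^ 2)

lemma exists_unit_orth [FiniteDimensional ℝ E] (hn : 2 ≤ Module.finrank ℝ E) (u : E) (hu : ‖u‖ = 1) (v : E) :
    ∃ e : E, ‖e‖ = 1 ∧ inner ℝ u e = 0 ∧ ∃ a b : ℝ, v = a • u + b • e := by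
  set v' := v - inner ℝ u v • u with hv'
  have horth : inner ℝ u v' = 0 := by
    rw [hv', inner_sub_right, inner_smul_right, real_inner_self_eq_norm_sq, hu]; ring
  by_cases h : v' = 0
  · have hd := Submodule.finrank_add_finrank_orthogonal (Submodule.span ℝ {u})
    have hu0 : u ≠ 0 := by rintro rfl; simp at hu
    rw [finrank_span_singleton hu0] at hd
    have : Nontrivial (Submodule.span ℝ {u})ᗮ := Module.nontrivial_of_finrank_pos (R := ℝ) (by omega)
    obtain ⟨⟨w, hw⟩, hw0⟩ := exists_ne (0 : (Submodule.span ℝ {u})ᗮ)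
    have hw0' : w ≠ 0 := fun h => hw0 (by simpa using h)
    refine ⟨‖w‖⁻¹ • w, by simp [norm_smul, hw0'], ?_, inner ℝ u v, 0, ?_⟩
    · rw [inner_smul_right, Submodule.mem_orthogonal_singleton_iff_inner_right.1 hw, mul_zero]
    · rw [zero_smul, add_zero]; exact sub_eq_zero.1 h
  · refine ⟨‖v'‖⁻¹ • v', by simp [norm_smul, h], ?_, inner ℝ u v, ‖v'‖, ?_⟩
    · rw [inner_smul_right, horth, mul_zero]
    · rw [smul_smul, mul_inv_cancel₀ (norm_ne_zero_iff.2 h), one_smul, hv']; abel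

lemma exists_isom [FiniteDimensional ℝ E] (hn : 2 ≤ Module.finrank ℝ E) (x : E) (hx : x ≠ 0) (v : E) :
    ∃ φ : ℂ →ₗᵢ[ℝ] E, ∃ ζ : ℂ, x = ‖x‖ • φ 1 ∧ v = ‖x‖ • φ ζ := by
  have hx' : ‖x‖ ≠ 0 := norm_ne_zero_iff.2 hx
  obtain ⟨u, hu⟩ : ∃ u, u = ‖x‖⁻¹ • x := ⟨_, rfl⟩
  have hu1 : ‖u‖ = 1 := by simp [hu, norm_smul, hx]
  obtain ⟨e, he, hue, a, b, hv⟩ := exists_unit_orth hn u hu1 v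
  let f : ℂ →ₗ[ℝ] E := Complex.reLm.smulRight u + Complex.imLm.smulRight e
  have hf : ∀ z, f z = z.re • u + z.im • e := fun z => rfl
  refine ⟨⟨f, fun z => ?_⟩, ⟨‖x‖⁻¹ * a, ‖x‖⁻¹ * b⟩, ?_, ?_⟩
  · rw [hf]
    rw [← sq_eq_sq₀ (norm_nonneg _) (norm_nonneg _), norm_add_sq_real, inner_smul_left, inner_smul_right, hue,
      norm_smul, norm_smul, hu1, he, Complex.sq_norm, Complex.normSq_apply]
    simp
    ring
  · change x = ‖x‖ • f 1
    rw [hf, hu]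
    simp [smul_smul, hx']
  · change v = ‖x‖ • f _
    rw [hf, hv, smul_add, smul_smul, smul_smul]
    simp only [mul_inv_cancel_left₀ hx']

lemma log_norm_sq (w : ℂ) : ‖Complex.log w‖ ^ 2 = Real.log ‖w‖ ^ 2 + w.arg ^ 2 := by
  rw [Complex.sq_norm, Complex.normSq_apply, Complex.log_re, Complex.log_im]; ring

lemma DD_isom {x : E} (hx : x ≠ 0) (φ : ℂ →ₗᵢ[ℝ] E) (h1 : x = ‖x‖ • φ 1) {w : ℂ} (hw : w ≠ 0) :
    DD x (‖x‖ • φ w) = ‖Complex.log w‖ := by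
  have hx' : 0 < ‖x‖ := norm_pos_iff.2 hx
  have ha : angle x (‖x‖ • φ w) = |w.arg| := by
    conv_lhs => rw [h1, norm_smul, φ.norm_map]
    simp only [norm_norm, norm_one, mul_one]
    rw [angle_smul_left_of_pos _ _ hx', angle_smul_right_of_pos _ _ hx', φ.angle_map,
      Complex.angle_eq_abs_arg one_ne_zero hw, one_div, Complex.abs_arg_inv]
  unfold DD
  rw [ha, norm_smul, φ.norm_map, norm_norm, mul_div_cancel_left₀ _ hx'.ne', sq_abs, ← log_norm_sq,
    Real.sqrt_sq (norm_nonneg _)]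

lemma DD_nonneg (x y : E) : 0 ≤ DD x y := Real.sqrt_nonneg _

lemma DD_local [FiniteDimensional ℝ E] (hn : 2 ≤ Module.finrank ℝ E) {x y : E} (hx : x ≠ 0)
    {δ : ℝ} (h : ‖y - x‖ / ‖x‖ ≤ δ) (hδ : δ ≤ 1 / 2) : DD x y ≤ δ * (1 + δ) := by
  obtain ⟨φ, ζ, h1, h2⟩ := exists_isom hn x hx (y - x)
  have hx' : 0 < ‖x‖ := norm_pos_iff.2 hx
  have hy : y = ‖x‖ • φ (1 + ζ) := by
    rw [map_add, smul_add, ← h1, ← h2]; abel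
  have hζ : ‖ζ‖ ≤ δ := by
    rw [h2, norm_smul, φ.norm_map, norm_norm, mul_div_cancel_left₀ _ hx'.ne'] at h
    exact h
  have hne : 1 + ζ ≠ 0 := Complex.slitPlane_ne_zero (Complex.mem_slitPlane_of_norm_lt_one (by linarith))
  rw [hy, DD_isom hx φ h1 hne]
  have := Complex.norm_log_one_add_le (z := ζ) (by linarith)
  have h3 : (1 - ‖ζ‖)⁻¹ ≤ 2 := by
    rw [inv_le_comm₀ (by linarith) (by norm_num)]; linarith
  have h0 := norm_nonneg ζ
  calc _ ≤ _ := this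
    _ ≤ ‖ζ‖ ^ 2 * 2 / 2 + ‖ζ‖ := by gcongr
    _ ≤ _ := by nlinarith

lemma DD_continuousOn {x : E} (hx : x ≠ 0) : ContinuousOn (DD x) {0}ᶜ := by
  intro y hy
  have hy0 : y ≠ 0 := hy
  apply ContinuousAt.continuousWithinAt
  unfold DD
  have h1 : ContinuousAt (fun y => angle x y) y :=
    (InnerProductGeometry.continuousAt_angle (x := (x, y)) hx hy0).comp (f := fun y => (x, y)) (by fun_prop)
  have h2 : ContinuousAt (fun y : E => Real.log (‖y‖ / ‖x‖)) y :=
    ContinuousAt.log (by fun_prop) (by simp [hx, hy0])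
  fun_prop

lemma cs_aux {a b l q A : ℝ} (hab : a ^ 2 + b ^ 2 = 1) (hq : |q| ≤ A) :
    |a * l + b * q| ≤ Real.sqrt (l ^ 2 + A ^ 2) := by
  apply Real.abs_le_sqrt
  have hq2 : q ^ 2 ≤ A ^ 2 := by
    rw [← sq_abs q]; exact pow_le_pow_left₀ (abs_nonneg _) hq 2
  nlinarith [sq_nonneg (a * q - b * l)]

lemma Phi_diff {a b : ℝ} (hab : a ^ 2 + b ^ 2 = 1) (x : E) {y z : E} (hy : y ≠ 0) (hz : z ≠ 0) :
    |(a * Real.log ‖z‖ + b * angle x z) - (a * Real.log ‖y‖ + b * angle x y)| ≤ DD y z := by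
  have h1 := angle_le_angle_add_angle x y z
  have h2 := angle_le_angle_add_angle x z y
  rw [angle_comm z y] at h2
  have := cs_aux (l := Real.log (‖z‖ / ‖y‖)) hab (abs_le.2 ⟨by linarith, by linarith⟩ : |angle x z - angle x y| ≤ angle y z)
  unfold DD
  convert this using 2
  rw [Real.log_div (norm_ne_zero_iff.2 hz) (norm_ne_zero_iff.2 hy)]
  ring

lemma frontier_compl_zero [Nontrivial E] : frontier ({0}ᶜ : Set E) = {0} := by
  have : (nhdsWithin (0:E) {0}ᶜ).NeBot := Module.punctured_nhds_neBot ℝ E 0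
  rw [frontier_compl, frontier, closure_singleton, interior_singleton]
  simp

lemma qhLength_eq [Nontrivial E] (γ : ℝ → E) :
    qhLength ({0}ᶜ : Set E) γ = ∫ t in (0:ℝ)..1, ‖deriv γ t‖ / ‖γ t‖ := by
  unfold qhLength
  rw [frontier_compl_zero]
  simp [infDist_singleton]

lemma qhLength_nonneg [Nontrivial E] (γ : ℝ → E) : 0 ≤ qhLength ({0}ᶜ : Set E) γ := by
  rw [qhLength_eq]
  exact intervalIntegral.integral_nonneg zero_le_one fun t _ => by positivity

lemma upper_path [Nontrivial E] {x : E} (hx : x ≠ 0) (φ : ℂ →ₗᵢ[ℝ] E) (h1 : x = ‖x‖ • φ 1)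
    {w : ℂ} (hw : w ≠ 0) :
    ∃ γ, IsRectPath ({0}ᶜ : Set E) x (‖x‖ • φ w) γ ∧ qhLength ({0}ᶜ : Set E) γ = ‖Complex.log w‖ := by
  have hx' : 0 < ‖x‖ := norm_pos_iff.2 hx
  set l := Complex.log w with hl
  let γ : ℝ → E := fun t => ‖x‖ • φ.toContinuousLinearMap (Complex.exp ((t:ℂ) * l))
  have hnorm : ∀ t, ‖γ t‖ = ‖x‖ * ‖Complex.exp ((t:ℂ) * l)‖ := by
    intro t
    simp only [γ]
    rw [norm_smul, norm_norm]
    exact congrArg _ (φ.norm_map _)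
  have hd : ∀ t : ℝ, HasDerivAt γ (‖x‖ • φ.toContinuousLinearMap (Complex.exp ((t:ℂ) * l) * l)) t := by
    intro t
    have h : HasDerivAt (fun t : ℝ => (t:ℂ) * l) l t := by
      simpa using ((hasDerivAt_id t).ofReal_comp).mul_const l
    exact ((φ.toContinuousLinearMap.hasFDerivAt.comp_hasDerivAt t h.cexp).const_smul ‖x‖)
  have hcd : ContDiff ℝ 1 γ := by
    have : ContDiff ℝ 1 (fun t : ℝ => Complex.exp ((t:ℂ) * l)) :=
      (Complex.ofRealCLM.contDiff.mul contDiff_const).cexp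
    exact contDiff_const.smul (φ.toContinuousLinearMap.contDiff.comp this)
  refine ⟨γ, ⟨?_, ?_, ?_, ?_⟩, ?_⟩
  · exact (hcd.locallyLipschitz.locallyLipschitzOn).exists_lipschitzOnWith_of_compact isCompact_Icc
  · intro t _
    have : 0 < ‖γ t‖ := by
      rw [hnorm]; exact mul_pos hx' (norm_pos_iff.2 (Complex.exp_ne_zero _))
    exact norm_pos_iff.1 this
  · simp only [γ]
    simp
    exact h1.symm
  · simp only [γ]
    simp [hl, Complex.exp_log hw]
  · rw [qhLength_eq]
    have : ∀ t, ‖deriv γ t‖ / ‖γ t‖ = ‖l‖ := by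
      intro t
      rw [(hd t).deriv, hnorm, norm_smul, norm_norm]
      have : ‖φ.toContinuousLinearMap (Complex.exp ((t:ℂ) * l) * l)‖ = ‖Complex.exp ((t:ℂ) * l)‖ * ‖l‖ := by
        rw [← norm_mul]; exact φ.norm_map _
      rw [this]
      have h0 : ‖Complex.exp ((t:ℂ) * l)‖ ≠ 0 := norm_ne_zero_iff.2 (Complex.exp_ne_zero _)
      field_simp
    simp [this]

lemma deriv_Phi_le [FiniteDimensional ℝ E] (hn : 2 ≤ Module.finrank ℝ E) {a b : ℝ} (hab : a ^ 2 + b ^ 2 = 1)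
    (x : E) {γ : ℝ → E} {t : ℝ} (hd : DifferentiableAt ℝ γ t) (h0 : γ t ≠ 0) :
    ‖deriv (fun t => a * Real.log ‖γ t‖ + b * angle x (γ t)) t‖ ≤ ‖deriv γ t‖ / ‖γ t‖ := by
  have hp : 0 < ‖γ t‖ := norm_pos_iff.2 h0
  have main : ∀ ε : ℝ, 0 < ε →
      ‖deriv (fun t => a * Real.log ‖γ t‖ + b * angle x (γ t)) t‖ ≤ (‖deriv γ t‖ + ε) / ‖γ t‖ * (1 + ε) := by
    intro ε hε
    have hc := norm_nonneg (deriv γ t)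
    apply norm_deriv_le_of_lip' (by positivity)
    have e1 := (hasDerivAt_iff_isLittleO.1 hd.hasDerivAt).def hε
    have e2 : ∀ᶠ s in nhds t, γ s ≠ 0 := hd.continuousAt.eventually_ne h0
    have e3 : ∀ᶠ s in nhds t, (‖deriv γ t‖ + ε) / ‖γ t‖ * ‖s - t‖ < min (1 / 2) ε := by
      have : ContinuousAt (fun s => (‖deriv γ t‖ + ε) / ‖γ t‖ * ‖s - t‖) t := by fun_prop
      apply this.eventually_lt continuousAt_const
      simp [hε]
    filter_upwards [e1, e2, e3] with s h1 h2 h3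
    have h4 : ‖γ s - γ t‖ ≤ (‖deriv γ t‖ + ε) * ‖s - t‖ := by
      have := norm_add_le (γ s - γ t - (s - t) • deriv γ t) ((s - t) • deriv γ t)
      rw [sub_add_cancel, norm_smul (s - t)] at this
      linarith
    have h5 := Phi_diff hab x h0 h2
    rw [Real.norm_eq_abs]
    refine h5.trans ?_
    have h6 := DD_local hn (y := γ s) h0 (δ := (‖deriv γ t‖ + ε) / ‖γ t‖ * ‖s - t‖) (by
      rw [div_mul_eq_mul_div]; gcongr) (h3.le.trans (min_le_left _ _))
    refine h6.trans ?_
    have h7 : (‖deriv γ t‖ + ε) / ‖γ t‖ * ‖s - t‖ ≤ ε := h3.le.trans (min_le_right _ _)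
    calc _ ≤ (‖deriv γ t‖ + ε) / ‖γ t‖ * ‖s - t‖ * (1 + ε) := by gcongr
      _ = _ := by ring
  have ht : Filter.Tendsto (fun ε : ℝ => (‖deriv γ t‖ + ε) / ‖γ t‖ * (1 + ε)) (nhdsWithin 0 (Ioi 0))
      (nhds ((‖deriv γ t‖ + 0) / ‖γ t‖ * (1 + 0))) := by
    apply Filter.Tendsto.mono_left _ nhdsWithin_le_nhds
    apply ContinuousAt.tendsto (f := fun ε : ℝ => (‖deriv γ t‖ + ε) / ‖γ t‖ * (1 + ε))
    fun_prop
  have := ge_of_tendsto ht (eventually_nhdsWithin_of_forall main)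
  simpa using this

lemma lower_path [FiniteDimensional ℝ E] (hn : 2 ≤ Module.finrank ℝ E) [Nontrivial E] {x y : E} (hx : x ≠ 0)
    (hy : y ≠ 0) {γ : ℝ → E} (hγ : IsRectPath ({0}ᶜ : Set E) x y γ) :
    DD x y ≤ qhLength ({0}ᶜ : Set E) γ := by
  obtain ⟨⟨K, hK⟩, hm, hg0, hg1⟩ := hγ
  rcases (DD_nonneg x y).eq_or_lt with h | hR
  · rw [← h]; exact qhLength_nonneg γ
  have hRR : DD x y ^ 2 = Real.log (‖y‖ / ‖x‖) ^ 2 + angle x y ^ 2 := Real.sq_sqrt (by positivity)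
  set R := DD x y with hRdef
  set L := Real.log (‖y‖ / ‖x‖) with hL
  set θ := angle x y with hθ
  have hab : (L / R) ^ 2 + (θ / R) ^ 2 = 1 := by
    field_simp
    linarith
  generalize haa : L / R = a at hab
  generalize hbb : θ / R = b at hab
  let Φ : ℝ → ℝ := fun t => a * Real.log ‖γ t‖ + b * angle x (γ t)
  have hne : ∀ t ∈ Icc (0:ℝ) 1, γ t ≠ 0 := fun t ht => hm ht
  have hcont := hK.continuousOn
  obtain ⟨t₁, ht₁, hmin⟩ := isCompact_Icc.exists_isMinOn (nonempty_Icc.2 zero_le_one) hcont.norm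
  have hmin' := isMinOn_iff.1 hmin
  set m := ‖γ t₁‖ with hmdef
  have hm0 : 0 < m := norm_pos_iff.2 (hne _ ht₁)
  have hloc : LocallyLipschitzOn (Icc (0:ℝ) 1) Φ := by
    intro t₀ ht₀
    refine ⟨⟨3 / 2 * (K / m), by positivity⟩, Icc 0 1 ∩ ball t₀ (m / (4 * (K + 1))), 
      Filter.inter_mem self_mem_nhdsWithin (mem_nhdsWithin_of_mem_nhds (ball_mem_nhds _ (by positivity))), ?_⟩
    apply LipschitzOnWith.of_dist_le_mul
    rintro s ⟨hs, hs'⟩ t ⟨ht, ht'⟩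
    have h1 := Phi_diff hab x (hne t ht) (hne s hs)
    have hst : dist s t ≤ m / (2 * (K + 1)) := by
      have := dist_triangle_right s t t₀
      rw [mem_ball] at hs' ht'
      have e : m / (2 * (K + 1)) = m / (4 * (K + 1)) + m / (4 * (K + 1)) := by
        have : (K:ℝ) + 1 ≠ 0 := by positivity
        field_simp; norm_num
      linarith
    have h2 := hK.dist_le_mul s hs t ht
    have hδ : K / m * dist s t ≤ 1 / 2 := by
      have : (0:ℝ) ≤ K := K.2
      calc K / m * dist s t ≤ K / m * (m / (2 * (K + 1))) := by gcongr
        _ = K / (K + 1) / 2 := by field_simp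
        _ ≤ 1 / 2 := by
          gcongr
          rw [div_le_one (by positivity)]; linarith
    have h3 := DD_local hn (y := γ s) (hne t ht) (δ := K / m * dist s t) (by
      rw [← dist_eq_norm, div_mul_eq_mul_div]
      gcongr
      exact hmin' t ht) hδ
    rw [Real.dist_eq]
    refine (h1.trans h3).trans ?_
    change _ ≤ 3 / 2 * (K / m) * dist s t
    have : 0 ≤ K / m * dist s t := by positivity
    nlinarith
  obtain ⟨C, hC⟩ := hloc.exists_lipschitzOnWith_of_compact isCompact_Icc
  have hac : AbsolutelyContinuousOnInterval Φ 0 1 := by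
    apply LipschitzOnWith.absolutelyContinuousOnInterval (K := C)
    rwa [uIcc_of_le zero_le_one]
  have hint := hac.integral_deriv_eq_sub
  have hval : Φ 1 - Φ 0 = R := by
    simp only [Φ]
    rw [hg0, hg1, angle_self hx, ← hθ]
    have : L = Real.log ‖y‖ - Real.log ‖x‖ := Real.log_div (norm_ne_zero_iff.2 hy) (norm_ne_zero_iff.2 hx)
    have e : a * L + b * θ = R := by
      rw [← haa, ← hbb]; field_simp; linarith
    rw [← e, this]; ring
  rw [hval] at hint
  rw [qhLength_eq]
  have hae : ∀ᵐ t, t ∈ Ioc (0:ℝ) 1 → t ∈ Ioo (0:ℝ) 1 := by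
    have : ∀ᵐ t : ℝ, t ≠ 1 := by simp [ae_iff, measure_singleton]
    filter_upwards [this] with t ht ht'
    exact ⟨ht'.1, lt_of_le_of_ne ht'.2 ht⟩
  calc R = ∫ t in (0:ℝ)..1, deriv Φ t := hint.symm
    _ ≤ ‖∫ t in (0:ℝ)..1, deriv Φ t‖ := Real.le_norm_self _
    _ ≤ _ := by
      apply intervalIntegral.norm_integral_le_of_norm_le zero_le_one
      · filter_upwards [hae, hK.ae_differentiableWithinAt_of_mem] with t h1 h2 h3
        have h4 := h1 h3
        have h5 := (h2 ⟨h4.1.le, h4.2.le⟩).differentiableAt (Icc_mem_nhds h4.1 h4.2)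
        exact deriv_Phi_le hn hab x h5 (hne t ⟨h4.1.le, h4.2.le⟩)
      · rw [intervalIntegrable_iff_integrableOn_Ioc_of_le zero_le_one]
        refine ⟨?_, .restrict_of_bounded (C := K / m) (by simp) ?_⟩
        · have hc : AEStronglyMeasurable γ (volume.restrict (Ioc 0 1)) :=
            (hcont.mono Ioc_subset_Icc_self).aestronglyMeasurable measurableSet_Ioc
          exact ((aestronglyMeasurable_deriv γ _).norm.aemeasurable.div hc.norm.aemeasurable).aestronglyMeasurable
        · rw [ae_restrict_iff' measurableSet_Ioc]
          filter_upwards [hae] with t h1 h3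
          have h4 := h1 h3
          rw [Real.norm_of_nonneg (by positivity)]
          have := norm_deriv_le_of_lipschitzOn (Icc_mem_nhds h4.1 h4.2) hK
          gcongr
          exact hmin' t ⟨h4.1.le, h4.2.le⟩

lemma qhDist_eq [FiniteDimensional ℝ E] (hn : 2 ≤ Module.finrank ℝ E) {x y : E} (hx : x ≠ 0)
    (hy : y ≠ 0) : qhDist ({0}ᶜ : Set E) x y = DD x y := by
  have : Nontrivial E := ⟨x, 0, hx⟩
  obtain ⟨φ, ζ, h1, h2⟩ := exists_isom hn x hx y
  have hζ : ζ ≠ 0 := by rintro rfl; simp at h2; exact hy h2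
  have hlb : ∀ c ∈ qhLength ({0}ᶜ : Set E) '' {γ | IsRectPath ({0}ᶜ : Set E) x y γ}, DD x y ≤ c := by
    rintro _ ⟨γ, hγ, rfl⟩
    exact lower_path hn hx hy hγ
  obtain ⟨γ, hγ, hlen⟩ := upper_path hx φ h1 hζ
  rw [← DD_isom hx φ h1 hζ, ← h2] at hlen
  rw [← h2] at hγ
  apply le_antisymm
  · rw [← hlen]
    exact csInf_le ⟨_, hlb⟩ ⟨γ, hγ, rfl⟩
  · exact le_csInf ⟨_, γ, hγ, rfl⟩ hlb

end
end QHAux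

namespace QHAux
section
variable {E : Type*} [NormedAddCommGroup E] [InnerProductSpace ℝ E]

open InnerProductGeometry

lemma Psi_log {κ : ℝ} (hκ1 : 1 ≤ κ) (hκπ : κ < Real.pi)
    (hκeq : hh (Real.sqrt (κ ^ 2 - 1)) = Real.exp (-1)) {w : ℂ} (h : ‖Complex.log w‖ ≤ κ) :
    0 ≤ Psi (Real.log ‖w‖) w.arg ∧ (Psi (Real.log ‖w‖) w.arg = 0 →
      (Real.log ‖w‖ = 0 ∧ |w.arg| = 0) ∨ (Real.log ‖w‖ = -1 ∧ |w.arg| = Real.sqrt (κ ^ 2 - 1))) := by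
  rw [← Psi_abs]
  apply Psi_main hκ1 hκπ hκeq (abs_nonneg _)
  rw [sq_abs, ← log_norm_sq]
  gcongr

lemma slit_of_log {w : ℂ} (h0 : w ≠ 0) (h : ‖Complex.log w‖ < Real.pi) : w ∈ Complex.slitPlane := by
  rw [Complex.mem_slitPlane_iff_arg]
  refine ⟨fun h1 => ?_, h0⟩
  have h2 := Complex.abs_im_le_norm (Complex.log w)
  rw [Complex.log_im, h1, abs_of_pos Real.pi_pos] at h2
  linarith

lemma slit_ray {ζ : ℂ} {T t : ℝ} (h : 1 + (T:ℂ) * ζ ∈ Complex.slitPlane) (ht0 : 0 ≤ t) (htT : t ≤ T) :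
    1 + (t:ℂ) * ζ ∈ Complex.slitPlane := by
  rcases (ht0.trans htT).eq_or_lt with h0 | hT
  · have : t = T := by linarith
    rwa [this]
  · have := Complex.starConvex_one_slitPlane.add_smul_mem h (t := t / T) (by positivity)
      ((div_le_one hT).2 htT)
    convert this using 2
    rw [Complex.real_smul, ← mul_assoc]
    push_cast
    have : (T:ℂ) ≠ 0 := by exact_mod_cast hT.ne'
    field_simp

lemma ray_mono {κ : ℝ} (hκ1 : 1 ≤ κ) (hκπ : κ < Real.pi)
    (hκeq : hh (Real.sqrt (κ ^ 2 - 1)) = Real.exp (-1)) {ζ : ℂ} {t₁ t₂ : ℝ} (h0 : 0 ≤ t₁)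
    (hs : 1 + (t₂:ℂ) * ζ ∈ Complex.slitPlane)
    (hle : ∀ t ∈ Ioo t₁ t₂, ‖Complex.log (1 + (t:ℂ) * ζ)‖ ≤ κ) :
    MonotoneOn (fun t : ℝ => ‖Complex.log (1 + (t:ℂ) * ζ)‖ ^ 2) (Icc t₁ t₂) := by
  have hd : ∀ t ∈ Icc t₁ t₂, DifferentiableAt ℝ (fun t : ℝ => ‖Complex.log (1 + (t:ℂ) * ζ)‖ ^ 2) t := by
    intro t ht
    obtain ⟨d, hd, -⟩ := hasDerivAt_ray (slit_ray hs (h0.trans ht.1) ht.2)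
    exact hd.differentiableAt
  apply monotoneOn_of_deriv_nonneg (convex_Icc _ _)
  · exact fun t ht => (hd t ht).continuousAt.continuousWithinAt
  · exact fun t ht => (hd t (interior_subset ht)).differentiableWithinAt
  · intro t ht
    rw [interior_Icc] at ht
    have hsl := slit_ray hs (h0.trans ht.1.le) ht.2.le
    obtain ⟨d, hd, he⟩ := hasDerivAt_ray hsl
    rw [hd.deriv]
    have h1 := (Psi_log hκ1 hκπ hκeq (hle t ht)).1
    have h2 : 0 < t * ‖1 + (t:ℂ) * ζ‖ :=
      mul_pos (h0.trans_lt ht.1) (norm_pos_iff.2 (Complex.slitPlane_ne_zero hsl))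
    by_contra! hneg
    nlinarith [mul_neg_of_pos_of_neg h2 hneg]

lemma mem_ball_iff [FiniteDimensional ℝ E] (hn : 2 ≤ Module.finrank ℝ E) {x y : E} (hx : x ≠ 0) {r : ℝ} :
    y ∈ qhBall ({0}ᶜ : Set E) x r ↔ y ≠ 0 ∧ DD x y < r := by
  unfold qhBall
  constructor
  · rintro ⟨h1, h2⟩
    have h1' : y ≠ 0 := h1
    exact ⟨h1', by rwa [qhDist_eq hn hx h1'] at h2⟩
  · rintro ⟨h1, h2⟩
    exact ⟨h1, by rwa [qhDist_eq hn hx h1]⟩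

lemma ball_open [FiniteDimensional ℝ E] (hn : 2 ≤ Module.finrank ℝ E) {x : E} (hx : x ≠ 0) (r : ℝ) :
    IsOpen (qhBall ({0}ᶜ : Set E) x r) := by
  have : qhBall ({0}ᶜ : Set E) x r = {0}ᶜ ∩ DD x ⁻¹' (Iio r) := by
    ext y; rw [mem_ball_iff hn hx]; rfl
  rw [this]
  exact (DD_continuousOn hx).isOpen_inter_preimage isOpen_compl_singleton isOpen_Iio

lemma abs_log_le_DD (x y : E) : |Real.log (‖y‖ / ‖x‖)| ≤ DD x y := by
  unfold DD
  apply Real.abs_le_sqrt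
  nlinarith [sq_nonneg (angle x y)]

lemma closure_ball [FiniteDimensional ℝ E] (hn : 2 ≤ Module.finrank ℝ E) {x y : E} (hx : x ≠ 0) {r : ℝ}
    (h : y ∈ closure (qhBall ({0}ᶜ : Set E) x r)) : y ≠ 0 ∧ DD x y ≤ r := by
  have hx' : 0 < ‖x‖ := norm_pos_iff.2 hx
  set C : Set E := {y | ‖x‖ * Real.exp (-r) ≤ ‖y‖} with hC
  have hCc : IsClosed C := isClosed_le continuous_const continuous_norm
  have hC0 : ∀ y ∈ C, y ≠ 0 := by
    rintro y hy rfl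
    have : ‖x‖ * Real.exp (-r) ≤ ‖(0:E)‖ := hy
    rw [norm_zero] at this
    have : 0 < ‖x‖ * Real.exp (-r) := by positivity
    linarith
  have hcl : IsClosed (C ∩ DD x ⁻¹' (Iic r)) :=
    ((DD_continuousOn hx).mono hC0).preimage_isClosed_of_isClosed hCc isClosed_Iic
  have hsub : qhBall ({0}ᶜ : Set E) x r ⊆ C ∩ DD x ⁻¹' (Iic r) := by
    intro y hy
    rw [mem_ball_iff hn hx] at hy
    refine ⟨?_, hy.2.le⟩
    have h1 := (abs_le.1 ((abs_log_le_DD x y).trans hy.2.le)).1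
    have hy' : 0 < ‖y‖ := norm_pos_iff.2 hy.1
    rw [Real.le_log_iff_exp_le (by positivity), le_div_iff₀ hx'] at h1
    change ‖x‖ * Real.exp (-r) ≤ ‖y‖
    linarith
  have := closure_minimal hsub hcl h
  exact ⟨hC0 y this.1, this.2⟩

lemma DD_self {x : E} (hx : x ≠ 0) : DD x x = 0 := by
  unfold DD
  rw [angle_self hx, div_self (norm_ne_zero_iff.2 hx)]; simp

lemma star_ball [FiniteDimensional ℝ E] (hn : 2 ≤ Module.finrank ℝ E) {x : E} (hx : x ≠ 0)
    {κ : ℝ} (hκ1 : 1 ≤ κ) (hκπ : κ < Real.pi)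
    (hκeq : hh (Real.sqrt (κ ^ 2 - 1)) = Real.exp (-1)) {r : ℝ} (hr : r ≤ κ) :
    StarConvex ℝ x (qhBall ({0}ᶜ : Set E) x r) := by
  intro y hy a b ha hb hab
  rw [mem_ball_iff hn hx] at hy ⊢
  obtain ⟨φ, ζ, h1, h2⟩ := exists_isom hn x hx (y - x)
  have hpt : ∀ t : ℝ, x + t • (y - x) = ‖x‖ • φ (1 + (t:ℂ) * ζ) := by
    intro t
    rw [map_add, smul_add, ← h1, ← Complex.real_smul, map_smul, smul_comm, ← h2]
  have hyb : a • x + b • y = x + b • (y - x) := by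
    have : a = 1 - b := by linarith
    rw [this, sub_smul, smul_sub, one_smul]; abel
  have hy1 : y = ‖x‖ • φ (1 + ((1:ℝ):ℂ) * ζ) := by rw [← hpt]; simp
  have hx' : 0 < ‖x‖ := norm_pos_iff.2 hx
  have hw1 : 1 + ((1:ℝ):ℂ) * ζ ≠ 0 := by
    intro h
    rw [h, map_zero, smul_zero] at hy1
    exact hy.1 hy1
  have hlog1 : ‖Complex.log (1 + ((1:ℝ):ℂ) * ζ)‖ < r := by
    rw [← DD_isom hx φ h1 hw1, ← hy1]; exact hy.2
  have hslit := slit_of_log hw1 (by linarith)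
  have hr0 : 0 < r := (norm_nonneg _).trans_lt hlog1
  have hb1 : b ≤ 1 := by linarith
  have hslb := slit_ray hslit hb hb1
  have hwb := Complex.slitPlane_ne_zero hslb
  rw [hyb, hpt, DD_isom hx φ h1 hwb]
  refine ⟨smul_ne_zero hx'.ne' ?_, ?_⟩
  · rw [← norm_ne_zero_iff, φ.norm_map]; exact norm_ne_zero_iff.2 hwb
  by_contra! hge
  have hcont : ContinuousOn (fun t : ℝ => ‖Complex.log (1 + (t:ℂ) * ζ)‖) (Icc b 1) := by
    intro t ht
    apply ContinuousAt.continuousWithinAt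
    have : ContinuousAt (fun t : ℝ => 1 + (t:ℂ) * ζ) t := by fun_prop
    exact (this.clog (slit_ray hslit (hb.trans ht.1) ht.2)).norm
  have hcomp : IsCompact (Icc b 1 ∩ (fun t : ℝ => ‖Complex.log (1 + (t:ℂ) * ζ)‖) ⁻¹' (Ici r)) :=
    isCompact_Icc.of_isClosed_subset (hcont.preimage_isClosed_of_isClosed isClosed_Icc isClosed_Ici)
      inter_subset_left
  obtain ⟨t₁, ⟨ht₁, ht₁r⟩, hmax⟩ := hcomp.exists_isGreatest ⟨b, ⟨le_refl b, hb1⟩, hge⟩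
  have hmono := ray_mono hκ1 hκπ hκeq (t₁ := t₁) (hb.trans ht₁.1) hslit (by
    intro t ht
    by_contra! hgt
    have : t ≤ t₁ := hmax ⟨⟨ht₁.1.trans ht.1.le, ht.2.le⟩, hr.trans hgt.le⟩
    linarith [ht.1])
  have h5 := hmono ⟨le_refl t₁, ht₁.2⟩ ⟨ht₁.2, le_refl 1⟩ ht₁.2
  have h6 : r ≤ ‖Complex.log (1 + (t₁:ℂ) * ζ)‖ := ht₁r
  have h7 : ‖Complex.log (1 + ((1:ℝ):ℂ) * ζ)‖ ^ 2 < r ^ 2 := by gcongr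
  have h8 : r ^ 2 ≤ ‖Complex.log (1 + (t₁:ℂ) * ζ)‖ ^ 2 := by gcongr
  simp only at h5
  linarith

lemma frontier_unique [FiniteDimensional ℝ E] (hn : 2 ≤ Module.finrank ℝ E) {x : E} (hx : x ≠ 0)
    {κ : ℝ} (hκ1 : 1 ≤ κ) (hκπ : κ < Real.pi)
    (hκeq : hh (Real.sqrt (κ ^ 2 - 1)) = Real.exp (-1)) {r : ℝ} (hr : r ≤ κ) {v : E} (hv : v ≠ 0)
    {t₁ t₂ : ℝ} (h0 : 0 < t₁) (h12 : t₁ < t₂)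
    (hf1 : x + t₁ • v ∈ frontier (qhBall ({0}ᶜ : Set E) x r))
    (hf2 : x + t₂ • v ∈ frontier (qhBall ({0}ᶜ : Set E) x r)) : False := by
  have hfr : ∀ p ∈ frontier (qhBall ({0}ᶜ : Set E) x r), p ≠ 0 ∧ DD x p = r := by
    intro p hp
    obtain ⟨h1, h2⟩ := closure_ball hn hx (frontier_subset_closure hp)
    refine ⟨h1, le_antisymm h2 ?_⟩
    by_contra! hlt
    have h3 : p ∈ qhBall ({0}ᶜ : Set E) x r := (mem_ball_iff hn hx).2 ⟨h1, hlt⟩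
    have : p ∈ qhBall ({0}ᶜ : Set E) x r ∩ frontier (qhBall ({0}ᶜ : Set E) x r) := ⟨h3, hp⟩
    rw [(ball_open hn hx r).inter_frontier_eq] at this
    exact this
  obtain ⟨φ, ζ, h1, h2⟩ := exists_isom hn x hx v
  have hζ : ζ ≠ 0 := by rintro rfl; simp at h2; exact hv h2
  have hpt : ∀ t : ℝ, x + t • v = ‖x‖ • φ (1 + (t:ℂ) * ζ) := by
    intro t
    rw [map_add, smul_add, ← h1, ← Complex.real_smul, map_smul, smul_comm, ← h2]
  have hne : ∀ t : ℝ, x + t • v ≠ 0 → 1 + (t:ℂ) * ζ ≠ 0 := by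
    intro t ht h
    rw [hpt, h, map_zero, smul_zero] at ht
    exact ht rfl
  have hlog : ∀ t : ℝ, x + t • v ≠ 0 → DD x (x + t • v) = ‖Complex.log (1 + (t:ℂ) * ζ)‖ := by
    intro t ht
    rw [hpt, DD_isom hx φ h1 (hne t ht)]
  have e1 := hlog _ (hfr _ hf1).1
  have e2 := hlog _ (hfr _ hf2).1
  rw [(hfr _ hf1).2] at e1
  rw [(hfr _ hf2).2] at e2
  have hslit := slit_of_log (hne _ (hfr _ hf2).1) (by linarith)
  have hcl : ∀ t ∈ Ioo t₁ t₂, x + t • v ∈ closure (qhBall ({0}ᶜ : Set E) x r) := by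
    intro t ht
    have ht2 : 0 < t₂ := h0.trans h12
    have hstar := star_ball hn hx hκ1 hκπ hκeq hr
    have hc : Continuous (fun y : E => x + (t / t₂) • (y - x)) := by fun_prop
    have := map_mem_closure hc (frontier_subset_closure hf2) (t := qhBall ({0}ᶜ : Set E) x r)
      (fun y hy => hstar.add_smul_sub_mem hy (div_nonneg (h0.trans ht.1).le ht2.le) ((div_le_one ht2).2 ht.2.le))
    rw [add_sub_cancel_left, smul_smul, div_mul_cancel₀ _ ht2.ne'] at this
    exact this
  have hle : ∀ t ∈ Ioo t₁ t₂, ‖Complex.log (1 + (t:ℂ) * ζ)‖ ≤ κ := by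
    intro t ht
    obtain ⟨h3, h4⟩ := closure_ball hn hx (hcl t ht)
    rw [hlog t h3] at h4
    linarith
  have hmono := ray_mono hκ1 hκπ hκeq h0.le hslit hle
  have hconst : ∀ t ∈ Ioo t₁ t₂, ‖Complex.log (1 + (t:ℂ) * ζ)‖ ^ 2 = r ^ 2 := by
    intro t ht
    have ha := hmono ⟨le_refl t₁, h12.le⟩ ⟨ht.1.le, ht.2.le⟩ ht.1.le
    have hb := hmono ⟨ht.1.le, ht.2.le⟩ ⟨h12.le, le_refl t₂⟩ ht.2.le
    simp only [← e1] at ha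
    simp only [← e2] at hb
    exact le_antisymm hb ha
  have hpt' : ∀ t ∈ Ioo t₁ t₂, ‖1 + (t:ℂ) * ζ‖ = Real.exp (-1) ∧
      |(1 + (t:ℂ) * ζ).arg| = Real.sqrt (κ ^ 2 - 1) := by
    intro t ht
    have hsl := slit_ray hslit (h0.trans ht.1).le ht.2.le
    have hnp : 0 < ‖1 + (t:ℂ) * ζ‖ := norm_pos_iff.2 (Complex.slitPlane_ne_zero hsl)
    obtain ⟨d, hd, he⟩ := hasDerivAt_ray hsl
    have hd0 : d = 0 := by
      have hev : (fun t : ℝ => ‖Complex.log (1 + (t:ℂ) * ζ)‖ ^ 2) =ᶠ[nhds t] fun _ => r ^ 2 := by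
        filter_upwards [Ioo_mem_nhds ht.1 ht.2] with s hs
        exact hconst s hs
      exact hd.unique ((hasDerivAt_const t (r ^ 2)).congr_of_eventuallyEq hev)
    rw [hd0, mul_zero] at he
    rcases (Psi_log hκ1 hκπ hκeq (hle t ht)).2 (by linarith) with h | h
    · exfalso
      have : Complex.log (1 + (t:ℂ) * ζ) = 0 := by
        apply Complex.ext
        · rw [Complex.log_re]; exact h.1
        · rw [Complex.log_im]; exact abs_eq_zero.1 h.2
      have h3 := Complex.exp_log (Complex.slitPlane_ne_zero hsl)
      rw [this, Complex.exp_zero] at h3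
      have h4 : (t:ℂ) * ζ = 0 := by linear_combination -h3
      rcases mul_eq_zero.1 h4 with h5 | h5
      · have : t = 0 := by exact_mod_cast h5
        linarith [ht.1]
      · exact hζ h5
    · exact ⟨by rw [← h.1, Real.exp_log hnp], h.2⟩
  have hre : ∀ t ∈ Ioo t₁ t₂, 1 + t * ζ.re = Real.exp (-1) * Real.cos (Real.sqrt (κ ^ 2 - 1)) := by
    intro t ht
    obtain ⟨h3, h4⟩ := hpt' t ht
    have := Complex.norm_mul_cos_arg (1 + (t:ℂ) * ζ)
    rw [← Real.cos_abs, h3, h4] at this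
    rw [this]; simp
  have m1 : t₁ + (t₂ - t₁) / 3 ∈ Ioo t₁ t₂ := ⟨by linarith, by linarith⟩
  have m2 : t₁ + 2 * (t₂ - t₁) / 3 ∈ Ioo t₁ t₂ := ⟨by linarith, by linarith⟩
  have r1 := hre _ m1
  have r2 := hre _ m2
  have r3 : (t₂ - t₁) * ζ.re = 0 := by linarith
  rcases mul_eq_zero.1 r3 with h | h
  · linarith
  · rw [h, mul_zero, add_zero] at r1
    have := Real.cos_le_one (Real.sqrt (κ ^ 2 - 1))
    nlinarith [exp_lt, Real.exp_pos (-1)]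

lemma frontier_exists [FiniteDimensional ℝ E] (hn : 2 ≤ Module.finrank ℝ E) {x : E} (hx : x ≠ 0)
    {r : ℝ} (hr : 0 < r) {v : E} (hv : v ≠ 0) :
    ∃ t : ℝ, 0 < t ∧ x + t • v ∈ frontier (qhBall ({0}ᶜ : Set E) x r) := by
  by_contra! hno
  have hx' : 0 < ‖x‖ := norm_pos_iff.2 hx
  have hv' : 0 < ‖v‖ := norm_pos_iff.2 hv
  have hopen := ball_open hn hx r
  have hxB : x ∈ qhBall ({0}ᶜ : Set E) x r := (mem_ball_iff hn hx).2 ⟨hx, by rwa [DD_self hx]⟩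
  set T := (‖x‖ * Real.exp r + ‖x‖) / ‖v‖ with hT
  have hT0 : 0 < T := by positivity
  have hTB : x + T • v ∉ qhBall ({0}ᶜ : Set E) x r := by
    intro h
    obtain ⟨h1, h2⟩ := (mem_ball_iff hn hx).1 h
    have h3 := (le_abs_self _).trans (abs_log_le_DD x (x + T • v))
    have h4 : 0 < ‖x + T • v‖ := norm_pos_iff.2 h1
    have h5 : ‖x‖ * Real.exp r ≤ ‖x + T • v‖ := by
      have e : ‖T • v‖ = ‖x‖ * Real.exp r + ‖x‖ := by
        rw [norm_smul, Real.norm_of_nonneg hT0.le, hT, div_mul_cancel₀ _ hv'.ne']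
      have := norm_sub_le (x + T • v) x
      rw [add_sub_cancel_left, e] at this
      linarith
    have h6 : r ≤ Real.log (‖x + T • v‖ / ‖x‖) := by
      rw [Real.le_log_iff_exp_le (by positivity), le_div_iff₀ hx']; linarith
    linarith
  have hc : Continuous (fun t : ℝ => x + t • v) := by fun_prop
  have hnf : ∀ t ∈ Icc 0 T, x + t • v ∉ frontier (qhBall ({0}ᶜ : Set E) x r) := by
    intro t ht
    rcases ht.1.eq_or_lt with h | h
    · intro hf
      rw [← h, zero_smul, add_zero] at hf
      have : x ∈ qhBall ({0}ᶜ : Set E) x r ∩ frontier (qhBall ({0}ᶜ : Set E) x r) := ⟨hxB, hf⟩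
      rw [hopen.inter_frontier_eq] at this
      exact this
    · exact hno t h
  have hor : ∀ t ∈ Icc 0 T, x + t • v ∈ qhBall ({0}ᶜ : Set E) x r ∨ x + t • v ∉ closure (qhBall ({0}ᶜ : Set E) x r) := by
    intro t ht
    by_contra! h
    apply hnf t ht
    rw [hopen.frontier_eq]
    exact ⟨h.2, h.1⟩
  obtain ⟨t, -, h1, h2⟩ := isPreconnected_Icc (a := (0:ℝ)) (b := T) _ _ (hopen.preimage hc)
    (isClosed_closure.isOpen_compl.preimage hc : IsOpen ((fun t : ℝ => x + t • v) ⁻¹' (closure (qhBall ({0}ᶜ : Set E) x r))ᶜ))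
    (fun t ht => hor t ht)
    ⟨0, ⟨le_refl _, hT0.le⟩, by simpa using hxB⟩
    ⟨T, ⟨hT0.le, le_refl _⟩, (hor T ⟨hT0.le, le_refl _⟩).resolve_left hTB⟩
  exact h2 (subset_closure h1)

lemma not_star [FiniteDimensional ℝ E] (hn : 2 ≤ Module.finrank ℝ E) {x : E} (hx : x ≠ 0)
    {κ : ℝ} (hκ1 : 1 ≤ κ) 
    (hκeq : hh (Real.sqrt (κ ^ 2 - 1)) = Real.exp (-1)) {r : ℝ} (hr : κ < r) :
    ¬ StarConvex ℝ x (qhBall ({0}ᶜ : Set E) x r) := by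
  intro hstar
  have hx' : 0 < ‖x‖ := norm_pos_iff.2 hx
  rcases lt_or_ge Real.pi r with hπ | hπ
  · have h1 : -x ∈ qhBall ({0}ᶜ : Set E) x r := by
      rw [mem_ball_iff hn hx]
      refine ⟨neg_ne_zero.2 hx, ?_⟩
      unfold DD
      rw [angle_self_neg_of_nonzero hx, norm_neg, div_self hx'.ne']
      simpa [Real.sqrt_sq Real.pi_pos.le] using hπ
    have h2 := hstar h1 (a := 1/2) (b := 1/2) (by norm_num) (by norm_num) (by norm_num)
    rw [mem_ball_iff hn hx] at h2
    apply h2.1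
    simp
  · obtain ⟨φ, -, h1, -⟩ := exists_isom hn x hx 0
    set σ := Real.sqrt (κ ^ 2 - 1) with hσ
    set s := Real.sqrt (r ^ 2 - 1) with hs
    have hσ0 : 0 ≤ σ := Real.sqrt_nonneg _
    have hs0 : 0 ≤ s := Real.sqrt_nonneg _
    have hσ2 : σ ^ 2 = κ ^ 2 - 1 := Real.sq_sqrt (by nlinarith)
    have hs2 : s ^ 2 = r ^ 2 - 1 := Real.sq_sqrt (by nlinarith)
    have hσs : σ < s := by nlinarith
    have hsπ : s < Real.pi := by nlinarith [Real.pi_pos]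
    have hhs : hh s < Real.exp (-1) := by
      rw [← hκeq]
      have := pi_le_sstar hσ0 hκeq
      exact hh_strictAnti ⟨this.le, by linarith⟩ ⟨by linarith, hsπ.le⟩ hσs
    set w : ℂ := Complex.exp (⟨-1, s⟩ : ℂ) with hw
    have hlogw : Complex.log w = ⟨-1, s⟩ := by
      rw [hw, Complex.log_exp]
      · change -Real.pi < s; linarith
      · exact hsπ.le
    have hw0 : w ≠ 0 := Complex.exp_ne_zero _
    have hlw : Real.log ‖w‖ = -1 := by rw [← Complex.log_re, hlogw]
    have haw : w.arg = s := by rw [← Complex.log_im, hlogw]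
    have hnr : ‖Complex.log w‖ ^ 2 = r ^ 2 := by
      rw [log_norm_sq, hlw, haw, hs2]; ring
    have hr0 : 0 < r := by linarith
    have hnr' : ‖Complex.log w‖ = r := (sq_eq_sq₀ (norm_nonneg _) hr0.le).1 hnr
    have hsl : w ∈ Complex.slitPlane := by
      rw [Complex.mem_slitPlane_iff_arg, haw]; exact ⟨hsπ.ne, hw0⟩
    have hw1 : 1 + ((1:ℝ):ℂ) * (w - 1) = w := by push_cast; ring
    obtain ⟨d, hd, he⟩ := hasDerivAt_ray (ζ := w - 1) (t := 1) (by rw [hw1]; exact hsl)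
    rw [hw1, hlw, haw, one_mul] at he
    have hPsi : Psi (-1) s < 0 := by
      unfold Psi; unfold hh at hhs; linarith
    have hd0 : d < 0 := by
      by_contra! h
      have := mul_nonneg (norm_nonneg w) h
      linarith
    have hev : ∀ᶠ t : ℝ in nhdsWithin (1:ℝ) (Ioi 1), ‖Complex.log (1 + (t:ℂ) * (w - 1))‖ ^ 2 < r ^ 2 := by
      have h3 := (hasDerivAt_iff_tendsto_slope.1 hd).mono_left
        (nhdsWithin_mono (1:ℝ) (fun t (ht : 1 < t) => ht.ne' : Ioi (1:ℝ) ⊆ {1}ᶜ))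
      filter_upwards [h3.eventually (gt_mem_nhds hd0), self_mem_nhdsWithin] with t h4 h5
      have h5' : (1:ℝ) < t := h5
      rw [slope_def_field] at h4
      have h6 := (div_neg_iff.1 h4).resolve_left (by rintro ⟨-, h⟩; linarith)
      rw [hw1, hnr] at h6
      linarith [h6.1]
    have hev2 : ∀ᶠ t : ℝ in nhdsWithin (1:ℝ) (Ioi 1), 1 + (t:ℂ) * (w - 1) ≠ 0 := by
      have hc : ContinuousAt (fun t : ℝ => 1 + (t:ℂ) * (w - 1)) 1 := by fun_prop
      exact (hc.eventually_ne (by rw [hw1]; exact hw0)).filter_mono nhdsWithin_le_nhds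
    obtain ⟨t, ⟨h4, h5⟩, h6⟩ := ((hev.and hev2).and self_mem_nhdsWithin).exists
    have h6' : (1:ℝ) < t := h6
    have hmap0 : ∀ z : ℂ, z ≠ 0 → ‖x‖ • φ z ≠ 0 := by
      intro z hz
      refine smul_ne_zero hx'.ne' ?_
      rw [← norm_ne_zero_iff, φ.norm_map]; exact norm_ne_zero_iff.2 hz
    have hy : ‖x‖ • φ (1 + (t:ℂ) * (w - 1)) ∈ qhBall ({0}ᶜ : Set E) x r := by
      rw [mem_ball_iff hn hx, DD_isom hx φ h1 h5]
      exact ⟨hmap0 _ h5, lt_of_pow_lt_pow_left₀ 2 hr0.le h4⟩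
    have hz := hstar.add_smul_sub_mem hy (t := t⁻¹) (by positivity) (inv_le_one_of_one_le₀ h6'.le)
    have hzz : x + t⁻¹ • (‖x‖ • φ (1 + (t:ℂ) * (w - 1)) - x) = ‖x‖ • φ w := by
      have e : ‖x‖ • φ (1 + (t:ℂ) * (w - 1)) - x = t • (‖x‖ • φ (w - 1)) := by
        rw [map_add, smul_add, ← h1, ← Complex.real_smul, map_smul, smul_comm]; abel
      rw [e, smul_smul, inv_mul_cancel₀ (by linarith), one_smul, map_sub, smul_sub, ← h1]; abel
    rw [hzz, mem_ball_iff hn hx, DD_isom hx φ h1 hw0, hnr'] at hz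
    exact lt_irrefl _ hz.2

end
end QHAux

/-- in the punctured space, quasihyperbolic balls are strictly starlike
with respect to their center exactly for radii `r ∈ (0,κ]`, where `κ ≈ 2.83297` is
the unique solution `p ∈ [1,π]` of `cos √(p²-1) + √(p²-1) sin √(p²-1) = e⁻¹`. -/
theorem qh_ball_punctured_starlike (n : ℕ) (hn : 2 ≤ n)
    (x : EuclideanSpace ℝ (Fin n)) (hx : x ≠ 0)
    (κ : ℝ) (hκmem : κ ∈ Icc 1 Real.pi)
    (hκeq : Real.cos (Real.sqrt (κ ^ 2 - 1)) +
        Real.sqrt (κ ^ 2 - 1) * Real.sin (Real.sqrt (κ ^ 2 - 1)) = Real.exp (-1))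
    (hκuniq : ∀ p ∈ Icc 1 Real.pi,
      Real.cos (Real.sqrt (p ^ 2 - 1)) +
          Real.sqrt (p ^ 2 - 1) * Real.sin (Real.sqrt (p ^ 2 - 1)) = Real.exp (-1) →
        p = κ)
    (r : ℝ) :
    (0 < r → r ≤ κ →
        StrictlyStarlike (qhBall ({0}ᶜ : Set (EuclideanSpace ℝ (Fin n))) x r) x) ∧
      (κ < r → ¬ StarConvex ℝ x (qhBall ({0}ᶜ : Set (EuclideanSpace ℝ (Fin n))) x r)) := by
  have hfin : 2 ≤ Module.finrank ℝ (EuclideanSpace ℝ (Fin n)) := by simpa using hn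
  have hκπ := QHAux.kappa_lt hκmem hκeq
  refine ⟨fun h0 hr => ⟨QHAux.star_ball hfin hx hκmem.1 hκπ hκeq hr, fun v hv => ?_⟩,
    fun hr => QHAux.not_star hfin hx hκmem.1 hκeq hr⟩
  obtain ⟨t, ht, hf⟩ := QHAux.frontier_exists hfin hx h0 hv
  refine ⟨x + t • v, ⟨hf, t, ht, rfl⟩, ?_⟩
  rintro p ⟨hp, t', ht', rfl⟩
  rcases lt_trichotomy t' t with h | h | h
  · exact (QHAux.frontier_unique hfin hx hκmem.1 hκπ hκeq hr hv ht' h hp hf).elim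
  · rw [h]
  · exact (QHAux.frontier_unique hfin hx hκmem.1 hκπ hκeq hr hv ht h hf hp).elim
end

section
/- Let Ω ⊊ ℝⁿ (n ≥ 2) be a domain that is starlike with respect to a point x ∈ Ω. Then for every r > 0 the quasihyperbolic ball B_k(x,r) is starlike with respect to x. -/
open Set Metric MeasureTheory

theorem aux_ball {E : Type*} [NormedAddCommGroup E] [NormedSpace ℝ E] {Ω : Set E}
    (hopen : IsOpen Ω) {z : E} (hz : z ∈ Ω) :
    ball z (infDist z (frontier Ω)) ⊆ Ω := by
  rcases le_or_gt (infDist z (frontier Ω)) 0 with h0 | h0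
  · rw [ball_eq_empty.2 h0]; exact empty_subset _
  refine IsPreconnected.subset_left_of_subset_union hopen
    (isClosed_closure (s := Ω)).isOpen_compl
    (disjoint_compl_right.mono_left subset_closure) ?_ ⟨z, mem_ball_self h0, hz⟩
    (convex_ball z _).isPreconnected
  intro w hw
  by_contra hcon
  simp only [mem_union, mem_compl_iff, not_or, not_not] at hcon
  have hf : w ∈ frontier Ω := by
    rw [hopen.frontier_eq]; exact ⟨hcon.2, hcon.1⟩
  have := infDist_le_dist_of_mem (x := z) hf
  rw [mem_ball, dist_comm] at hw
  linarith

theorem aux_dist {E : Type*} [NormedAddCommGroup E] [NormedSpace ℝ E] {Ω : Set E}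
    (hopen : IsOpen Ω) (hne : (frontier Ω).Nonempty) {x : E} (hstar : StarConvex ℝ x Ω)
    {a b : ℝ} (ha : 0 ≤ a) (hb : 0 ≤ b) (hab : a + b = 1) {z : E} (hz : z ∈ Ω) :
    b * infDist z (frontier Ω) ≤ infDist (a • x + b • z) (frontier Ω) := by
  rcases hb.eq_or_lt with rfl | hb'
  · simpa using infDist_nonneg
  rw [le_infDist hne]
  intro p hp
  by_contra! hlt
  have hq : z + b⁻¹ • (p - (a • x + b • z)) ∈ Ω := by
    apply aux_ball hopen hz
    rw [mem_ball, dist_eq_norm, add_sub_cancel_left, norm_smul, norm_inv, Real.norm_of_nonneg hb,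
      ← dist_eq_norm, dist_comm, inv_mul_lt_iff₀ hb']
    exact hlt
  have h2 := hstar hq ha hb hab
  rw [smul_add, smul_inv_smul₀ hb'.ne', ← add_assoc, add_sub_cancel] at h2
  rw [hopen.frontier_eq] at hp
  exact hp.2 h2

theorem aux_pos {E : Type*} [NormedAddCommGroup E] [NormedSpace ℝ E] {Ω : Set E}
    (hopen : IsOpen Ω) (hne : (frontier Ω).Nonempty) {z : E} (hz : z ∈ Ω) :
    0 < infDist z (frontier Ω) := by
  rw [← isClosed_frontier.notMem_iff_infDist_pos hne, hopen.frontier_eq]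
  exact fun h => h.2 hz

theorem aux_int {E : Type*} [NormedAddCommGroup E] [NormedSpace ℝ E] [CompleteSpace E]
    {Ω : Set E}
    (hopen : IsOpen Ω) (hne : (frontier Ω).Nonempty) {x y : E} {γ : ℝ → E}
    (h : IsRectPath Ω x y γ) :
    IntegrableOn (fun t => ‖deriv γ t‖ / infDist (γ t) (frontier Ω)) (Ioo 0 1) := by
  obtain ⟨⟨K, hK⟩, hm, -, -⟩ := h
  have hc : ContinuousOn (fun t => infDist (γ t) (frontier Ω)) (Icc 0 1) :=
    (continuous_infDist_pt _).comp_continuousOn hK.continuousOn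
  obtain ⟨t0, ht0, hmin⟩ := isCompact_Icc.exists_isMinOn (nonempty_Icc.2 zero_le_one) hc
  have hp := aux_pos hopen hne (hm ht0)
  refine IntegrableOn.of_bound (by simp) ?_ (K / infDist (γ t0) (frontier Ω)) ?_
  · refine AEMeasurable.aestronglyMeasurable ?_
    refine AEMeasurable.div ?_ ?_
    · exact (stronglyMeasurable_deriv γ).norm.measurable.aemeasurable
    · exact (hc.mono Ioo_subset_Icc_self).aemeasurable measurableSet_Ioo
  · refine (ae_restrict_iff' measurableSet_Ioo).2 (Filter.Eventually.of_forall ?_)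
    intro t ht
    have h1 : ‖deriv γ t‖ ≤ K := norm_deriv_le_of_lipschitzOn (Icc_mem_nhds ht.1 ht.2) hK
    have h2 : infDist (γ t0) (frontier Ω) ≤ infDist (γ t) (frontier Ω) :=
      hmin (Ioo_subset_Icc_self ht)
    rw [Real.norm_of_nonneg (div_nonneg (norm_nonneg _) infDist_nonneg)]
    exact div_le_div₀ K.2 h1 hp h2

theorem aux_scale {E : Type*} [NormedAddCommGroup E] [NormedSpace ℝ E]
    {Ω : Set E} {x y : E} (hstar : StarConvex ℝ x Ω)
    {a b : ℝ} (ha : 0 ≤ a) (hb : 0 ≤ b) (hab : a + b = 1) {γ : ℝ → E}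
    (h : IsRectPath Ω x y γ) :
    IsRectPath Ω x (a • x + b • y) (fun t => a • x + b • γ t) := by
  obtain ⟨⟨K, hK⟩, hm, h0, h1⟩ := h
  refine ⟨⟨‖b‖₊ * K, ?_⟩, fun t ht => hstar (hm ht) ha hb hab, ?_, by simp [h1]⟩
  · refine LipschitzOnWith.of_dist_le_mul fun s hs t ht => ?_
    rw [dist_add_left, dist_smul₀, NNReal.coe_mul, coe_nnnorm, mul_assoc]
    exact mul_le_mul_of_nonneg_left (hK.dist_le_mul s hs t ht) (norm_nonneg _)
  · simp only [h0]; rw [← add_smul, hab, one_smul]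

theorem aux_len {E : Type*} [NormedAddCommGroup E] [NormedSpace ℝ E] [CompleteSpace E]
    {Ω : Set E} (hopen : IsOpen Ω) (hne : (frontier Ω).Nonempty)
    {x y : E} (hstar : StarConvex ℝ x Ω)
    {a b : ℝ} (ha : 0 ≤ a) (hb : 0 ≤ b) (hab : a + b = 1) {γ : ℝ → E}
    (h : IsRectPath Ω x y γ) :
    qhLength Ω (fun t => a • x + b • γ t) ≤ qhLength Ω γ := by
  unfold qhLength
  rw [intervalIntegral.integral_of_le zero_le_one, intervalIntegral.integral_of_le zero_le_one,
    integral_Ioc_eq_integral_Ioo, integral_Ioc_eq_integral_Ioo]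
  refine setIntegral_mono_on (aux_int hopen hne (aux_scale hstar ha hb hab h))
    (aux_int hopen hne h) measurableSet_Ioo ?_
  intro t ht
  have hz := h.2.1 (Ioo_subset_Icc_self ht)
  have hd := aux_dist hopen hne hstar ha hb hab hz
  have hp := aux_pos hopen hne hz
  have hp' := aux_pos hopen hne (hstar hz ha hb hab)
  have : deriv (fun t => a • x + b • γ t) t = b • deriv γ t := by
    rw [deriv_const_add, deriv_fun_const_smul_field]
  rw [this, norm_smul, Real.norm_of_nonneg hb, div_le_div_iff₀ hp' hp]
  nlinarith [mul_le_mul_of_nonneg_left hd (norm_nonneg (deriv γ t))]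

/-- if `Ω` is starlike with respect to `x`, then every quasihyperbolic
ball centered at `x` is starlike with respect to `x`. -/
theorem qh_ball_starlike_of_starlike (n : ℕ) (hn : 2 ≤ n)
    (Ω : Set (EuclideanSpace ℝ (Fin n)))
    (hopen : IsOpen Ω) (hconn : IsConnected Ω) (hproper : Ω ≠ univ)
    (x : EuclideanSpace ℝ (Fin n)) (hx : x ∈ Ω) (hstar : StarConvex ℝ x Ω)
    (r : ℝ) (hr : 0 < r) :
    StarConvex ℝ x (qhBall Ω x r) := by
  have hne : (frontier Ω).Nonempty := nonempty_frontier_iff.2 ⟨⟨x, hx⟩, hproper⟩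
  rintro y ⟨hy, hyr⟩ a b ha hb hab
  refine ⟨hstar hy ha hb hab, ?_⟩
  have hN : (qhLength Ω '' {γ | IsRectPath Ω x y γ}).Nonempty := by
    refine ⟨_, fun t : ℝ => x + t • (y - x), ⟨⟨‖y - x‖₊, ?_⟩, ?_, by simp, by simp⟩, rfl⟩
    · refine LipschitzOnWith.of_dist_le_mul fun s hs t ht => ?_
      rw [dist_add_left, dist_eq_norm, ← sub_smul, norm_smul, dist_eq_norm, coe_nnnorm, mul_comm]
    · intro t ht
      have := hstar hy (sub_nonneg.2 ht.2) ht.1 (sub_add_cancel 1 t)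
      convert this using 1
      module
  obtain ⟨_, ⟨γ, hγ, rfl⟩, hlt⟩ := exists_lt_of_csInf_lt hN hyr
  refine lt_of_le_of_lt (csInf_le ⟨0, ?_⟩ ⟨_, aux_scale hstar ha hb hab hγ, rfl⟩)
    (lt_of_le_of_lt (aux_len hopen hne hstar ha hb hab hγ) hlt)
  rintro _ ⟨δ, -, rfl⟩
  exact intervalIntegral.integral_nonneg zero_le_one
    fun t _ => div_nonneg (norm_nonneg _) infDist_nonneg
end
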